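/- arXiv:1708.03057 — 5 statements merged into one kernel-verified Lean document; each statement's English description precedes it below -/
import Mathlib

section
/- Let G be a group and V a normal abelian subgroup of G. Suppose that every strictly increasing chain H_0 < H_1 < ... < H_l of subgroups of the quotient G/V satisfies l ≤ L. Then the c-dimension of G is at most 2L. -/
/-!
Write `C i` for the `i`-th centralizer of the chain and `D i = C_G(C i)`; then `C i = C_G(D i)`,
the `C i` increase and the `D i` decrease. If a step `i < j` changes neither the image of `C` nor
that of `D` in `G ⧸ V`, it is not strict: as `V` is abelian, `C ∩ V = C_V(D)` depends only on the
product `D V`, so `C i ∩ V = C j ∩ V`, and with `C i V = C j V` the modular law gives `C i = C j`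
(`centralizer_ge_of_map_le`). Hence each step is strict in at least one of two monotone chains of
subgroups of `G ⧸ V`. Measuring subgroups by their height (at most `L`), the quantity
`height (image of C i) + (L - height (image of D i))` lies between `0` and `2 * L` and increases
strictly with `i`.
-/

/-- A bound on the lengths of chains yields a bounded strictly monotone rank, namely the height. -/
lemma exists_strictMono_le_of_chains {α : Type*} [PartialOrder α] (L : ℕ)
    (h : ∀ (l : ℕ) (H : Fin (l + 1) → α), StrictMono H → l ≤ L) :
    ∃ r : α → ℕ, StrictMono r ∧ ∀ a, r a ≤ L := by
  have hle : ∀ a : α, Order.height a ≤ L := fun a =>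
    Order.height_le fun p _ => by exact_mod_cast h p.length p.toFun p.strictMono
  have hlt : ∀ a : α, Order.height a < ⊤ := fun a => (hle a).trans_lt (ENat.natCast_lt_top L)
  have hcoe : ∀ a : α, ((Order.height a).toNat : ℕ∞) = Order.height a := fun a =>
    ENat.natCast_toNat (hlt a).ne
  refine ⟨fun a => (Order.height a).toNat, fun a b hab => ?_, fun a => ?_⟩
  · have := Order.height_strictMono hab (hlt a)
    rw [← hcoe a, ← hcoe b] at this
    exact_mod_cast this
  · have := hle a
    rw [← hcoe a] at this
    exact_mod_cast this

/-- Centralizers `C_G(S) ≤ C_G(T)` coincide as soon as they have the same image modulo `V` and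
their own centralizers have the same image modulo `V`. -/
lemma centralizer_ge_of_map_le {G : Type*} [Group G] (V : Subgroup G) [V.Normal]
    (hV : ∀ x ∈ V, ∀ y ∈ V, x * y = y * x) (S T : Set G)
    (hST : Subgroup.centralizer S ≤ Subgroup.centralizer T)
    (hC : (Subgroup.centralizer T).map (QuotientGroup.mk' V) ≤
      (Subgroup.centralizer S).map (QuotientGroup.mk' V))
    (hD : (Subgroup.centralizer (Subgroup.centralizer S : Set G)).map (QuotientGroup.mk' V) ≤
      (Subgroup.centralizer (Subgroup.centralizer T : Set G)).map (QuotientGroup.mk' V)) :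
    Subgroup.centralizer T ≤ Subgroup.centralizer S := by
  intro x hx
  obtain ⟨c, hc, hcx⟩ := hC ⟨x, hx, rfl⟩
  -- `x = c * v` with `c ∈ C_G(S)`, and `v ∈ V ∩ C_G(T)`
  have hv : c⁻¹ * x ∈ V := QuotientGroup.eq.1 hcx
  have hvT : c⁻¹ * x ∈ Subgroup.centralizer T := mul_mem (inv_mem (hST hc)) hx
  have hvS : c⁻¹ * x ∈ Subgroup.centralizer S := by
    rw [Subgroup.mem_centralizer_iff]
    intro s hs
    have hsD : s ∈ Subgroup.centralizer (Subgroup.centralizer S : Set G) :=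
      Subgroup.mem_centralizer_iff.2 fun g hg => (Subgroup.mem_centralizer_iff.1 hg s hs).symm
    -- `s = d * w` with `d` centralizing `C_G(T)` and `w ∈ V`, and `v` commutes with both factors
    obtain ⟨d, hd, hds⟩ := hD ⟨s, hsD, rfl⟩
    have hw : d⁻¹ * s ∈ V := QuotientGroup.eq.1 hds
    have h1 : Commute d (c⁻¹ * x) := (Subgroup.mem_centralizer_iff.1 hd _ hvT).symm
    have h2 : Commute (d⁻¹ * s) (c⁻¹ * x) := hV _ hw _ hv
    have h3 := h1.mul_left h2
    rw [mul_inv_cancel_left] at h3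
    exact h3
  simpa using mul_mem hc hvS


/-- If `V` is a normal abelian subgroup of `G` and every strictly increasing
chain `H_0 < H_1 < ... < H_l` of subgroups of `G ⧸ V` satisfies `l ≤ L`, then the
c-dimension of `G` is at most `2 * L`: every strictly increasing chain
`C_G(S_0) < ... < C_G(S_m)` of centralizers of subsets of `G` satisfies `m ≤ 2 * L`. -/
theorem cdim_le_of_chains_in_quotient_by_normal_abelian
    (G : Type*) [Group G] (V : Subgroup G) [V.Normal]
    (hV : ∀ x ∈ V, ∀ y ∈ V, x * y = y * x) (L : ℕ)
    (hchain : ∀ (l : ℕ) (H : Fin (l + 1) → Subgroup (G ⧸ V)), StrictMono H → l ≤ L) :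
    ∀ (m : ℕ) (S : Fin (m + 1) → Set G),
      StrictMono (fun i => Subgroup.centralizer (S i)) → m ≤ 2 * L := by
  intro m S hS
  obtain ⟨r, hr, hrL⟩ := exists_strictMono_le_of_chains L hchain
  let A : Fin (m + 1) → Subgroup (G ⧸ V) := fun i =>
    (Subgroup.centralizer (S i)).map (QuotientGroup.mk' V)
  let B : Fin (m + 1) → Subgroup (G ⧸ V) := fun i =>
    (Subgroup.centralizer (Subgroup.centralizer (S i) : Set G)).map (QuotientGroup.mk' V)
  have hφ : StrictMono fun i => r (A i) + (L - r (B i)) := by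
    intro i j hij
    have hlt : Subgroup.centralizer (S i) < Subgroup.centralizer (S j) := hS hij
    have hA : A i ≤ A j := Subgroup.map_mono hlt.le
    have hB : B j ≤ B i := Subgroup.map_mono (Subgroup.centralizer_le hlt.le)
    have hA' := hr.monotone hA
    have hB' := hr.monotone hB
    have hi := hrL (B i)
    have hne : r (A i) < r (A j) ∨ r (B j) < r (B i) := by
      rcases hA.lt_or_eq with h | h
      · exact Or.inl (hr h)
      rcases hB.lt_or_eq with h' | h'
      · exact Or.inr (hr h')
      exact absurd (centralizer_ge_of_map_le V hV _ _ hlt.le h.ge h'.ge) hlt.not_ge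
    change r (A i) + (L - r (B i)) < r (A j) + (L - r (B j))
    omega
  -- the `m + 1` values of the strictly increasing function all lie in `{0, …, 2 * L}`
  have hcard := Fintype.card_le_of_injective
    (fun i => (⟨r (A i) + (L - r (B i)), by have := hrL (A i); omega⟩ : Fin (2 * L + 1)))
    (fun i j hij => hφ.injective (Fin.mk.inj_iff.1 hij))
  simpa using hcard
end

section
/- Let p be a prime and let E be an elementary abelian p-group of order p^n (a finite commutative group of cardinality p^n in which every element x satisfies x^p = 1). Suppose E acts faithfully by automorphisms on a finite nilpotent group Q whose order is coprime to p. Then there exists a strictly decreasing chain of subgroups E = E_0 > E_1 > E_2 > ... > E_n = 1 such that the fixed-point subgroups satisfy C_Q(E_0) < C_Q(E_1) < ... < C_Q(E_n) (a strictly increasing chain). -/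
/-!
The chain is built from the top: it suffices that every nontrivial subgroup `K` of `E` contains a
subgroup `M` of index `p` with `C_Q(M) ≠ C_Q(K)` (`exists_index_p`); then continue inside `M`.

Let `F ≤ K` be maximal with `C_Q(F) ≠ C_Q(K)`; such an `F` exists since `F = 1` qualifies by
faithfulness. If `F` did not have index `p` in `K`, there would be `a, b ∈ K` independent modulo
`F`. By maximality every `c ∈ K \ F`, in particular each `a * b ^ i` and each `b ^ j` with
`0 < j < p`, has no more fixed points on `B = C_Q(F)` than `K` has. This forces `K` to act
trivially on `B` (`trivial_of_rank_two`), contradicting the choice of `F`.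

For abelian `B` the last step is the identity
`∏_{i < p} N_{a b ^ i}(x) = x ^ p * ∏_{0 < j < p} a ^ j • N_{b ^ j}(x)`,
where `N_c(x) = ∏_{j < p} c ^ j • x` is fixed by `c`, hence by `K` for the `c` above. Thus `x ^ p`
is fixed by `K`, and so is `x`, as `|B|` is coprime to `p`. The nilpotent case follows by
induction along the center `Z`: once `K` centralizes `Z`, coprimality makes every coset of `Z`
fixed by some `c ∈ K` consist of fixed points of `c` (`smul_eq_of_div_fixed`), so both hypotheses
and conclusion pass between `B` and `B ⧸ Z`.
-/

/-- The subgroup of elements of `Q` fixed by every element of a subgroup `F` of `E`,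
where `E` acts on `Q` by automorphisms. -/
def fixedSubgroup {E Q : Type*} [Group E] [Group Q] [MulDistribMulAction E Q]
    (F : Subgroup E) : Subgroup Q where
  carrier := {q : Q | ∀ e ∈ F, e • q = q}
  one_mem' := fun e _ => smul_one e
  mul_mem' := by
    intro a b ha hb e he
    rw [smul_mul', ha e he, hb e he]
  inv_mem' := by
    intro a ha e he
    rw [smul_inv', ha e he]

namespace KhukhroLemma

/-- Every fixed point of `c` on `G` is fixed by all of `K`. -/
def FixesAll {E : Type*} (G : Type*) [CommGroup E] [Group G] [MulDistribMulAction E G]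
    (K : Subgroup E) (c : E) : Prop :=
  ∀ x : G, c • x = x → ∀ e ∈ K, e • x = x

/-- The action on an invariant subgroup. -/
@[reducible] def subAct {E G : Type*} [CommGroup E] [Group G] [MulDistribMulAction E G]
    (H : Subgroup G) (h : ∀ (e : E), ∀ x ∈ H, e • x ∈ H) : MulDistribMulAction E H where
  smul e x := ⟨e • (x : G), h e x x.2⟩
  one_smul x := Subtype.ext (one_smul E (x : G))
  mul_smul e f x := Subtype.ext (mul_smul e f (x : G))
  smul_mul e x y := Subtype.ext (smul_mul' e (x : G) (y : G))
  smul_one e := Subtype.ext (smul_one e)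

/-- The action on the quotient by an invariant normal subgroup. -/
@[reducible] def quotAct {E G : Type*} [CommGroup E] [Group G] [MulDistribMulAction E G]
    (H : Subgroup G) [H.Normal] (h : ∀ (e : E), ∀ x ∈ H, e • x ∈ H) :
    MulDistribMulAction E (G ⧸ H) where
  smul e := QuotientGroup.map H H (MulDistribMulAction.toMonoidHom G e) (h e)
  one_smul x := by
    induction x using QuotientGroup.induction_on with
    | H x => exact congrArg QuotientGroup.mk (one_smul E x)
  mul_smul e f x := by
    induction x using QuotientGroup.induction_on with
    | H x => exact congrArg QuotientGroup.mk (mul_smul e f x)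
  smul_mul e x y := map_mul _ x y
  smul_one e := map_one _

lemma pow_injective_of_coprime {G : Type*} [Group G] [Finite G] {p : ℕ}
    (h : (Nat.card G).Coprime p) {x y : G} (hxy : x ^ p = y ^ p) : x = y :=
  (powCoprime h).injective hxy

/-- If `c` of order dividing `p` fixes the coset `q H` and centralizes `H`, then it fixes `q`:
the element `z = q⁻¹ * c • q` satisfies `c ^ j • q = q * z ^ j`, whence `z ^ p = 1`. -/
lemma smul_eq_of_div_fixed {E G : Type*} [CommGroup E] [Group G] [Finite G]
    [MulDistribMulAction E G] {p : ℕ} (hG : (Nat.card G).Coprime p) {c : E} (hc : c ^ p = 1)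
    {q : G} (h : c • (q⁻¹ * c • q) = q⁻¹ * c • q) : c • q = q := by
  set z := q⁻¹ * c • q with hz
  have hq : c • q = q * z := by simp [hz]
  have key : ∀ j : ℕ, c ^ j • q = q * z ^ j := by
    intro j
    induction j with
    | zero => simp
    | succ j ih => rw [pow_succ', mul_smul, ih, smul_mul', smul_pow', h, hq, mul_assoc, ← pow_succ']
  have h1 := key p
  rw [hc, one_smul] at h1
  have hz1 : z = 1 := pow_injective_of_coprime hG (by simpa using h1.symm)
  rw [hq, hz1, mul_one]

/-- The norm `∏_{j < p} c ^ j • x` is fixed by `c`. -/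
lemma smul_norm {E A : Type*} [CommGroup E] [CommGroup A] [MulDistribMulAction E A]
    {p : ℕ} {c : E} (hc : c ^ p = 1) (x : A) :
    c • (∏ j ∈ Finset.range p, c ^ j • x) = ∏ j ∈ Finset.range p, c ^ j • x := by
  rw [Finset.smul_prod']
  simp only [smul_smul, ← pow_succ']
  have h1 := Finset.prod_range_succ (fun j => c ^ j • x) p
  rw [Finset.prod_range_succ', hc, pow_zero] at h1
  exact mul_right_cancel h1

lemma trivial_of_rank_two_comm {E A : Type*} [CommGroup E] [CommGroup A] [Finite A]
    [MulDistribMulAction E A] {p : ℕ} (hp : p.Prime) (hA : (Nat.card A).Coprime p)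
    (hexp : ∀ x : E, x ^ p = 1) (K : Subgroup E) (a b : E)
    (hab : ∀ i < p, FixesAll A K (a * b ^ i))
    (hb : ∀ j < p, 0 < j → FixesAll A K (b ^ j)) :
    ∀ e ∈ K, ∀ x : A, e • x = x := by
  intro e he x
  obtain ⟨m, rfl⟩ : ∃ m, p = m + 1 := ⟨p - 1, by have := hp.pos; omega⟩
  have hid : ∏ i ∈ Finset.range (m + 1), ∏ j ∈ Finset.range (m + 1), (a * b ^ i) ^ j • x
      = (∏ j ∈ Finset.range m,
          a ^ (j + 1) • ∏ i ∈ Finset.range (m + 1), (b ^ (j + 1)) ^ i • x) * x ^ (m + 1) := by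
    rw [Finset.prod_comm, Finset.prod_range_succ']
    congr 1
    · refine Finset.prod_congr rfl fun j _ => ?_
      rw [Finset.smul_prod']
      refine Finset.prod_congr rfl fun i _ => ?_
      rw [smul_smul, mul_pow, pow_right_comm]
    · simp
  have h1 : e • (∏ i ∈ Finset.range (m + 1), ∏ j ∈ Finset.range (m + 1), (a * b ^ i) ^ j • x)
      = ∏ i ∈ Finset.range (m + 1), ∏ j ∈ Finset.range (m + 1), (a * b ^ i) ^ j • x := by
    rw [Finset.smul_prod']
    exact Finset.prod_congr rfl fun i hi =>
      hab i (Finset.mem_range.1 hi) _ (smul_norm (hexp _) x) e he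
  have h2 : e • (∏ j ∈ Finset.range m,
        a ^ (j + 1) • ∏ i ∈ Finset.range (m + 1), (b ^ (j + 1)) ^ i • x)
      = ∏ j ∈ Finset.range m,
        a ^ (j + 1) • ∏ i ∈ Finset.range (m + 1), (b ^ (j + 1)) ^ i • x := by
    rw [Finset.smul_prod']
    refine Finset.prod_congr rfl fun j hj => ?_
    rw [smul_comm, hb (j + 1) (by simpa using hj) (by omega) _ (smul_norm (hexp _) x) e he]
  rw [hid, smul_mul', h2, smul_pow'] at h1
  exact pow_injective_of_coprime hA (mul_left_cancel h1)

lemma smul_mem_center {E G : Type*} [CommGroup E] [Group G] [MulDistribMulAction E G] (e : E) :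
    ∀ x ∈ Subgroup.center G, e • x ∈ Subgroup.center G := by
  intro x hx
  rw [Subgroup.mem_center_iff] at hx ⊢
  intro g
  have := congrArg (e • ·) (hx (e⁻¹ • g))
  simpa [smul_mul'] using this

open scoped IsMulCommutative in
/-- The nilpotent version of `trivial_of_rank_two_comm`, by induction along the center. When `a`
and `b` are independent, the elements `a * b ^ i` and `b ^ j` cover generators of all `p + 1`
subgroups of order `p` of `⟨a, b⟩`. -/
lemma trivial_of_rank_two {E : Type*} [CommGroup E] {p : ℕ} (hp : p.Prime)
    (hexp : ∀ x : E, x ^ p = 1) (K : Subgroup E) (a b : E) (ha : a ∈ K) (hbK : b ∈ K)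
    (G : Type*) [Group G] [Group.IsNilpotent G] :
    ∀ [Finite G] [MulDistribMulAction E G], (Nat.card G).Coprime p →
    (∀ i < p, FixesAll G K (a * b ^ i)) → (∀ j < p, 0 < j → FixesAll G K (b ^ j)) →
    ∀ e ∈ K, ∀ x : G, e • x = x := by
  refine Group.nilpotent_center_quotient_ind (P := fun G _ _ =>
    ∀ [Finite G] [MulDistribMulAction E G], (Nat.card G).Coprime p →
    (∀ i < p, FixesAll G K (a * b ^ i)) → (∀ j < p, 0 < j → FixesAll G K (b ^ j)) →
    ∀ e ∈ K, ∀ x : G, e • x = x) G ?_ ?_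
  · intro G _ _ _ _ _ _ _ e _ x
    exact Subsingleton.elim _ _
  · intro G _ _ ih _ _ hG hab hb
    have hZ : ∀ e ∈ K, ∀ z ∈ Subgroup.center G, e • z = z := by
      let _ := subAct (E := E) (Subgroup.center G) smul_mem_center
      have hsub : ∀ c : E, FixesAll G K c → FixesAll (Subgroup.center G) K c :=
        fun c h x hx e he => Subtype.ext (h x (congrArg Subtype.val hx) e he)
      intro e he z hz
      exact congrArg Subtype.val (trivial_of_rank_two_comm hp
        (hG.coprime_dvd_left (Subgroup.card_subgroup_dvd_card _)) hexp K a b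
        (fun i hi => hsub _ (hab i hi)) (fun j hj h0 => hsub _ (hb j hj h0)) e he ⟨z, hz⟩)
    let _ := quotAct (E := E) (Subgroup.center G) smul_mem_center
    have lift : ∀ c ∈ K, ∀ q : G, c • (q : G ⧸ Subgroup.center G) = q → c • q = q := by
      intro c hc q hq
      refine smul_eq_of_div_fixed hG (hexp c) (hZ c hc _ ?_)
      exact QuotientGroup.eq.1 hq.symm
    have hquot : ∀ c ∈ K, FixesAll G K c → FixesAll (G ⧸ Subgroup.center G) K c := by
      intro c hc h x hx e he
      induction x using QuotientGroup.induction_on with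
      | H q => exact congrArg QuotientGroup.mk (h q (lift c hc q hx) e he)
    intro e he x
    exact lift e he x (ih (hG.coprime_dvd_left (Subgroup.card_quotient_dvd_card _))
      (fun i hi => hquot _ (K.mul_mem ha (K.pow_mem hbK i)) (hab i hi))
      (fun j hj h0 => hquot _ (K.pow_mem hbK j) (hb j hj h0)) e he x)

section Chain

variable {E Q : Type*} [CommGroup E] [Group Q] [MulDistribMulAction E Q]

lemma fixedSubgroup_anti {F K : Subgroup E} (h : F ≤ K) :
    (fixedSubgroup K : Subgroup Q) ≤ fixedSubgroup F :=
  fun _ hq e he => hq e (h he)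

lemma smul_mem_fixedSubgroup (F : Subgroup E) (e : E) :
    ∀ x ∈ (fixedSubgroup F : Subgroup Q), e • x ∈ (fixedSubgroup F : Subgroup Q) := by
  intro x hx f hf
  rw [smul_comm, hx f hf]

lemma exists_index_p [Finite E] [Finite Q] [Group.IsNilpotent Q] {p n : ℕ} (hp : p.Prime)
    (hexp : ∀ x : E, x ^ p = 1) (hcop : (Nat.card Q).Coprime p)
    (hfaithful : ∀ e : E, (∀ q : Q, e • q = q) → e = 1)
    (K : Subgroup E) (hK : Nat.card K = p ^ (n + 1)) :
    ∃ M < K, Nat.card M = p ^ n ∧ (fixedSubgroup K : Subgroup Q) < fixedSubgroup M := by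
  have hbot : (fixedSubgroup (⊥ : Subgroup E) : Subgroup Q) ≠ fixedSubgroup K := by
    intro h
    have hK1 : K = ⊥ := by
      refine (Subgroup.eq_bot_iff_forall _).2 fun e he => hfaithful e fun q => ?_
      have hq : q ∈ (fixedSubgroup (⊥ : Subgroup E) : Subgroup Q) := by
        intro f hf
        rw [Subgroup.mem_bot.1 hf, one_smul]
      rw [h] at hq
      exact hq e he
    rw [hK1, Subgroup.card_bot] at hK
    exact (Nat.one_lt_pow (by omega) hp.one_lt).ne hK
  obtain ⟨F, ⟨hFK, hF⟩, hmax⟩ := (Set.toFinite {F : Subgroup E | F ≤ K ∧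
    (fixedSubgroup F : Subgroup Q) ≠ fixedSubgroup K}).exists_maximal ⟨⊥, bot_le, hbot⟩
  have hlt : F < K := lt_of_le_of_ne hFK (by rintro rfl; exact hF rfl)
  refine ⟨F, hlt, ?_, lt_of_le_of_ne (fixedSubgroup_anti hFK) hF.symm⟩
  -- By maximality, elements of `K` outside `F` have few fixed points on `C_Q(F)`.
  have hgood : ∀ c ∈ K, c ∉ F → ∀ x ∈ (fixedSubgroup F : Subgroup Q), c • x = x →
      ∀ e ∈ K, e • x = x := by
    intro c hcK hcF x hx hcx
    have hle : F ⊔ Subgroup.zpowers c ≤ K := sup_le hFK (by simpa using hcK)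
    have heq : (fixedSubgroup (F ⊔ Subgroup.zpowers c) : Subgroup Q) = fixedSubgroup K := by
      by_contra hne
      exact hcF (hmax ⟨hle, hne⟩ le_sup_left
        (le_sup_right (a := F) (Subgroup.mem_zpowers c)))
    have hmem : x ∈ (fixedSubgroup (F ⊔ Subgroup.zpowers c) : Subgroup Q) := by
      have : F ⊔ Subgroup.zpowers c ≤ MulAction.stabilizer E x :=
        sup_le (fun e he => hx e he) (by simpa using hcx)
      exact fun e he => this he
    rw [heq] at hmem
    exact hmem
  obtain ⟨b, hbK, hbF⟩ := SetLike.exists_of_lt hlt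
  have hbpow : ∀ j < p, 0 < j → b ^ j ∉ F := by
    intro j hj h0 hmem
    have hcopj : Nat.Coprime j p :=
      (Nat.coprime_of_lt_prime h0.ne' hj hp).symm
    have : b ^ (Nat.gcd j p) ∈ F := by
      have h := Nat.gcd_eq_gcd_ab j p
      rw [← zpow_natCast, h, zpow_add, zpow_mul, zpow_mul, zpow_natCast, zpow_natCast, hexp,
        one_zpow, mul_one]
      exact F.zpow_mem hmem _
    rw [hcopj, pow_one] at this
    exact hbF this
  by_cases hL : K ≤ F ⊔ Subgroup.zpowers b
  · -- Here `|K| ≤ |F| p`, while `|F|` is a proper divisor of `|K|`.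
    have hcardF : Nat.card K ≤ Nat.card F * p := by
      have h1 : Nat.card K ≤ Nat.card (F ⊔ Subgroup.zpowers b : Subgroup E) :=
        Nat.card_le_card_of_injective _ (Subgroup.inclusion_injective hL)
      have h2 : Nat.card (F ⊔ Subgroup.zpowers b : Subgroup E)
          ≤ Nat.card F * Nat.card (Subgroup.zpowers b) := by
        rw [← Nat.card_prod]
        refine Nat.card_le_card_of_surjective
          (fun y : F × Subgroup.zpowers b => (⟨y.1 * y.2, Subgroup.mul_mem_sup y.1.2 y.2.2⟩ :
            (F ⊔ Subgroup.zpowers b : Subgroup E))) ?_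
        rintro ⟨x, hx⟩
        obtain ⟨y, hy, z, hz, rfl⟩ := Subgroup.mem_sup.1 hx
        exact ⟨(⟨y, hy⟩, ⟨z, hz⟩), rfl⟩
      have h3 : Nat.card (Subgroup.zpowers b) ≤ p := by
        rw [Nat.card_zpowers]
        exact orderOf_le_of_pow_eq_one hp.pos (hexp b)
      exact h1.trans (h2.trans (Nat.mul_le_mul_left _ h3))
    obtain ⟨k, hk, hFk⟩ := (Nat.dvd_prime_pow hp).1 (hK ▸ Subgroup.card_dvd_of_le hFK)
    rw [hK, hFk, ← pow_succ, Nat.pow_le_pow_iff_right hp.one_lt] at hcardF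
    have hkn : k ≠ n + 1 := by
      rintro rfl
      exact hlt.ne (Subgroup.eq_of_le_of_card_ge hFK (by rw [hK, hFk]))
    rw [hFk, show k = n by omega]
  · exfalso
    obtain ⟨a, haK, haL⟩ := SetLike.not_le_iff_exists.1 hL
    have hab : ∀ i : ℕ, a * b ^ i ∉ F := by
      intro i hmem
      refine haL ?_
      have := Subgroup.mul_mem_sup hmem
        ((Subgroup.zpowers b).inv_mem (Subgroup.npow_mem_zpowers b i))
      rwa [mul_inv_cancel_right] at this
    let _ := subAct (E := E) (fixedSubgroup F : Subgroup Q) (smul_mem_fixedSubgroup F)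
    have hgood' : ∀ c ∈ K, c ∉ F → FixesAll (fixedSubgroup F : Subgroup Q) K c :=
      fun c hcK hcF x hx e he =>
        Subtype.ext (hgood c hcK hcF x x.2 (congrArg Subtype.val hx) e he)
    have htriv := trivial_of_rank_two hp hexp K a b haK hbK (fixedSubgroup F : Subgroup Q)
      (hcop.coprime_dvd_left (Subgroup.card_subgroup_dvd_card _))
      (fun i _ => hgood' _ (K.mul_mem haK (K.pow_mem hbK i)) (hab i))
      (fun j hj h0 => hgood' _ (K.pow_mem hbK j) (hbpow j hj h0))
    refine hF (le_antisymm (fun x hx e he => ?_) (fixedSubgroup_anti hFK))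
    exact congrArg Subtype.val (htriv e he ⟨x, hx⟩)

lemma exists_chain [Finite E] [Finite Q] [Group.IsNilpotent Q] {p : ℕ} (hp : p.Prime)
    (hexp : ∀ x : E, x ^ p = 1) (hcop : (Nat.card Q).Coprime p)
    (hfaithful : ∀ e : E, (∀ q : Q, e • q = q) → e = 1) (n : ℕ) :
    ∀ K : Subgroup E, Nat.card K = p ^ n →
    ∃ c : Fin (n + 1) → Subgroup E,
      c 0 = K ∧ c (Fin.last n) = ⊥ ∧ StrictAnti c ∧
      StrictMono (fun i => fixedSubgroup (c i) : Fin (n + 1) → Subgroup Q) := by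
  induction n with
  | zero =>
    intro K hK
    exact ⟨fun _ => K, rfl, Subgroup.eq_bot_of_card_eq _ (by simpa using hK),
      fun i j h => absurd h (by omega), fun i j h => absurd h (by omega)⟩
  | succ n ih =>
    intro K hK
    obtain ⟨M, hMK, hM, hfix⟩ := exists_index_p hp hexp hcop hfaithful K hK
    obtain ⟨c, h0, hlast, hanti, hmono⟩ := ih M hM
    refine ⟨Fin.cons K c, rfl, ?_, ?_, ?_⟩
    · rw [← Fin.succ_last, Fin.cons_succ, hlast]
    · rw [Fin.strictAnti_iff_succ_lt]
      intro i
      cases i using Fin.cases with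
      | zero => simpa [h0] using hMK
      | succ i =>
        rw [← Fin.succ_castSucc, Fin.cons_succ, Fin.cons_succ]
        exact hanti Fin.castSucc_lt_succ
    · rw [Fin.strictMono_iff_lt_succ]
      intro i
      cases i using Fin.cases with
      | zero => simpa [h0] using hfix
      | succ i =>
        rw [← Fin.succ_castSucc, Fin.cons_succ, Fin.cons_succ]
        exact hmono Fin.castSucc_lt_succ

end Chain

end KhukhroLemma

/-- If an elementary abelian `p`-group `E` of order `p ^ n` acts faithfully
on a finite nilpotent `p'`-group `Q`, then there is a strictly decreasing chain
`E = E_0 > E_1 > ... > E_n = 1` of subgroups of `E` whose fixed-point subgroups form a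
strictly increasing chain `C_Q(E_0) < C_Q(E_1) < ... < C_Q(E_n)`. -/
theorem khukhro_lemma (p n : ℕ) (hp : p.Prime) (E Q : Type*)
    [CommGroup E] [Fintype E] (hcard : Fintype.card E = p ^ n)
    (hexp : ∀ x : E, x ^ p = 1)
    [Group Q] [Fintype Q] (hnilp : Group.IsNilpotent Q)
    (hcop : Nat.Coprime (Fintype.card Q) p)
    [MulDistribMulAction E Q]
    (hfaithful : ∀ e : E, (∀ q : Q, e • q = q) → e = 1) :
    ∃ c : Fin (n + 1) → Subgroup E,
      c 0 = ⊤ ∧ c (Fin.last n) = ⊥ ∧ StrictAnti c ∧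
      StrictMono (fun i => fixedSubgroup (c i) : Fin (n + 1) → Subgroup Q) := by
  have := hnilp
  rw [← Nat.card_eq_fintype_card] at hcard hcop
  exact KhukhroLemma.exists_chain hp hexp hcop hfaithful n ⊤ (by rw [Subgroup.card_top, hcard])
end

section
/- Let G be a finite group with subgroups H and K such that every element of H commutes with every element of K and G is generated by H and K (i.e. G is an internal central product of H and K). If the c-dimension of H is at least m and the c-dimension of K is at least l, then the c-dimension of G is at least m + l. -/
/-!
If `G` is the central product of `H` and `K`, and `A ⊆ H`, `B ⊆ K`, then an element `h * k` of `G`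
centralizes `A ∪ B` exactly when `h` centralizes `A` in `H` and `k` centralizes `B` in `K`
(`mul_mem_centralizer_union`). Hence `C_G(A ∪ B)` is strictly increasing in the pair
`(C_H(A), C_K(B))` under the product order (`centralizer_union_lt`). Given chains
`C_H(A_0) < ... < C_H(A_m)` and `C_K(B_0) < ... < C_K(B_l)`, climbing first the `H`-chain with `B_0`
fixed and then the `K`-chain with `A_m` fixed gives a chain of length `m + l` in `G`.
-/

section CentralProduct

variable {G : Type*} [Group G] {H K : Subgroup G}

theorem mul_mem_centralizer_union (hcomm : ∀ h ∈ H, ∀ k ∈ K, Commute h k)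
    (A : Set H) (B : Set K) (h : H) (k : K) :
    (h : G) * k ∈ Subgroup.centralizer ((↑) '' A ∪ (↑) '' B : Set G) ↔
      h ∈ Subgroup.centralizer A ∧ k ∈ Subgroup.centralizer B := by
  -- A factor commuting with the test element may be dropped from the product.
  have hA : ∀ a : H, Commute (a : G) (h * k) ↔ Commute a h := by
    intro a
    have hak : Commute (a : G) k := hcomm a a.2 k k.2
    have e : Commute (a : G) h ↔ Commute a h :=
      ⟨fun c => Subtype.ext c.eq, fun c => c.map H.subtype⟩
    rw [← e]
    exact ⟨fun c => by simpa using c.mul_right hak.inv_right, fun c => c.mul_right hak⟩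
  have hB : ∀ b : K, Commute (b : G) (h * k) ↔ Commute b k := by
    intro b
    have hbh : Commute (b : G) h := (hcomm h h.2 b b.2).symm
    have e : Commute (b : G) k ↔ Commute b k :=
      ⟨fun c => Subtype.ext c.eq, fun c => c.map K.subtype⟩
    rw [← e]
    exact ⟨fun c => by simpa using hbh.inv_right.mul_right c, fun c => hbh.mul_right c⟩
  simp only [Subgroup.mem_centralizer_iff, Set.mem_union, or_imp, forall_and,
    Set.forall_mem_image]
  exact and_congr (forall₂_congr fun a _ => hA a) (forall₂_congr fun b _ => hB b)

theorem centralizer_union_lt (hcomm : ∀ h ∈ H, ∀ k ∈ K, Commute h k) (hgen : H ⊔ K = ⊤)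
    {A A' : Set H} {B B' : Set K}
    (hlt : (Subgroup.centralizer A, Subgroup.centralizer B) <
      (Subgroup.centralizer A', Subgroup.centralizer B')) :
    Subgroup.centralizer ((↑) '' A ∪ (↑) '' B : Set G) <
      Subgroup.centralizer ((↑) '' A' ∪ (↑) '' B' : Set G) := by
  have key := fun A B => mul_mem_centralizer_union hcomm A B
  have hle := hlt.le
  refine lt_of_le_not_ge ?_ fun hge => hlt.not_ge ⟨fun h hh => ?_, fun k hk => ?_⟩
  · intro g hg
    -- `K` centralizes, hence normalizes, `H`, so `H ⊔ K` is the set of products `h * k`.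
    have hnorm : K ≤ Subgroup.normalizer (H : Set G) :=
      le_trans (fun k hk => Subgroup.mem_centralizer_iff.2 fun h hh => hcomm h hh k hk)
        (Subgroup.centralizer_le_normalizer (H : Set G))
    have hmem : g ∈ ((H ⊔ K : Subgroup G) : Set G) := by simp [hgen]
    rw [Subgroup.coe_mul_of_right_le_normalizer_left H K hnorm] at hmem
    obtain ⟨h, hh, k, hk, rfl⟩ := hmem
    obtain ⟨h1, h2⟩ := (key A B ⟨h, hh⟩ ⟨k, hk⟩).1 hg
    exact (key A' B' ⟨h, hh⟩ ⟨k, hk⟩).2 ⟨hle.1 h1, hle.2 h2⟩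
  · exact ((key A B h 1).1 (hge ((key A' B' h 1).2 ⟨hh, one_mem _⟩))).1
  · exact ((key A B 1 k).1 (hge ((key A' B' 1 k).2 ⟨one_mem _, hk⟩))).2

end CentralProduct

/-- If a finite group `G` is an internal central product of subgroups `H`
and `K` (elementwise commuting, generating `G`), and the c-dimension of `H` is at least
`m` (there is a strictly increasing chain of centralizers in `H` of length `m`) and the
c-dimension of `K` is at least `l`, then the c-dimension of `G` is at least `m + l`. -/
theorem cdim_ge_of_central_product (G : Type*) [Group G] [Fintype G]
    (H K : Subgroup G)
    (hcomm : ∀ h ∈ H, ∀ k ∈ K, Commute h k) (hgen : H ⊔ K = ⊤) (m l : ℕ)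
    (hH : ∃ S : Fin (m + 1) → Set H,
      StrictMono (fun i => Subgroup.centralizer (S i) : Fin (m + 1) → Subgroup H))
    (hK : ∃ S : Fin (l + 1) → Set K,
      StrictMono (fun i => Subgroup.centralizer (S i) : Fin (l + 1) → Subgroup K)) :
    ∃ S : Fin (m + l + 1) → Set G,
      StrictMono (fun i => Subgroup.centralizer (S i) : Fin (m + l + 1) → Subgroup G) := by
  obtain ⟨A, hA⟩ := hH
  obtain ⟨B, hB⟩ := hK
  -- Position `i` uses `A_(min i m)` and `B_(i - m)`; the truncated subtraction keeps `B_0` for `i ≤ m`.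
  refine ⟨fun i => (↑) '' A ⟨min i m, by omega⟩ ∪ (↑) '' B ⟨i - m, by omega⟩, fun i j hij => ?_⟩
  refine centralizer_union_lt hcomm hgen ?_
  have hij' : (i : ℕ) < j := hij
  rw [Prod.mk_lt_mk]
  by_cases him : (i : ℕ) < m
  · refine Or.inl ⟨hA ?_, hB.monotone ?_⟩
    · rw [Fin.mk_lt_mk]; omega
    · rw [Fin.mk_le_mk]; omega
  · refine Or.inr ⟨hA.monotone ?_, hB ?_⟩
    · rw [Fin.mk_le_mk]; omega
    · rw [Fin.mk_lt_mk]; omega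
end

section
/- Let S_1, S_2, ..., S_r be finite simple groups. Then the minimal faithful permutation degree of their direct product equals the sum of their minimal faithful permutation degrees: μ(S_1 × S_2 × ... × S_r) = μ(S_1) + μ(S_2) + ... + μ(S_r). -/
/-!
The upper bound `μ(G × H) ≤ μ(G) + μ(H)` comes from letting the factors act on a disjoint union.
For the lower bound one factor is split off at a time: if `S` is simple and `R` is a product of
simple groups, then `μ(S) + μ(R) ≤ μ(S × R)`.

A faithful action is encoded by the multiset of its point stabilizers, one for each orbit: a
multiset of subgroups whose normal cores intersect trivially (`CoreTrivial`), the degree being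
the sum of the indices. Given such a multiset for `S × R`, some member `H` does not contain
`S × 1`. Pulling the other members back to `R` does not increase their indices, so it suffices to
replace `H` by at most one subgroup of `R` such that the degree drops by at least `μ(S)` and no
kernel is gained. Let `P` and `M` be the projections of `H` to `S` and `R`, and let
`L = H ∩ S`, `M₀ = H ∩ R`; then `|S × R : H| = |S : P| |R : M₀| = |S : L| |R : M|`.

* If `P ≠ S`, then `|S : P| ≥ μ(S)`, and `H` is replaced by `M₀` (`reduce_of_proper`).
* If `P = S`, then `L` is normal in `S`, so `L = 1` and `H` is the graph of a homomorphism
  `φ : M → S` with kernel `M₀`. For `S` nonabelian choose `1 < X < S` and replace `H` by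
  `φ⁻¹(X)`, which has the same core as `M₀` (`reduce_of_noncomm`).
* If `P = S` and `S` is abelian, extend the restriction of `φ` to the core of `M` to a homomorphism
  `α : R → S`, embed `R` in `S × R` as the graph of `α` instead of as `1 × R`, and replace `H`
  by `M` (`reduce_of_comm`).

The extension in the last case exists because `R` is a product of simple groups
(`ExtendsHoms`, `ExtendsHoms.prod`).
-/

/-- The minimal faithful permutation degree of a group `G`: the least `n` such that
there is an injective homomorphism from `G` into the symmetric group on `n` letters. -/
noncomputable def minPermDeg (G : Type*) [Group G] : ℕ :=
  sInf {n : ℕ | ∃ f : G →* Equiv.Perm (Fin n), Function.Injective f}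

/-! ### Faithful actions and families of subgroups -/

/-- A multiset of subgroups whose normal cores have trivial intersection, i.e. such that `G` acts
faithfully on the disjoint union of the corresponding coset spaces. -/
def CoreTrivial {G : Type*} [Group G] (s : Multiset (Subgroup G)) : Prop :=
  ∀ g : G, (∀ H ∈ s, g ∈ H.normalCore) → g = 1

/-- The degree of the action of `G` on the disjoint union of the coset spaces of the members
of `s`. -/
noncomputable def degree {G : Type*} [Group G] (s : Multiset (Subgroup G)) : ℕ :=
  (s.map Subgroup.index).sum

lemma minPermDeg_le_card {G X : Type*} [Group G] [Finite X] (f : G →* Equiv.Perm X)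
    (hf : Function.Injective f) : minPermDeg G ≤ Nat.card X := by
  refine Nat.sInf_le ⟨(Finite.equivFin X).permCongrHom.toMonoidHom.comp f, ?_⟩
  exact (Finite.equivFin X).permCongrHom.injective.comp hf

lemma exists_minPermDeg (G : Type*) [Group G] [Finite G] :
    ∃ f : G →* Equiv.Perm (Fin (minPermDeg G)), Function.Injective f := by
  refine Nat.sInf_mem (s := {n : ℕ | ∃ f : G →* Equiv.Perm (Fin n), Function.Injective f}) ?_
  exact ⟨Nat.card G, (Finite.equivFin G).permCongrHom.toMonoidHom.comp (MulAction.toPermHom G G),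
    (Finite.equivFin G).permCongrHom.injective.comp MulAction.toPerm_injective⟩

lemma minPermDeg_le_degree {G : Type*} [Group G] [Finite G] (s : Multiset (Subgroup G))
    (hs : CoreTrivial s) : minPermDeg G ≤ degree s := by
  induction s using Quotient.inductionOn with
  | h l =>
    let X := Σ i : Fin l.length, G ⧸ l.get i
    have hinj : Function.Injective (MulAction.toPermHom G X) := by
      rw [injective_iff_map_eq_one]
      intro g hg
      refine hs g fun H hH => ?_
      obtain ⟨i, rfl⟩ := List.get_of_mem (Multiset.mem_coe.1 hH)
      rw [Subgroup.normalCore_eq_ker, MonoidHom.mem_ker]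
      ext q
      have := congrArg (fun e : Equiv.Perm X => e ⟨i, q⟩) hg
      simpa [X] using this
    refine (minPermDeg_le_card _ hinj).trans (le_of_eq ?_)
    rw [Nat.card_sigma]
    simp only [degree, Multiset.quot_mk_to_coe, Multiset.map_coe, Multiset.sum_coe]
    rw [← List.sum_ofFn]
    congr 1
    apply List.ext_get <;> simp [Subgroup.index]

lemma exists_coreTrivial_degree_eq (G : Type*) [Group G] [Finite G] :
    ∃ s : Multiset (Subgroup G), CoreTrivial s ∧ degree s = minPermDeg G := by
  classical
  obtain ⟨f, hf⟩ := exists_minPermDeg G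
  let _ : MulAction G (Fin (minPermDeg G)) := MulAction.compHom _ f
  have hsmul : ∀ (g : G) (x : Fin (minPermDeg G)), g • x = f g x := fun _ _ => rfl
  let Ω := MulAction.orbitRel.Quotient G (Fin (minPermDeg G))
  have : Fintype Ω := Fintype.ofFinite Ω
  refine ⟨(Finset.univ : Finset Ω).val.map fun ω => MulAction.stabilizer G ω.out, ?_, ?_⟩
  · intro g hg
    apply hf
    rw [map_one]
    ext x
    have hx : MulAction.orbitRel G _ x (Quotient.mk'' x : Ω).out :=
      (MulAction.orbitRel G _).symm (Quotient.mk_out (s := MulAction.orbitRel G _) x)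
    obtain ⟨h, hh⟩ := hx
    have hc := hg _ (Multiset.mem_map_of_mem _ (Finset.mem_univ (Quotient.mk'' x : Ω))) h⁻¹
    rw [inv_inv, MulAction.mem_stabilizer_iff, mul_smul, mul_smul] at hc
    simp only at hh
    rw [hh, inv_smul_eq_iff, hh, hsmul] at hc
    simp [hc]
  · have h := Nat.card_congr
      (MulAction.selfEquivSigmaOrbitsQuotientStabilizer G (Fin (minPermDeg G)))
    rw [Nat.card_sigma, Nat.card_fin] at h
    rw [degree, Multiset.map_map]
    exact h.symm

lemma minPermDeg_congr {G H : Type*} [Group G] [Group H] [Finite G] [Finite H] (e : G ≃* H) :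
    minPermDeg G = minPermDeg H := by
  apply le_antisymm
  · obtain ⟨f, hf⟩ := exists_minPermDeg H
    simpa using minPermDeg_le_card (f.comp e.toMonoidHom) (hf.comp e.injective)
  · obtain ⟨f, hf⟩ := exists_minPermDeg G
    simpa using minPermDeg_le_card (f.comp e.symm.toMonoidHom) (hf.comp e.symm.injective)

lemma minPermDeg_prod_le (G H : Type*) [Group G] [Group H] [Finite G] [Finite H] :
    minPermDeg (G × H) ≤ minPermDeg G + minPermDeg H := by
  obtain ⟨f, hf⟩ := exists_minPermDeg G
  obtain ⟨g, hg⟩ := exists_minPermDeg H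
  have := minPermDeg_le_card ((Equiv.Perm.sumCongrHom _ _).comp (f.prodMap g))
    (Equiv.Perm.sumCongrHom_injective.comp (hf.prodMap hg))
  simpa using this

lemma minPermDeg_le_index {S : Type*} [Group S] [Finite S] [IsSimpleGroup S] (P : Subgroup S)
    (hP : P ≠ ⊤) : minPermDeg S ≤ P.index := by
  have hcore : P.normalCore = ⊥ :=
    (Subgroup.normalCore_normal P).eq_bot_or_eq_top.resolve_right fun h =>
      hP (top_le_iff.1 (h ▸ P.normalCore_le))
  have h := minPermDeg_le_degree ({P} : Multiset (Subgroup S)) (by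
    intro g hg
    simpa [hcore] using hg P (by simp))
  simpa [degree] using h

/-! ### Extending homomorphisms from normal subgroups -/

/-- Every homomorphism from a normal subgroup of `R` to `Z` extends to `R`. -/
def ExtendsHoms (R Z : Type*) [Group R] [Group Z] : Prop :=
  ∀ (N : Subgroup R), N.Normal → ∀ φ : N →* Z, ∃ α : R →* Z, ∀ n : N, α n = φ n

lemma ExtendsHoms.of_subsingleton (R Z : Type*) [Group R] [Group Z] [Subsingleton R] :
    ExtendsHoms R Z := by
  intro N _ φ
  refine ⟨1, fun n => ?_⟩
  rw [Subsingleton.elim n 1]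
  simp

lemma ExtendsHoms.congr {R R' Z : Type*} [Group R] [Group R'] [Group Z] (e : R ≃* R')
    (h : ExtendsHoms R Z) : ExtendsHoms R' Z := by
  intro N hN φ
  obtain ⟨α, hα⟩ := h (N.comap e.toMonoidHom) (hN.comap _)
    (φ.comp (e.toMonoidHom.subgroupComap N))
  refine ⟨α.comp e.symm.toMonoidHom, fun n => ?_⟩
  have := hα ⟨e.symm n, by simp⟩
  simp only [MonoidHom.coe_comp, Function.comp_apply] at this ⊢
  exact this.trans (congrArg φ (Subtype.ext (e.apply_symm_apply n.1)))

/-- A normal subgroup `N` of `S × R` either contains `S × 1`, hence is a product `S × N₂` on which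
the extension is built factor by factor, or meets `S × 1` trivially, in which case it is
isomorphic to its projection to `R` and the extension factors through `R`. -/
lemma ExtendsHoms.prod {S R Z : Type*} [Group S] [Group R] [Group Z] [IsSimpleGroup S]
    (hZ : ∀ a b : Z, a * b = b * a) (h : ExtendsHoms R Z) : ExtendsHoms (S × R) Z := by
  intro N hN φ
  rcases (hN.comap (MonoidHom.inl S R)).eq_bot_or_eq_top with hb | ht
  · have hinj : Function.Injective ((MonoidHom.snd S R).comp N.subtype) := by
      rw [injective_iff_map_eq_one]
      rintro ⟨⟨s, r⟩, hn⟩ hr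
      obtain rfl : r = 1 := hr
      have : s ∈ N.comap (MonoidHom.inl S R) := hn
      rw [hb, Subgroup.mem_bot] at this
      subst this
      rfl
    let e := MonoidHom.ofInjective hinj
    have hnorm : ((MonoidHom.snd S R).comp N.subtype).range.Normal := by
      have hr : ((MonoidHom.snd S R).comp N.subtype).range = N.map (MonoidHom.snd S R) := by
        rw [MonoidHom.range_comp, Subgroup.range_subtype]
      rw [hr]
      exact hN.map _ Prod.snd_surjective
    obtain ⟨α, hα⟩ := h _ hnorm (φ.comp e.symm.toMonoidHom)
    refine ⟨α.comp (MonoidHom.snd S R), fun n => ?_⟩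
    have h1 := hα (e n)
    have h2 : (φ.comp e.symm.toMonoidHom) (e n) = φ n := congrArg φ (e.symm_apply_apply n)
    exact h1.trans h2
  · have hl : ∀ s : S, (s, (1 : R)) ∈ N := fun s => by
      have : s ∈ N.comap (MonoidHom.inl S R) := ht ▸ Subgroup.mem_top s
      exact this
    obtain ⟨α, hα⟩ := h (N.comap (MonoidHom.inr S R)) (hN.comap _)
      (φ.comp ((MonoidHom.inr S R).subgroupComap N))
    let β : S →* Z := φ.comp ((MonoidHom.inl S R).codRestrict N hl)
    refine ⟨⟨⟨fun x => β x.1 * α x.2, by simp⟩, ?_⟩, ?_⟩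
    · rintro ⟨s, r⟩ ⟨s', r'⟩
      simp only [Prod.mk_mul_mk, map_mul]
      rw [mul_assoc, ← mul_assoc (β s'), hZ (β s') (α r)]
      simp only [mul_assoc]
    · rintro ⟨⟨s, r⟩, hn⟩
      have hr : ((1 : S), r) ∈ N := by
        have := N.mul_mem (N.inv_mem (hl s)) hn
        simpa using this
      have := hα ⟨r, hr⟩
      simp only [MonoidHom.coe_mk, OneHom.coe_mk]
      rw [this]
      simp only [β, MonoidHom.coe_comp, Function.comp_apply]
      rw [← map_mul]
      refine congrArg φ (Subtype.ext ?_)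
      change ((s, 1) : S × R) * (1, r) = (s, r)
      simp

/-! ### Subgroups of a product -/

section Prod

variable {S R : Type*} [Group S] [Group R]

lemma card_map_fst_mul (H : Subgroup (S × R)) :
    Nat.card (H.map (MonoidHom.fst S R)) * Nat.card (H.comap (MonoidHom.inr S R)) =
      Nat.card H := by
  let p := (MonoidHom.fst S R).comp H.subtype
  have h := p.ker.card_mul_index
  rw [Subgroup.index_ker, MonoidHom.range_comp, Subgroup.range_subtype] at h
  rw [← h, mul_comm]
  congr 1
  refine Nat.card_congr ⟨fun r => ⟨⟨(1, r.1), r.2⟩, rfl⟩, fun x => ⟨x.1.1.2, ?_⟩, ?_, ?_⟩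
  · obtain ⟨⟨⟨s, r⟩, hx⟩, hs⟩ := x
    obtain rfl : s = 1 := hs
    exact hx
  · intro r
    rfl
  · rintro ⟨⟨⟨s, r⟩, hx⟩, hs⟩
    obtain rfl : s = 1 := hs
    rfl

lemma card_map_snd_mul (H : Subgroup (S × R)) :
    Nat.card (H.map (MonoidHom.snd S R)) * Nat.card (H.comap (MonoidHom.inl S R)) =
      Nat.card H := by
  let p := (MonoidHom.snd S R).comp H.subtype
  have h := p.ker.card_mul_index
  rw [Subgroup.index_ker, MonoidHom.range_comp, Subgroup.range_subtype] at h
  rw [← h, mul_comm]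
  congr 1
  refine Nat.card_congr ⟨fun r => ⟨⟨(r.1, 1), r.2⟩, rfl⟩, fun x => ⟨x.1.1.1, ?_⟩, ?_, ?_⟩
  · obtain ⟨⟨⟨s, r⟩, hx⟩, hs⟩ := x
    obtain rfl : r = 1 := hs
    exact hx
  · intro r
    rfl
  · rintro ⟨⟨⟨s, r⟩, hx⟩, hs⟩
    obtain rfl : r = 1 := hs
    rfl

lemma inr_mem_normalCore (K : Subgroup (S × R)) (r : R)
    (hr : r ∈ (K.comap (MonoidHom.inr S R)).normalCore) :
    MonoidHom.inr S R r ∈ K.normalCore := by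
  rintro ⟨s, a⟩
  have : ((1 : S), a * r * a⁻¹) ∈ K := hr a
  simpa using this

/-- If `H` projects onto `S`, then `H ∩ S` is normal in `S`, hence trivial. -/
lemma comap_inl_eq_bot [IsSimpleGroup S] (H : Subgroup (S × R))
    (hL : H.comap (MonoidHom.inl S R) ≠ ⊤) (hP : H.map (MonoidHom.fst S R) = ⊤) :
    H.comap (MonoidHom.inl S R) = ⊥ := by
  refine Subgroup.Normal.eq_bot_or_eq_top ⟨fun l hl s => ?_⟩ |>.resolve_right hL
  obtain ⟨⟨s', r⟩, hr, rfl⟩ : s ∈ H.map (MonoidHom.fst S R) := hP ▸ Subgroup.mem_top s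
  have := H.mul_mem (H.mul_mem hr hl) (H.inv_mem hr)
  simpa using this

lemma fst_unique (H : Subgroup (S × R)) (hL : H.comap (MonoidHom.inl S R) = ⊥) {s s' : S} {r : R}
    (h : (s, r) ∈ H) (h' : (s', r) ∈ H) : s = s' := by
  have h1 : s * s'⁻¹ ∈ H.comap (MonoidHom.inl S R) := by
    have := H.mul_mem h (H.inv_mem h')
    simpa using this
  rw [hL, Subgroup.mem_bot] at h1
  exact mul_inv_eq_one.1 h1

variable [Finite S] [Finite R]

lemma index_eq_fst (H : Subgroup (S × R)) :
    H.index = (H.map (MonoidHom.fst S R)).index * (H.comap (MonoidHom.inr S R)).index := by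
  have h1 := H.card_mul_index
  have h2 := (H.map (MonoidHom.fst S R)).card_mul_index
  have h3 := (H.comap (MonoidHom.inr S R)).card_mul_index
  rw [Nat.card_prod, ← h2, ← h3, ← card_map_fst_mul] at h1
  have hpos : 0 < Nat.card (H.map (MonoidHom.fst S R)) * Nat.card (H.comap (MonoidHom.inr S R)) :=
    Nat.mul_pos Nat.card_pos Nat.card_pos
  apply Nat.eq_of_mul_eq_mul_left hpos
  rw [h1]
  ring

lemma index_eq_snd (H : Subgroup (S × R)) :
    H.index = (H.map (MonoidHom.snd S R)).index * (H.comap (MonoidHom.inl S R)).index := by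
  have h1 := H.card_mul_index
  have h2 := (H.map (MonoidHom.snd S R)).card_mul_index
  have h3 := (H.comap (MonoidHom.inl S R)).card_mul_index
  rw [Nat.card_prod, ← h2, ← h3, ← card_map_snd_mul] at h1
  have hpos : 0 < Nat.card (H.map (MonoidHom.snd S R)) * Nat.card (H.comap (MonoidHom.inl S R)) :=
    Nat.mul_pos Nat.card_pos Nat.card_pos
  apply Nat.eq_of_mul_eq_mul_left hpos
  rw [h1]
  ring

lemma index_comap_le {G K : Type*} [Group G] [Group K] [Finite G] (f : K →* G)
    (H : Subgroup G) : (H.comap f).index ≤ H.index := by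
  rw [Subgroup.index_comap, ← Subgroup.relIndex_top_right H]
  exact Subgroup.relIndex_le_of_le_right le_top (by
    rw [Subgroup.relIndex_top_right]; exact Subgroup.index_ne_zero_of_finite)

lemma degree_map_comap_le {G K : Type*} [Group G] [Group K] [Finite G] (f : K →* G)
    (s : Multiset (Subgroup G)) : degree (s.map (Subgroup.comap f)) ≤ degree s := by
  rw [degree, degree, Multiset.map_map]
  exact Multiset.sum_map_le_sum_map _ _ fun H _ => index_comap_le f H

/-! ### Splitting off a simple factor -/

/-- The bookkeeping common to all cases: the members of `t` are pulled back along an embedding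
`j : R → S × R` that is compatible with normal cores, and `H` is replaced by a subgroup `M` of
`R`, which is discarded if it is all of `R`. -/
lemma exists_replacement (j : R →* S × R) (hj : Function.Injective j)
    (hcore : ∀ (K : Subgroup (S × R)) (r : R), r ∈ (K.comap j).normalCore → j r ∈ K.normalCore)
    (H : Subgroup (S × R)) (t : Multiset (Subgroup (S × R))) (ht : CoreTrivial (H ::ₘ t))
    (M : Subgroup R) (hM : ∀ r ∈ M.normalCore, j r ∈ H.normalCore) (n : ℕ)
    (hn : n ≤ H.index) (hMn : M ≠ ⊤ → M.index + n ≤ H.index) :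
    minPermDeg R + n ≤ degree (H ::ₘ t) := by
  have hdeg := degree_map_comap_le j t
  have key : ∀ r : R, r ∈ M.normalCore → (∀ K ∈ t.map (Subgroup.comap j), r ∈ K.normalCore) →
      r = 1 := by
    intro r hr h
    apply hj
    rw [map_one]
    apply ht
    intro K hK
    rcases Multiset.mem_cons.1 hK with rfl | hK
    · exact hM r hr
    · exact hcore K r (h _ (Multiset.mem_map_of_mem _ hK))
  have hH : degree (H ::ₘ t) = H.index + degree t := by simp [degree]
  by_cases hMt : M = ⊤
  · have h1 : CoreTrivial (t.map (Subgroup.comap j)) := fun r h =>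
      key r (by rw [hMt]; intro b; trivial) h
    have := minPermDeg_le_degree _ h1
    omega
  · have h1 : CoreTrivial (M ::ₘ t.map (Subgroup.comap j)) := fun r h =>
      key r (h _ (Multiset.mem_cons_self _ _)) fun K hK => h K (Multiset.mem_cons_of_mem hK)
    have h2 := minPermDeg_le_degree _ h1
    have h3 : degree (M ::ₘ t.map (Subgroup.comap j)) =
        M.index + degree (t.map (Subgroup.comap j)) := by simp [degree]
    have := hMn hMt
    omega

lemma reduce_of_proper [IsSimpleGroup S] (H : Subgroup (S × R))
    (t : Multiset (Subgroup (S × R))) (ht : CoreTrivial (H ::ₘ t))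
    (hP : H.map (MonoidHom.fst S R) ≠ ⊤) :
    minPermDeg R + minPermDeg S ≤ degree (H ::ₘ t) := by
  have h1 := minPermDeg_le_index _ hP
  have h2 := Subgroup.one_lt_index_of_ne_top hP
  have hi := index_eq_fst H
  refine exists_replacement (MonoidHom.inr S R) (fun a b h => (Prod.ext_iff.1 h).2)
    inr_mem_normalCore H t ht (H.comap (MonoidHom.inr S R)) (inr_mem_normalCore H) _ ?_ ?_
  · have h3 : 0 < (H.comap (MonoidHom.inr S R)).index :=
      Nat.pos_of_ne_zero Subgroup.index_ne_zero_of_finite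
    rw [hi]
    exact h1.trans (Nat.le_mul_of_pos_right _ h3)
  · intro hM
    have h3 := Subgroup.one_lt_index_of_ne_top hM
    rw [hi]
    nlinarith

lemma reduce_of_noncomm [IsSimpleGroup S] (hS : ¬ ∀ a b : S, a * b = b * a)
    (H : Subgroup (S × R)) (t : Multiset (Subgroup (S × R))) (ht : CoreTrivial (H ::ₘ t))
    (hL : H.comap (MonoidHom.inl S R) ≠ ⊤) (hP : H.map (MonoidHom.fst S R) = ⊤) :
    minPermDeg R + minPermDeg S ≤ degree (H ::ₘ t) := by
  replace hL := comap_inl_eq_bot H hL hP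
  obtain ⟨X, hXb, hXt⟩ : ∃ X : Subgroup S, X ≠ ⊥ ∧ X ≠ ⊤ := by
    obtain ⟨x, hx⟩ := exists_ne (1 : S)
    refine ⟨Subgroup.zpowers x, by simpa using hx, fun h => hS fun a b => ?_⟩
    obtain ⟨m, rfl⟩ : a ∈ Subgroup.zpowers x := h ▸ Subgroup.mem_top a
    obtain ⟨n, rfl⟩ : b ∈ Subgroup.zpowers x := h ▸ Subgroup.mem_top b
    exact zpow_mul_comm x m n
  -- `H'` is the graph of the restriction of `φ` to `φ⁻¹(X)`.
  let H' : Subgroup (S × R) := H ⊓ X.comap (MonoidHom.fst S R)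
  let M' := H'.map (MonoidHom.snd S R)
  have hidx : M'.index = X.index * (H.map (MonoidHom.snd S R)).index := by
    have a1 := index_eq_fst H
    have a2 := index_eq_snd H
    have b1 := index_eq_fst H'
    have b2 := index_eq_snd H'
    have hL' : H'.comap (MonoidHom.inl S R) = ⊥ :=
      le_bot_iff.1 (hL ▸ Subgroup.comap_mono inf_le_left)
    have hP' : H'.map (MonoidHom.fst S R) = X := by
      ext x
      constructor
      · rintro ⟨y, hy, rfl⟩
        exact hy.2
      · intro hx
        obtain ⟨y, hy, rfl⟩ : x ∈ H.map (MonoidHom.fst S R) := hP ▸ Subgroup.mem_top x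
        exact ⟨y, ⟨hy, hx⟩, rfl⟩
    have hM0 : H'.comap (MonoidHom.inr S R) = H.comap (MonoidHom.inr S R) := by
      ext r
      exact ⟨fun h => h.1, fun h => ⟨h, X.one_mem⟩⟩
    rw [hP, Subgroup.index_top, one_mul] at a1
    rw [hL, Subgroup.index_bot] at a2
    rw [hP', hM0, ← a1, a2] at b1
    rw [hL', Subgroup.index_bot, b1, ← mul_assoc] at b2
    exact (Nat.eq_of_mul_eq_mul_right Nat.card_pos b2).symm
  have hHi : H.index = (H.map (MonoidHom.snd S R)).index * Nat.card S := by
    rw [index_eq_snd H, hL, Subgroup.index_bot]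
  have hb : 0 < (H.map (MonoidHom.snd S R)).index :=
    Nat.pos_of_ne_zero Subgroup.index_ne_zero_of_finite
  have hX := minPermDeg_le_index X hXt
  have hcard : 2 * X.index ≤ Nat.card S := by
    rw [← X.card_mul_index]
    exact Nat.mul_le_mul_right _ (Subgroup.one_lt_card_iff_ne_bot X |>.2 hXb)
  have hdrop : M'.index + minPermDeg S ≤ H.index := by
    rw [hidx, hHi]
    nlinarith
  have hXcore : X.normalCore = ⊥ :=
    (Subgroup.normalCore_normal X).eq_bot_or_eq_top.resolve_right fun h =>
      hXt (top_le_iff.1 (h ▸ X.normalCore_le))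
  refine exists_replacement (MonoidHom.inr S R) (fun a b h => (Prod.ext_iff.1 h).2)
    inr_mem_normalCore H t ht M' ?_ _ (by omega) (fun _ => hdrop)
  intro r hr
  apply inr_mem_normalCore
  intro a
  have hm : a * r * a⁻¹ ∈ M'.normalCore := (Subgroup.normalCore_normal M').conj_mem r hr a
  generalize a * r * a⁻¹ = m at hm
  obtain ⟨⟨x, m'⟩, ⟨hxH, hxX⟩, rfl⟩ := M'.normalCore_le hm
  -- All conjugates of `x = φ(m)` lie in `X`, since they are values of `φ` at conjugates of `m`.
  have hx : x ∈ X.normalCore := by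
    intro s
    obtain ⟨⟨s', q⟩, hq, rfl⟩ : s ∈ H.map (MonoidHom.fst S R) := hP ▸ Subgroup.mem_top s
    have h1 : (s' * x * s'⁻¹, q * m' * q⁻¹) ∈ H := by
      have := H.mul_mem (H.mul_mem hq hxH) (H.inv_mem hq)
      simpa using this
    obtain ⟨⟨y, n⟩, ⟨hyH, hyX⟩, hn⟩ := hm q
    obtain rfl : n = q * m' * q⁻¹ := hn
    have := fst_unique H hL h1 hyH
    change s' * x * s'⁻¹ ∈ X
    rw [this]
    exact hyX
  rw [hXcore, Subgroup.mem_bot] at hx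
  subst hx
  exact hxH

lemma reduce_of_comm [IsSimpleGroup S] (hS : ∀ a b : S, a * b = b * a) (hR : ExtendsHoms R S)
    (H : Subgroup (S × R)) (t : Multiset (Subgroup (S × R))) (ht : CoreTrivial (H ::ₘ t))
    (hL : H.comap (MonoidHom.inl S R) ≠ ⊤) (hP : H.map (MonoidHom.fst S R) = ⊤) :
    minPermDeg R + minPermDeg S ≤ degree (H ::ₘ t) := by
  replace hL := comap_inl_eq_bot H hL hP
  let M := H.map (MonoidHom.snd S R)
  have hex : ∀ m : M.normalCore, ∃ s : S, (s, (m : R)) ∈ H := by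
    rintro ⟨m, hm⟩
    obtain ⟨⟨s, m'⟩, h, rfl⟩ := M.normalCore_le hm
    exact ⟨s, h⟩
  choose φ hφ using hex
  let Φ : M.normalCore →* S :=
    { toFun := φ
      map_one' := fst_unique H hL (hφ 1) H.one_mem
      map_mul' := fun a b => fst_unique H hL (hφ (a * b)) (H.mul_mem (hφ a) (hφ b)) }
  obtain ⟨α, hα⟩ := hR _ (Subgroup.normalCore_normal M) Φ
  have hgraph : ∀ m ∈ M.normalCore, (α m, m) ∈ H := fun m hm => by
    have := hφ ⟨m, hm⟩
    rwa [show φ ⟨m, hm⟩ = α m from (hα ⟨m, hm⟩).symm] at this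
  -- Since `S` is central, conjugating by `(s, a)` has the same effect as conjugating by `(α a, a)`.
  have hconj : ∀ (s : S) (a r : R),
      (s, a) * (α r, r) * (s, a)⁻¹ = (α (a * r * a⁻¹), a * r * a⁻¹) := by
    intro s a r
    have h1 : s * α r * s⁻¹ = α r := by rw [hS s, mul_inv_cancel_right]
    have h2 : α a * α r * (α a)⁻¹ = α r := by rw [hS (α a), mul_inv_cancel_right]
    simp [h1, h2]
  have hHi : H.index = M.index * Nat.card S := by
    rw [index_eq_snd H, hL, Subgroup.index_bot]
  have hcard : minPermDeg S ≤ Nat.card S := by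
    simpa using minPermDeg_le_index (⊥ : Subgroup S) bot_ne_top
  have hcard2 : 1 < Nat.card S := Finite.one_lt_card
  refine exists_replacement (α.prod (MonoidHom.id R)) (fun a b h => (Prod.ext_iff.1 h).2)
    ?_ H t ht M ?_ _ ?_ ?_
  · rintro K r hr ⟨s, a⟩
    have : (α (a * r * a⁻¹), a * r * a⁻¹) ∈ K := hr a
    rw [← hconj s] at this
    exact this
  · rintro r hr ⟨s, a⟩
    have := hgraph _ ((Subgroup.normalCore_normal M).conj_mem r hr a)
    rw [← hconj s] at this
    exact this
  · rw [hHi]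
    exact hcard.trans (Nat.le_mul_of_pos_left _ (Nat.pos_of_ne_zero Subgroup.index_ne_zero_of_finite))
  · intro hM
    have := Subgroup.one_lt_index_of_ne_top hM
    rw [hHi]
    nlinarith

lemma minPermDeg_prod_simple [IsSimpleGroup S]
    (hR : (∀ a b : S, a * b = b * a) → ExtendsHoms R S) :
    minPermDeg (S × R) = minPermDeg S + minPermDeg R := by
  refine le_antisymm (minPermDeg_prod_le S R) ?_
  obtain ⟨s, hs, hdeg⟩ := exists_coreTrivial_degree_eq (S × R)
  obtain ⟨x, hx⟩ := exists_ne (1 : S)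
  obtain ⟨H, hHs, hxH⟩ : ∃ H ∈ s, ((x, 1) : S × R) ∉ H.normalCore := by
    by_contra! h
    exact hx (Prod.ext_iff.1 (hs _ h)).1
  have hL : H.comap (MonoidHom.inl S R) ≠ ⊤ := by
    intro h
    refine hxH ?_
    rintro ⟨a, b⟩
    have : a * x * a⁻¹ ∈ H.comap (MonoidHom.inl S R) := h ▸ Subgroup.mem_top _
    simpa using this
  obtain ⟨t, rfl⟩ := Multiset.exists_cons_of_mem hHs
  rw [← hdeg, add_comm]
  by_cases hP : H.map (MonoidHom.fst S R) = ⊤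
  · by_cases hS : ∀ a b : S, a * b = b * a
    · exact reduce_of_comm hS (hR hS) H t hs hL hP
    · exact reduce_of_noncomm hS H t hs hL hP
  · exact reduce_of_proper H t hs hP

end Prod

/-! ### Products indexed by `Fin r` -/

/-- `Fin.consEquiv` as a group isomorphism. -/
def consMulEquiv {r : ℕ} (S : Fin (r + 1) → Type) [∀ i, Group (S i)] :
    (S 0 × ∀ i : Fin r, S i.succ) ≃* ∀ i, S i :=
  MulEquiv.symm
    { (Fin.consEquiv S).symm with
      map_mul' := fun _ _ => rfl }

lemma extendsHoms_pi (Z : Type) [Group Z] (hZ : ∀ a b : Z, a * b = b * a) (r : ℕ)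
    (S : Fin r → Type) [∀ i, Group (S i)] (hsimple : ∀ i, IsSimpleGroup (S i)) :
    ExtendsHoms (∀ i, S i) Z := by
  induction r with
  | zero => exact ExtendsHoms.of_subsingleton _ _
  | succ r ih =>
    have := hsimple 0
    exact (ExtendsHoms.prod hZ (ih (fun i => S i.succ) fun i => hsimple i.succ)).congr
      (consMulEquiv S)

/-- The minimal faithful permutation degree of a direct product of finite
simple groups is the sum of their minimal faithful permutation degrees. -/
theorem minPermDeg_pi_simple (r : ℕ) (S : Fin r → Type)
    [∀ i, Group (S i)] [∀ i, Fintype (S i)] (hsimple : ∀ i, IsSimpleGroup (S i)) :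
    minPermDeg (∀ i, S i) = ∑ i, minPermDeg (S i) := by
  induction r with
  | zero =>
    have := minPermDeg_le_degree (G := ∀ i, S i) 0 (fun g _ => Subsingleton.elim g 1)
    simpa [degree] using this
  | succ r ih =>
    have := hsimple 0
    rw [← minPermDeg_congr (consMulEquiv S), Fin.sum_univ_succ,
      minPermDeg_prod_simple fun hZ =>
        extendsHoms_pi (S 0) hZ r (fun i => S i.succ) fun i => hsimple i.succ,
      ih (fun i => S i.succ) fun i => hsimple i.succ]
end

section
/- There exist functions f, g : ℕ → ℕ such that for every finite solvable group G of c-dimension at most k: the quotient G/F_2(G) contains an abelian subgroup of index at most f(k), and the order of G/F_3(G) is at most g(k). -/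
/-!
Write `F = F(G)`, `H = G / F` and `K = G / F_2(G) = H / F(H)`. The c-dimension enters only through
a bound on ranks: every elementary abelian `p`-subgroup `E` of `H` has order at most `p ^ (2 * k)`
(`card_elementary_le`). Everything afterwards is about finite solvable groups all of whose
elementary abelian sections are controlled in this way.

*Bounding the rank.* Let `Q` be a `p`-group normalizing a nilpotent `p'`-subgroup `R` and inducing
an elementary abelian group on it. Choose `Y < Q` maximal among the subgroups containing `C_Q(R)`
with `C_R(Y) ≠ C_R(Q)`. Every element of `Q` outside `Y` has on `C_R(Y)` only the fixed points
`C_R(Q)`, and a rank-two group with that property acts trivially on a nilpotent `p'`-group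
(`fixed_of_nilpotent`). Hence `|Q : Y| ≤ p`, while `C_G(Q) < C_G(Y)`, so iterating gives a chain of
centralizers at least as long as the rank (`coprime_chain`). To apply this to `E`, take a minimal
supplement `M` of `F` in `G`, so that `F ∩ M` consists of non-generators of `M` and the preimage of
`F(H)` in `M` is nilpotent. Lift `E` to a `p`-subgroup `Q` of `M`, and let it act on the `p'`-parts
of `F(M)` and of `F(G)`; the elements of `Q` centralizing both lie in `F`, so each of the two actions
contributes at most `p ^ k`.

*Sections of `p`-groups.* If the elementary abelian subgroups of a `p`-group `M` have order at most
`p ^ e`, a subgroup containing all `p`-th powers has index at most `p ^ (3 * e ^ 2 + e)`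
(`IsPGroup.index_le_of_forall_pow_mem`). With `A` a self-centralizing normal abelian subgroup, the
group `M / A` embeds in the units of `End A`, where on the congruence subgroup modulo `p ^ 2` the
`p`-th power map has fibres bounded by the `p`-torsion of `End A`. So bounds on elementary abelian
subgroups pass to sections, in particular to chief factors of `H`.

*Powers generate a nearly abelian subgroup.* For a solvable linear group of degree at most `r` there
is `m = m(r)` such that commutators of the subgroup generated by `m`-th powers are unipotent, a weak
form of Mal'cev's theorem (`exists_pow_unipotent`). Applied to the chief factors of `H`, it makes
`⁅H ^ m, H ^ m⁆` centralize each of them, so this subgroup is nilpotent (`exists_pow_nilpotent`) and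
lies in `F(H)`. Therefore the subgroup `B` of `K` generated by `m`-th powers is abelian and normal.

*The index.* The quotient `K / B` has exponent dividing `m`, so only primes up to `m` divide its
order, and each Sylow subgroup is bounded through a self-centralizing normal abelian subgroup
(`card_quotient_le`). This bounds the index of `B`; and `B ≤ F(K)`, so the same number bounds
`|G / F_3(G)|`.
-/


/-- The supremum of a set of normal subgroups is normal. -/
theorem normal_sSup' {G : Type*} [Group G] {S : Set (Subgroup G)}
    (h : ∀ H ∈ S, H.Normal) : (sSup S).Normal := by
  constructor
  intro n hn g
  have key : sSup S ≤ (sSup S).comap (MulEquiv.toMonoidHom (MulAut.conj g)) := by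
    apply sSup_le
    intro H hH x hx
    have : g * x * g⁻¹ ∈ H := (h H hH).conj_mem x hx g
    simp only [Subgroup.mem_comap, MulEquiv.coe_toMonoidHom, MulAut.conj_apply]
    exact le_sSup hH this
  have := key hn
  simpa only [Subgroup.mem_comap, MulEquiv.coe_toMonoidHom, MulAut.conj_apply] using this

/-- The Fitting subgroup `F(G)`: the join of all nilpotent normal subgroups of `G`. -/
def fittingSubgroup (G : Type*) [Group G] : Subgroup G :=
  sSup {H : Subgroup G | H.Normal ∧ Group.IsNilpotent H}

instance fittingSubgroup_normal (G : Type*) [Group G] : (fittingSubgroup G).Normal :=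
  normal_sSup' fun _ hH => hH.1

/-- The second Fitting subgroup `F_2(G)`: the full preimage in `G` of `F(G/F(G))`. -/
def fitting2 (G : Type*) [Group G] : Subgroup G :=
  (fittingSubgroup (G ⧸ fittingSubgroup G)).comap (QuotientGroup.mk' (fittingSubgroup G))

instance fitting2_normal (G : Type*) [Group G] : (fitting2 G).Normal :=
  (fittingSubgroup_normal _).comap _

/-- The third Fitting subgroup `F_3(G)`: the full preimage in `G` of `F(G/F_2(G))`. -/
def fitting3 (G : Type*) [Group G] : Subgroup G :=
  (fittingSubgroup (G ⧸ fitting2 G)).comap (QuotientGroup.mk' (fitting2 G))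

instance fitting3_normal (G : Type*) [Group G] : (fitting3 G).Normal :=
  (fittingSubgroup_normal _).comap _

open scoped commutatorElement

/-! ### Fixed points of coprime automorphisms -/

theorem pow_val_add {V : Type*} [Group V] {p : ℕ} [NeZero p] (c : V) (hc : c ^ p = 1)
    (i j : ZMod p) : c ^ (i + j).val = c ^ (i.val + j.val) := by
  rw [ZMod.val_add, ← pow_eq_pow_mod _ hc]

theorem pow_val_mul {V : Type*} [Group V] {p : ℕ} [NeZero p] (c : V) (hc : c ^ p = 1)
    (i j : ZMod p) : c ^ (i * j).val = c ^ (i.val * j.val) := by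
  rw [ZMod.val_mul, ← pow_eq_pow_mod _ hc]

theorem norm_fixed {V : Type*} [CommGroup V] {p : ℕ} [Fact p.Prime] (c : MulAut V)
    (hc : c ^ p = 1) (v : V) :
    c (∏ j : ZMod p, (c ^ j.val) v) = ∏ j : ZMod p, (c ^ j.val) v := by
  rw [map_prod]
  have h : ∀ j : ZMod p, c ((c ^ j.val) v) = (c ^ (j + 1).val) v := by
    intro j
    have h2 := pow_val_add c hc j 1
    have h1 : (1 : ZMod p).val = 1 := ZMod.val_one p
    rw [h2, h1, pow_succ']
    rfl
  simp_rw [h]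
  exact Fintype.prod_equiv (Equiv.addRight (1 : ZMod p)) _ _ (fun _ => rfl)

/-- In additive notation: the sum over `ZMod p × ZMod p` of the elements of `⟨a, b⟩`, plus `p` times
the identity, equals the sum of the norms of the `p + 1` subgroups of order `p`, those being
generated by `b` and by `a * b ^ i`. -/
theorem norm_identity {V : Type*} [CommGroup V] {p : ℕ} [Fact p.Prime] (a b : MulAut V)
    (hab : Commute a b) (hb : b ^ p = 1) (v : V) :
    (∏ i : ZMod p, ∏ j : ZMod p, ((a * b ^ i.val) ^ j.val) v) * (∏ i : ZMod p, (b ^ i.val) v)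
      = v ^ p * ∏ j : ZMod p, ∏ i : ZMod p, (a ^ j.val) ((b ^ i.val) v) := by
  classical
  rw [Finset.prod_comm]
  have h : ∀ i j : ZMod p, ((a * b ^ i.val) ^ j.val) v = (a ^ j.val) ((b ^ (i * j).val) v) := by
    intro i j
    rw [(hab.pow_right _).mul_pow, ← pow_mul, pow_val_mul b hb]
    rfl
  simp_rw [h]
  rw [← Finset.mul_prod_erase Finset.univ _ (Finset.mem_univ (0 : ZMod p)),
    ← Finset.mul_prod_erase Finset.univ
      (fun j : ZMod p => ∏ i : ZMod p, (a ^ j.val) ((b ^ i.val) v)) (Finset.mem_univ (0 : ZMod p))]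
  have h0 : ∏ i : ZMod p, (a ^ (0 : ZMod p).val) ((b ^ (i * 0).val) v) = v ^ p := by
    simp [ZMod.card]
  have h1 : ∏ i : ZMod p, (a ^ (0 : ZMod p).val) ((b ^ i.val) v) = ∏ i : ZMod p, (b ^ i.val) v := by
    simp
  have h2 : ∏ j ∈ Finset.univ.erase (0 : ZMod p), ∏ i : ZMod p, (a ^ j.val) ((b ^ (i * j).val) v)
      = ∏ j ∈ Finset.univ.erase (0 : ZMod p), ∏ i : ZMod p, (a ^ j.val) ((b ^ i.val) v) := by
    refine Finset.prod_congr rfl fun j hj => ?_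
    have hj0 : j ≠ 0 := Finset.ne_of_mem_erase hj
    exact Fintype.prod_equiv (Equiv.mulRight₀ j hj0) _ _ (fun _ => rfl)
  rw [h0, h1, h2, mul_assoc, mul_comm (∏ j ∈ _, _)]

/-- If a rank-two elementary abelian `p`-group `⟨a, b⟩` acts on an abelian group so that every one
of the `p + 1` generators `b`, `a * b ^ i` of its subgroups of order `p` fixes only points fixed by
the whole group, then all `p`-th powers are fixed. -/
theorem pow_fixed {V : Type*} [CommGroup V] {p : ℕ} [Fact p.Prime] (a b : MulAut V)
    (hab : Commute a b) (ha : a ^ p = 1) (hb : b ^ p = 1)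
    (h1 : ∀ i : ℕ, ∀ x, (a * b ^ i) x = x → a x = x ∧ b x = x)
    (h2 : ∀ x, b x = x → a x = x) (v : V) : a (v ^ p) = v ^ p ∧ b (v ^ p) = v ^ p := by
  have key := norm_identity a b hab hb v
  set C : Subgroup V :=
    { carrier := {x | a x = x ∧ b x = x}
      mul_mem' := by
        rintro x y ⟨hx, hx'⟩ ⟨hy, hy'⟩
        exact ⟨by rw [map_mul, hx, hy], by rw [map_mul, hx', hy']⟩
      one_mem' := ⟨map_one _, map_one _⟩
      inv_mem' := by
        rintro x ⟨hx, hx'⟩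
        exact ⟨by rw [map_inv, hx], by rw [map_inv, hx']⟩ } with hC
  have hNb : ∀ w : V, (∏ i : ZMod p, (b ^ i.val) w) ∈ C := fun w =>
    ⟨h2 _ (norm_fixed b hb w), norm_fixed b hb w⟩
  have hN1 : ∀ i : ZMod p, (∏ j : ZMod p, ((a * b ^ i.val) ^ j.val) v) ∈ C := by
    intro i
    refine h1 i.val _ (norm_fixed _ ?_ v)
    rw [(hab.pow_right _).mul_pow, ha, ← pow_mul, mul_comm, pow_mul, hb, one_pow, one_mul]
  have hC2 : ∏ j : ZMod p, ∏ i : ZMod p, (a ^ j.val) ((b ^ i.val) v) ∈ C := by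
    refine prod_mem fun j _ => ?_
    rw [← map_prod]
    have hw := hNb v
    generalize (∏ i : ZMod p, (b ^ i.val) v) = w at hw
    have : (a ^ j.val) w = w := by
      induction j.val with
      | zero => rfl
      | succ n ih => rw [pow_succ, MulAut.mul_apply, hw.1, ih]
    rw [this]
    exact hw
  have : v ^ p ∈ C := by
    rw [← mul_inv_eq_iff_eq_mul] at key
    rw [← key]
    exact mul_mem (mul_mem (prod_mem fun i _ => hN1 i) (hNb v)) (inv_mem hC2)
  exact this

/-- Coprime action: a fixed coset of an invariant subgroup contains a fixed point. -/
theorem exists_fixed_in_coset {R : Type*} [Group R] [Finite R] {p : ℕ} [Fact p.Prime]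
    (hp : ¬ p ∣ Nat.card R) (c : MulAut R) (hc : c ^ p = 1) (N : Subgroup R)
    (hN : ∀ n ∈ N, c n ∈ N) (x : R) (hx : x⁻¹ * c x ∈ N) : ∃ n ∈ N, c (x * n) = x * n := by
  classical
  have : Fintype N := Fintype.ofFinite N
  let f : N → N := fun n => ⟨x⁻¹ * c (x * n), by
    rw [map_mul, ← mul_assoc]; exact mul_mem hx (hN _ n.2)⟩
  have hf : Function.Injective f := by
    intro m n h
    have := congrArg Subtype.val h
    simp only [f, mul_right_inj, EmbeddingLike.apply_eq_iff_eq] at this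
    exact Subtype.ext this
  -- `c` permutes the coset `x N`; since its order divides `p` and `p ∤ |N|`, there is a fixed point
  let σ : Equiv.Perm N := Equiv.ofBijective f (Finite.injective_iff_bijective.mp hf)
  have hσ : ∀ (j : ℕ) (n : N), (((σ ^ j) n : N) : R) = x⁻¹ * (c ^ j) (x * n) := by
    intro j
    induction j with
    | zero => intro n; simp
    | succ j ih =>
      intro n
      rw [pow_succ', Equiv.Perm.mul_apply]
      change x⁻¹ * c (x * ((σ ^ j) n : N)) = _
      rw [ih, mul_inv_cancel_left, pow_succ', MulAut.mul_apply]
  have hcard : ¬ p ∣ Fintype.card N := by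
    rw [← Nat.card_eq_fintype_card]
    exact fun h => hp (h.trans (Subgroup.card_subgroup_dvd_card N))
  obtain ⟨n, hn⟩ := Equiv.Perm.exists_fixed_point_of_prime (n := 1) hcard (σ := σ) (by
    ext n
    rw [pow_one, hσ, hc]
    simp)
  refine ⟨n, n.2, ?_⟩
  have := congrArg Subtype.val hn
  change x⁻¹ * c (x * n) = n at this
  exact inv_mul_eq_iff_eq_mul.mp this


/-- The action of automorphisms on the quotient by the center. -/
def quotCenterAut (R : Type*) [Group R] : MulAut R →* MulAut (R ⧸ Subgroup.center R) where
  toFun e := QuotientGroup.congr _ _ e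
    (Subgroup.characteristic_iff_map_eq.mp inferInstance e)
  map_one' := by
    ext x
    induction x using QuotientGroup.induction_on
    rfl
  map_mul' e f := by
    ext x
    induction x using QuotientGroup.induction_on
    rfl

theorem quotCenterAut_mk {R : Type*} [Group R] (e : MulAut R) (x : R) :
    quotCenterAut R e (x : R ⧸ Subgroup.center R) = ((e x : R) : R ⧸ Subgroup.center R) := rfl

open scoped IsMulCommutative in
/-- A rank-two elementary abelian `p`-group `⟨a, b⟩` acts trivially on a nilpotent `p'`-group as
soon as every one of its subgroups of order `p` has the same fixed points as the whole group. -/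
theorem fixed_of_nilpotent {p : ℕ} [Fact p.Prime] (R : Type) [Group R] [Group.IsNilpotent R]
    [Finite R] (hp : ¬ p ∣ Nat.card R) (a b : MulAut R)
    (hab : Commute a b) (ha : a ^ p = 1) (hb : b ^ p = 1)
    (h1 : ∀ i : ℕ, ∀ x, (a * b ^ i) x = x → a x = x ∧ b x = x)
    (h2 : ∀ x, b x = x → a x = x) : ∀ x, a x = x ∧ b x = x := by
  revert hp a b
  revert ‹Finite R›
  refine Group.nilpotent_center_quotient_ind (P := fun R _ _ => ∀ [Finite R], ¬ p ∣ Nat.card R →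
    ∀ a b : MulAut R, Commute a b → a ^ p = 1 → b ^ p = 1 →
    (∀ i : ℕ, ∀ x, (a * b ^ i) x = x → a x = x ∧ b x = x) →
    (∀ x, b x = x → a x = x) → ∀ x, a x = x ∧ b x = x) R ?_ ?_
  · intro G _ _ _ _ a b _ _ _ _ _ x
    exact ⟨Subsingleton.elim _ _, Subsingleton.elim _ _⟩
  · intro R _ _ ih _ hp a b hab ha hb h1 h2
    -- the center: apply the norm identity and use that `p`-th powers are surjective there
    have hcen : ∀ z ∈ Subgroup.center R, a z = z ∧ b z = z := by
      intro z hz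
      let φ := MulAut.characteristic (Subgroup.center R)
      have hφ : ∀ (e : MulAut R) (w : Subgroup.center R), ((φ e w : Subgroup.center R) : R) = e w :=
        fun e w => rfl
      have hpow := pow_fixed (V := ↥(Subgroup.center R)) (p := p) (φ a) (φ b) (hab.map φ)
        (by rw [← map_pow, ha, map_one]) (by rw [← map_pow, hb, map_one])
        (fun i w hw => by
          rw [← map_pow, ← map_mul] at hw
          have := h1 i w (by rw [← hφ, hw])
          exact ⟨Subtype.ext (by rw [hφ, this.1]), Subtype.ext (by rw [hφ, this.2])⟩)
        (fun w hw => Subtype.ext (by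
          rw [hφ]; exact h2 w (by rw [← hφ, hw])))
      have hcop : (Nat.card (Subgroup.center R)).Coprime p := by
        rw [Nat.coprime_comm, Nat.Prime.coprime_iff_not_dvd Fact.out]
        exact fun h => hp (h.trans (Subgroup.card_subgroup_dvd_card _))
      obtain ⟨w, hw⟩ := (powCoprime hcop).surjective ⟨z, hz⟩
      have hw' : w ^ p = ⟨z, hz⟩ := hw
      have := hpow w
      rw [hw'] at this
      exact ⟨by simpa [hφ] using congrArg Subtype.val this.1,
        by simpa [hφ] using congrArg Subtype.val this.2⟩
    -- the quotient by the center: fixed points lift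
    let ψ := quotCenterAut R
    have hlift : ∀ c : MulAut R, c ^ p = 1 → ∀ x : R, ψ c (x : R ⧸ Subgroup.center R) = x →
        ∃ n ∈ Subgroup.center R, c (x * n) = x * n := by
      intro c hc x hx
      refine exists_fixed_in_coset hp c hc _ (fun n hn => ?_) x ?_
      · exact (Subgroup.characteristic_iff_le_comap.mp inferInstance c) hn
      · exact QuotientGroup.eq.mp hx.symm
    have hred : ∀ x n : R, n ∈ Subgroup.center R → a (x * n) = x * n ∧ b (x * n) = x * n →
        a x = x ∧ b x = x := by
      intro x n hn h
      rw [map_mul, map_mul, (hcen n hn).1, (hcen n hn).2] at h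
      exact ⟨mul_right_cancel h.1, mul_right_cancel h.2⟩
    have hcp : ∀ i : ℕ, (a * b ^ i) ^ p = 1 := by
      intro i
      rw [(hab.pow_right _).mul_pow, ha, ← pow_mul, mul_comm, pow_mul, hb, one_pow, one_mul]
    have hq := ih (by
        intro h
        exact hp (h.trans (Subgroup.card_quotient_dvd_card _))) (ψ a) (ψ b) (hab.map ψ)
      (by rw [← map_pow, ha, map_one]) (by rw [← map_pow, hb, map_one])
      (by
        intro i x
        induction x using QuotientGroup.induction_on with
        | _ x =>
          intro hx
          rw [← map_pow, ← map_mul] at hx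
          obtain ⟨n, hn, h⟩ := hlift _ (hcp i) x hx
          have := hred x n hn (h1 i _ h)
          exact ⟨by rw [quotCenterAut_mk, this.1], by rw [quotCenterAut_mk, this.2]⟩)
      (by
        intro x
        induction x using QuotientGroup.induction_on with
        | _ x =>
          intro hx
          obtain ⟨n, hn, h⟩ := hlift _ hb x hx
          have := hred x n hn ⟨h2 _ h, h⟩
          rw [quotCenterAut_mk, this.1])
    intro x
    obtain ⟨n, hn, h⟩ := hlift b hb x (hq x).2
    exact hred x n hn ⟨h2 _ h, h⟩

/-! ### Chains of centralizers from coprime action -/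

theorem index_le_of_sup_zpowers {Q : Type*} [Group Q] (Y : Subgroup Q) [Y.Normal] {p : ℕ}
    (hp : 0 < p) (b : Q) (hb : b ^ p ∈ Y) (h : Y ⊔ Subgroup.zpowers b = ⊤) : Y.index ≤ p := by
  have h1 : Subgroup.zpowers (b : Q ⧸ Y) = ⊤ := by
    have h2 := congrArg (Subgroup.map (QuotientGroup.mk' Y)) h
    rw [Subgroup.map_sup, QuotientGroup.map_mk'_self, bot_sup_eq, MonoidHom.map_zpowers,
      Subgroup.map_top_of_surjective _ (QuotientGroup.mk'_surjective Y)] at h2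
    exact h2
  have h3 : ((b : Q ⧸ Y)) ^ p = 1 := by
    rw [← QuotientGroup.mk_pow]
    exact (QuotientGroup.eq_one_iff _).mpr hb
  rw [Subgroup.index_eq_card, ← Subgroup.card_top, ← h1, Nat.card_zpowers]
  exact orderOf_le_of_pow_eq_one hp h3

theorem isNilpotent_of_le {G : Type*} [Group G] {H K : Subgroup G} (h : H ≤ K)
    (hK : Group.IsNilpotent K) : Group.IsNilpotent H :=
  Group.nilpotent_of_mulEquiv (Subgroup.subgroupOfEquivOfLe h)

theorem chain_cons {G : Type*} [Group G] {n : ℕ} (S : Set G) (T : Fin (n + 1) → Set G)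
    (hT : StrictMono fun i => Subgroup.centralizer (T i))
    (h : Subgroup.centralizer S < Subgroup.centralizer (T 0)) :
    StrictMono fun i => Subgroup.centralizer ((Fin.cons S T : Fin (n + 2) → Set G) i) := by
  rw [Fin.strictMono_iff_lt_succ]
  intro i
  refine Fin.cases ?_ (fun j => ?_) i
  · simpa using h
  · have := hT (Fin.castSucc_lt_succ (i := j))
    simpa [← Fin.succ_castSucc] using this

/-- Let `Q` normalize the nilpotent `p'`-subgroup `R` and induce an elementary abelian `p`-group on
it. Then there is a chain of centralizers, starting with `C_G(Q)`, whose length is at least the rank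
of the induced group. The bound `N` on the order of `Q` is the induction parameter. -/
theorem coprime_chain {G : Type} [Group G] [Finite G] {p : ℕ} [Fact p.Prime] (R : Subgroup G)
    [Group.IsNilpotent R] (hp : ¬ p ∣ Nat.card R) (N : ℕ) : ∀ Q : Subgroup G, Nat.card Q ≤ N →
    Q ≤ Subgroup.normalizer (R : Set G) →
    (∀ x ∈ Q, ∀ y ∈ Q, ⁅x, y⁆ ∈ Subgroup.centralizer (R : Set G)) →
    (∀ x ∈ Q, x ^ p ∈ Subgroup.centralizer (R : Set G)) →
    ∃ (n : ℕ) (T : Fin (n + 1) → Set G), (StrictMono fun i => Subgroup.centralizer (T i)) ∧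
      T 0 = Q ∧ (Subgroup.centralizer (R : Set G)).relIndex Q ≤ p ^ n := by
  induction N with
  | zero =>
    intro Q hQ
    have := Nat.card_pos (α := Q)
    omega
  | succ N ih =>
    intro Q hcard hQR hcomm hpow
    by_cases hc : Q ≤ Subgroup.centralizer (R : Set G)
    · refine ⟨0, fun _ => Q, (fun i j h => by exact absurd h (by omega)), rfl, ?_⟩
      rw [Subgroup.relIndex_eq_one.mpr hc]
      simp
    set CR := Subgroup.centralizer (R : Set G) with hCR
    -- the subgroups of `Q` with more fixed points in `R` than `Q`; a maximal one, `Y`, has index at most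
    -- `p` in `Q`, and the chain for `Y` is extended by `C_G(Q) < C_G(Y)`
    let good : Set (Subgroup G) := {Y | CR ⊓ Q ≤ Y ∧ Y ≤ Q ∧
      ∃ r ∈ R, r ∈ Subgroup.centralizer (Y : Set G) ∧ r ∉ Subgroup.centralizer (Q : Set G)}
    have hne : good.Nonempty := by
      refine ⟨CR ⊓ Q, le_rfl, inf_le_right, ?_⟩
      by_contra hcon
      push Not at hcon
      refine hc fun q hq => ?_
      rw [hCR, Subgroup.mem_centralizer_iff]
      intro r hr
      have := hcon r hr (by
        rw [Subgroup.mem_centralizer_iff]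
        intro c hcc
        exact (Subgroup.mem_centralizer_iff.mp hcc.1 r hr).symm)
      exact (Subgroup.mem_centralizer_iff.mp this q hq).symm
    obtain ⟨Y, hYm⟩ := (Set.toFinite good).exists_maximal hne
    obtain ⟨⟨hY1, hYQ, r, hrR, hrY, hrQ⟩, hmax⟩ := hYm
    have hcent : Subgroup.centralizer (Q : Set G) < Subgroup.centralizer (Y : Set G) :=
      lt_of_le_of_ne (Subgroup.centralizer_le hYQ) (fun h => hrQ (h ▸ hrY))
    have hYneQ : Y ≠ Q := by
      rintro rfl
      exact hrQ hrY
    have hYlt : Y < Q := lt_of_le_of_ne hYQ hYneQ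
    have hcardY : Nat.card Y ≤ N := by
      have : Nat.card Y < Nat.card Q := Set.Finite.card_lt_card (Set.toFinite _) hYlt
      omega
    obtain ⟨n, T, hT, hT0, hidx⟩ := ih Y hcardY (hYQ.trans hQR)
      (fun x hx y hy => hcomm x (hYQ hx) y (hYQ hy)) (fun x hx => hpow x (hYQ hx))
    have hYn : ∀ q ∈ Q, ∀ y ∈ Y, q * y * q⁻¹ ∈ Y := by
      intro q hq y hy
      have h1 : ⁅q, y⁆ ∈ Y := hY1 ⟨hcomm q hq y (hYQ hy), by
        rw [commutatorElement_def]
        change _ ∈ Q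
        exact mul_mem (mul_mem (mul_mem hq (hYQ hy)) (inv_mem hq)) (inv_mem (hYQ hy))⟩
      have : q * y * q⁻¹ = ⁅q, y⁆ * y := by simp [commutatorElement_def]
      rw [this]
      exact mul_mem h1 hy
    have hYnorm : (Y.subgroupOf Q).Normal := ⟨fun y hy q => by
      rw [Subgroup.mem_subgroupOf] at hy ⊢
      exact hYn q q.2 y hy⟩
    -- elements of `C_R(Y)` fixed by some `c ∈ Q \ Y` are centralized by `Q`
    have hfix : ∀ c ∈ Q, c ∉ Y → ∀ s ∈ R, s ∈ Subgroup.centralizer (Y : Set G) → c * s = s * c →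
        s ∈ Subgroup.centralizer (Q : Set G) := by
      intro c hcQ hcY s hsR hsY hcs
      by_contra hsQ
      have hgood : Y ⊔ Subgroup.zpowers c ∈ good := by
        refine ⟨hY1.trans le_sup_left, sup_le hYQ (by simpa using hcQ), s, hsR, ?_, hsQ⟩
        have h1 : Y ≤ Subgroup.centralizer {s} := by
          intro y hy
          rw [Subgroup.mem_centralizer_singleton_iff]
          exact Subgroup.mem_centralizer_iff.mp hsY y hy
        have h2 : Subgroup.zpowers c ≤ Subgroup.centralizer {s} := by
          rw [Subgroup.zpowers_le, Subgroup.mem_centralizer_singleton_iff]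
          exact hcs
        rw [Subgroup.mem_centralizer_iff]
        intro y hy
        exact Subgroup.mem_centralizer_singleton_iff.mp (sup_le h1 h2 hy)
      exact hcY (hmax hgood le_sup_left
        ((le_sup_right : _ ≤ Y ⊔ Subgroup.zpowers c) (Subgroup.mem_zpowers c)))
    obtain ⟨b, hbQ, hbY⟩ := SetLike.exists_of_lt hYlt
    -- otherwise `Q / Y` has rank at least two, and `fixed_of_nilpotent` applies to `C_R(Y)`
    have htop : Y.subgroupOf Q ⊔ Subgroup.zpowers (⟨b, hbQ⟩ : Q) = ⊤ := by
      by_contra hntop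
      obtain ⟨a, -, ha⟩ := SetLike.exists_of_lt (lt_top_iff_ne_top.mpr hntop)
      let R₁ : Subgroup G := R ⊓ Subgroup.centralizer (Y : Set G)
      have hR1n : Q ≤ Subgroup.normalizer (R₁ : Set G) := by
        have key : ∀ q ∈ Q, ∀ s ∈ R₁, q * s * q⁻¹ ∈ R₁ := by
          intro q hq s hs
          refine ⟨(Subgroup.mem_normalizer_iff.mp (hQR hq) s).mp hs.1, ?_⟩
          change _ ∈ Subgroup.centralizer (Y : Set G)
          rw [Subgroup.mem_centralizer_iff]
          intro y hy
          have h1 := hYn q⁻¹ (inv_mem hq) y hy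
          have h2 := Subgroup.mem_centralizer_iff.mp hs.2 _ h1
          rw [inv_inv] at h2
          calc y * (q * s * q⁻¹) = q * (q⁻¹ * y * q * s) * q⁻¹ := by group
            _ = q * (s * (q⁻¹ * y * q)) * q⁻¹ := by rw [h2]
            _ = q * s * q⁻¹ * y := by group
        intro q hq
        rw [Subgroup.mem_normalizer_iff]
        intro s
        refine ⟨key q hq s, fun h => ?_⟩
        have := key q⁻¹ (inv_mem hq) _ h
        simpa [mul_assoc] using this
      have : Group.IsNilpotent R₁ :=
        isNilpotent_of_le inf_le_left ‹Group.IsNilpotent R›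
      let φ : Q →* MulAut R₁ :=
        (Subgroup.normalizerMonoidHom R₁).comp (Subgroup.inclusion hR1n)
      have hφ : ∀ (q : Q) (s : R₁), ((φ q s : R₁) : G) = q * s * (q : G)⁻¹ := fun q s => rfl
      have hφ1 : ∀ q : Q, (q : G) ∈ CR → φ q = 1 := by
        intro q hq
        ext s
        rw [hφ]
        have := Subgroup.mem_centralizer_iff.mp hq s s.2.1
        simp [← this]
      have hfixφ : ∀ c : Q, (c : G) ∉ Y → ∀ s : R₁, φ c s = s → ∀ q : Q, φ q s = s := by
        intro c hc s hs q
        have h0 : (c : G) * s = s * c := by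
          have := congrArg Subtype.val hs
          rw [hφ] at this
          exact mul_inv_eq_iff_eq_mul.mp this
        have h1 := hfix c c.2 hc s s.2.1 s.2.2 h0
        have h2 := Subgroup.mem_centralizer_iff.mp h1 q q.2
        apply Subtype.ext
        rw [hφ, h2]
        simp
      have hcardR1 : ¬ p ∣ Nat.card R₁ :=
        fun h => hp (h.trans (Subgroup.card_dvd_of_le inf_le_left))
      have hfinal := fixed_of_nilpotent R₁ hcardR1 (φ a) (φ ⟨b, hbQ⟩)
        (by
          rw [commute_iff_eq, ← map_mul, ← map_mul]
          have : φ ⁅a, ⟨b, hbQ⟩⁆ = 1 := hφ1 _ (hcomm a a.2 b hbQ)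
          rw [map_commutatorElement, commutatorElement_eq_one_iff_mul_comm] at this
          rw [map_mul, map_mul, this])
        (by rw [← map_pow]; exact hφ1 _ (hpow a a.2))
        (by rw [← map_pow]; exact hφ1 _ (hpow b hbQ))
        (by
          intro i s hs
          rw [← map_pow, ← map_mul] at hs
          have hnot : ((a * ⟨b, hbQ⟩ ^ i : Q) : G) ∉ Y := by
            intro hmem
            apply ha
            have : a = (a * ⟨b, hbQ⟩ ^ i) * ((⟨b, hbQ⟩ : Q) ^ i)⁻¹ := by simp
            rw [this]
            exact mul_mem (Subgroup.mem_sup_left hmem)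
              (Subgroup.mem_sup_right (inv_mem (Subgroup.npow_mem_zpowers _ _)))
          exact ⟨hfixφ _ hnot s hs _, hfixφ _ hnot s hs _⟩)
        (fun s hs => hfixφ ⟨b, hbQ⟩ hbY s hs _)
      exact hrQ (hfix b hbQ hbY r hrR hrY (by
        have := congrArg Subtype.val (hfinal ⟨r, hrR, hrY⟩).2
        rw [hφ] at this
        exact mul_inv_eq_iff_eq_mul.mp this))
    have hidx2 : Y.relIndex Q ≤ p := by
      refine index_le_of_sup_zpowers (Y.subgroupOf Q) (Nat.Prime.pos Fact.out) ⟨b, hbQ⟩ ?_ htop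
      rw [Subgroup.mem_subgroupOf]
      exact hY1 ⟨hpow b hbQ, pow_mem hbQ p⟩
    refine ⟨n + 1, Fin.cons (Q : Set G) T, chain_cons _ T hT (by rw [hT0]; exact hcent), rfl, ?_⟩
    have h1 := Subgroup.relIndex_mul_relIndex _ _ _ hY1 hYQ
    have h2 : (CR ⊓ Q).relIndex Y = CR.relIndex Y := by
      rw [← Subgroup.inf_relIndex_right, ← Subgroup.inf_relIndex_right CR Y, inf_assoc,
        inf_eq_right.mpr hYQ]
    rw [h2, Subgroup.inf_relIndex_right] at h1
    rw [← h1, pow_succ]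
    exact Nat.mul_le_mul hidx hidx2

theorem coprime_relIndex_le {G : Type} [Group G] [Finite G] {p k : ℕ} [Fact p.Prime]
    (hCD : ∀ (m : ℕ) (S : Fin (m + 1) → Set G),
        StrictMono (fun i => Subgroup.centralizer (S i)) → m ≤ k)
    (R : Subgroup G) [Group.IsNilpotent R] (hp : ¬ p ∣ Nat.card R) (Q : Subgroup G)
    (hQR : Q ≤ Subgroup.normalizer (R : Set G))
    (hcomm : ∀ x ∈ Q, ∀ y ∈ Q, ⁅x, y⁆ ∈ Subgroup.centralizer (R : Set G))
    (hpow : ∀ x ∈ Q, x ^ p ∈ Subgroup.centralizer (R : Set G)) :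
    (Subgroup.centralizer (R : Set G)).relIndex Q ≤ p ^ k := by
  obtain ⟨n, T, hT, -, h⟩ := coprime_chain R hp _ Q le_rfl hQR hcomm hpow
  exact h.trans (Nat.pow_le_pow_right (Nat.Prime.pos Fact.out) (hCD n T hT))

/-! ### `p`-cores and the Fitting subgroup -/

theorem isNilpotent_of_lcs {G : Type*} [Group G] (D : Subgroup G) (n : ℕ)
    (h : D.lowerCentralSeries n = ⊥) : Group.IsNilpotent D := by
  rw [Subgroup.nilpotent_iff_lowerCentralSeries]
  refine ⟨n, ?_⟩
  have := Subgroup.top_subtype_lowerCentralSeries D n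
  rw [h] at this
  exact (Subgroup.map_eq_bot_iff_of_injective _ D.subtype_injective).mp this

/-- The `p`-core of a group: the join of all its normal `p`-subgroups. -/
def pcore (p : ℕ) (G : Type*) [Group G] : Subgroup G :=
  sSup {H : Subgroup G | H.Normal ∧ IsPGroup p H}

instance pcore_normal (p : ℕ) (G : Type*) [Group G] : (pcore p G).Normal :=
  normal_sSup' fun _ hH => hH.1

theorem isPGroup_pcore (p : ℕ) (G : Type*) [Group G] : IsPGroup p (pcore p G) :=
  Sylow.sSup_of_normal _ (fun _ h => h.2) (fun _ h => h.1)

theorem le_pcore {p : ℕ} {G : Type*} [Group G] {H : Subgroup G} (h1 : H.Normal)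
    (h2 : IsPGroup p H) : H ≤ pcore p G := le_sSup ⟨h1, h2⟩

theorem pcore_commute {p q : ℕ} (hp : p.Prime) (hq : q.Prime) (hpq : p ≠ q) {G : Type*} [Group G]
    {x y : G} (hx : x ∈ pcore p G) (hy : y ∈ pcore q G) : Commute x y := by
  have : Fact p.Prime := ⟨hp⟩
  have : Fact q.Prime := ⟨hq⟩
  exact Subgroup.commute_of_normal_of_disjoint _ _ inferInstance inferInstance
    (IsPGroup.disjoint_of_ne _ _ hpq _ _ (isPGroup_pcore p G) (isPGroup_pcore q G)) x y hx hy

/-- The join of the `p`-cores for `p` in a finite set of primes. -/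
def pcoreSup (s : Finset ℕ) (G : Type*) [Group G] : Subgroup G := ⨆ q : s, pcore q G

instance pcoreSup_normal (s : Finset ℕ) (G : Type*) [Group G] : (pcoreSup s G).Normal := by
  unfold pcoreSup
  exact normal_sSup' (by rintro _ ⟨q, rfl⟩; exact pcore_normal _ _)

/-- The `p`-cores for distinct primes commute, so their join is the image of the direct product. -/
theorem exists_pi_surjective_pcoreSup (s : Finset ℕ) (hs : ∀ q ∈ s, q.Prime) (G : Type*)
    [Group G] : ∃ f : (∀ q : s, pcore q G) →* pcoreSup s G, Function.Surjective f := by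
  have hcomm : Pairwise fun i j : s => ∀ x y : G, x ∈ pcore i G → y ∈ pcore j G → Commute x y :=
    fun i j hij x y hx hy => pcore_commute (hs i i.2) (hs j j.2)
      (fun h => hij (Subtype.ext h)) hx hy
  have h := Subgroup.noncommPiCoprod_range (hcomm := hcomm)
  unfold pcoreSup
  rw [← h]
  exact ⟨_, MonoidHom.rangeRestrict_surjective _⟩

theorem isNilpotent_pcoreSup (s : Finset ℕ) (hs : ∀ q ∈ s, q.Prime) (G : Type*) [Group G]
    [Finite G] : Group.IsNilpotent (pcoreSup s G) := by
  obtain ⟨f, hf⟩ := exists_pi_surjective_pcoreSup s hs G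
  have : ∀ q : s, Group.IsNilpotent (pcore q G) := fun q => by
    have : Fact (q : ℕ).Prime := ⟨hs q q.2⟩
    exact (isPGroup_pcore q G).isNilpotent
  exact Group.nilpotent_of_surjective f hf

theorem not_dvd_card_pcoreSup (s : Finset ℕ) (hs : ∀ q ∈ s, q.Prime) (G : Type*) [Group G]
    [Finite G] {p : ℕ} (hp : p.Prime) (hps : p ∉ s) : ¬ p ∣ Nat.card (pcoreSup s G) := by
  obtain ⟨f, hf⟩ := exists_pi_surjective_pcoreSup s hs G
  intro h
  have h1 := h.trans (Subgroup.card_dvd_of_surjective f hf)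
  rw [Nat.card_pi, hp.prime.dvd_finsetProd_iff] at h1
  obtain ⟨q, -, hq⟩ := h1
  have : Fact (q : ℕ).Prime := ⟨hs q q.2⟩
  obtain ⟨n, hn⟩ := IsPGroup.iff_card.mp (isPGroup_pcore q G)
  rw [hn] at hq
  have := (Nat.prime_dvd_prime_iff_eq hp (hs q q.2)).mp (hp.dvd_of_dvd_pow hq)
  exact hps (this ▸ q.2)

theorem sylow_le_pcore {G : Type*} [Group G] [Finite G] {H : Subgroup G} (hH : H.Normal)
    (hn : Group.IsNilpotent H) {p : ℕ} [Fact p.Prime] (P : Sylow p H) :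
    (P : Subgroup H).map H.subtype ≤ pcore p G := by
  have h := ((Group.isNilpotent_of_finite_tfae (G := H)).out 0 3).mp hn
  have hP : (P : Subgroup H).Normal := h p inferInstance P
  have hc : (P : Subgroup H).Characteristic := P.characteristic_of_normal hP
  exact le_pcore inferInstance (P.2.map _)

theorem fittingSubgroup_le (G : Type*) [Group G] [Finite G] :
    fittingSubgroup G ≤ pcoreSup (Nat.card G).primeFactors G := by
  refine sSup_le ?_
  rintro H ⟨hH, hn⟩
  rw [← Subgroup.subgroupOf_eq_top, ← Subgroup.index_eq_one]
  by_contra hidx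
  obtain ⟨p, hp, hdvd⟩ := Nat.exists_prime_and_dvd hidx
  have : Fact p.Prime := ⟨hp⟩
  obtain ⟨P⟩ : Nonempty (Sylow p H) := inferInstance
  have hpG : p ∈ (Nat.card G).primeFactors := by
    refine Nat.mem_primeFactors.mpr ⟨hp, ?_, Nat.card_pos.ne'⟩
    exact hdvd.trans ((Subgroup.index_dvd_card _).trans (Subgroup.card_subgroup_dvd_card _))
  have hle : (P : Subgroup H) ≤ (pcoreSup (Nat.card G).primeFactors G).subgroupOf H := by
    have h1 := sylow_le_pcore hH hn P
    have h2 : pcore p G ≤ pcoreSup (Nat.card G).primeFactors G :=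
      le_iSup (fun q : (Nat.card G).primeFactors => pcore q G) ⟨p, hpG⟩
    exact Subgroup.map_le_iff_le_comap.mp (h1.trans h2)
  exact P.not_dvd_index (hdvd.trans (Subgroup.index_dvd_of_le hle))

/-- Fitting's theorem for finite groups. -/
theorem isNilpotent_fittingSubgroup (G : Type*) [Group G] [Finite G] :
    Group.IsNilpotent (fittingSubgroup G) :=
  isNilpotent_of_le (fittingSubgroup_le G)
    (isNilpotent_pcoreSup _ (fun _ => Nat.prime_of_mem_primeFactors) G)

theorem pcore_le_fittingSubgroup (G : Type*) [Group G] [Finite G] {p : ℕ} (hp : p.Prime) :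
    pcore p G ≤ fittingSubgroup G := by
  have : Fact p.Prime := ⟨hp⟩
  exact le_sSup ⟨inferInstance, (isPGroup_pcore p G).isNilpotent⟩

theorem pcoreSup_le_fittingSubgroup (s : Finset ℕ) (hs : ∀ q ∈ s, q.Prime) (G : Type*) [Group G]
    [Finite G] : pcoreSup s G ≤ fittingSubgroup G :=
  iSup_le fun q => pcore_le_fittingSubgroup G (hs q q.2)

theorem fittingSubgroup_le_sup (G : Type*) [Group G] [Finite G] (p : ℕ) :
    fittingSubgroup G ≤ pcore p G ⊔ pcoreSup ((Nat.card G).primeFactors.erase p) G := by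
  refine (fittingSubgroup_le G).trans (iSup_le fun q => ?_)
  by_cases h : (q : ℕ) = p
  · rw [h]
    exact le_sup_left
  · refine le_trans ?_ le_sup_right
    exact le_iSup (fun q : ((Nat.card G).primeFactors.erase p : Finset ℕ) => pcore q G)
      ⟨q, Finset.mem_erase.mpr ⟨h, q.2⟩⟩

theorem pcore_commute_pcoreSup {G : Type*} [Group G] {p : ℕ} (hp : p.Prime) {s : Finset ℕ}
    (hs : ∀ q ∈ s, q.Prime) (hps : p ∉ s) {x : G} (hx : x ∈ pcore p G) :
    x ∈ Subgroup.centralizer (pcoreSup s G : Set G) := by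
  have : pcoreSup s G ≤ Subgroup.centralizer {x} := by
    refine iSup_le fun q y hy => ?_
    rw [Subgroup.mem_centralizer_singleton_iff]
    exact (pcore_commute hp (hs q q.2) (fun h => hps (h ▸ q.2)) hx hy).symm
  rw [Subgroup.mem_centralizer_iff]
  intro y hy
  exact Subgroup.mem_centralizer_singleton_iff.mp (this hy)

/-- The `p`-subgroups of the Fitting subgroup lie in the `p`-core. -/
theorem le_pcore_of_le_fitting {G : Type*} [Group G] [Finite G] {p : ℕ} [Fact p.Prime]
    {X : Subgroup G} (hX : IsPGroup p X) (hXF : X ≤ fittingSubgroup G) : X ≤ pcore p G := by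
  have h1 : IsPGroup p (X.subgroupOf (fittingSubgroup G)) :=
    hX.comap_of_injective _ (Subgroup.subtype_injective _)
  obtain ⟨P, hP⟩ := h1.exists_le_sylow
  have h2 := sylow_le_pcore (fittingSubgroup_normal G) (isNilpotent_fittingSubgroup G) P
  refine le_trans ?_ h2
  intro x hx
  exact ⟨⟨x, hXF hx⟩, hP (show _ ∈ X from hx), rfl⟩

/-- In a finite solvable group the Fitting subgroup contains its centralizer `C`: going up the
derived series of `G`, each `C ⊓ G⁽ⁱ⁾` is nilpotent of class at most two, hence lies in `F(G)`. -/
theorem centralizer_fitting_le (G : Type*) [Group G] [Finite G] [Group.IsSolvable G] :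
    Subgroup.centralizer (fittingSubgroup G : Set G) ≤ fittingSubgroup G := by
  set C := Subgroup.centralizer (fittingSubgroup G : Set G) with hC
  have hCn : C.Normal := inferInstance
  obtain ⟨n, hn⟩ := (Group.isSolvable_def G).mp inferInstance
  have key : ∀ i ≤ n, C ⊓ derivedSeries G (n - i) ≤ fittingSubgroup G := by
    intro i
    induction i with
    | zero =>
      intro _
      rw [Nat.sub_zero, hn, inf_bot_eq]
      exact bot_le
    | succ i ih =>
      intro hi
      have h1 := ih (by omega)
      have h2 : n - i = (n - (i + 1)) + 1 := by omega
      rw [h2, derivedSeries_succ] at h1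
      set D := C ⊓ derivedSeries G (n - (i + 1)) with hD
      have h3 : ⁅D, D⁆ ≤ fittingSubgroup G := by
        refine le_trans (le_inf ?_ ?_) h1
        · exact (Subgroup.commutator_mono inf_le_left le_rfl).trans
            (Subgroup.commutator_le_left C D)
        · exact Subgroup.commutator_mono inf_le_right inf_le_right
      refine le_sSup ⟨inferInstance, isNilpotent_of_lcs D 2 ?_⟩
      rw [Subgroup.lowerCentralSeries_succ, Subgroup.lowerCentralSeries_succ,
        Subgroup.lowerCentralSeries_zero, Subgroup.commutator_eq_bot_iff_le_centralizer]
      refine h3.trans ?_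
      rw [Subgroup.le_centralizer_iff]
      exact inf_le_left
  have := key n le_rfl
  simpa using this

/-- If the kernel of `f` consists of non-generators, preimages of nilpotent normal subgroups are
nilpotent. -/
theorem isNilpotent_comap {M H : Type*} [Group M] [Finite M] [Group H] (f : M →* H)
    (hf : Function.Surjective f) (hker : ∀ X : Subgroup M, X ⊔ f.ker = ⊤ → X = ⊤)
    (L : Subgroup H) [hLn : L.Normal] (hL : Group.IsNilpotent L) :
    Group.IsNilpotent (L.comap f) := by
  have : Finite H := Finite.of_surjective f hf
  refine ((Group.isNilpotent_of_finite_tfae (G := L.comap f)).out 0 3).mpr ?_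
  intro p hp P
  let fN : L.comap f →* L := (f.comp (L.comap f).subtype).codRestrict L (fun x => x.2)
  have hfN : Function.Surjective fN := by
    rintro ⟨y, hy⟩
    obtain ⟨x, rfl⟩ := hf y
    exact ⟨⟨x, hy⟩, rfl⟩
  set P' : Subgroup M := (P : Subgroup (L.comap f)).map (L.comap f).subtype with hP'
  have hmap : P'.map f = ((P.mapSurjective hfN : Sylow p L) : Subgroup L).map L.subtype := by
    rw [Sylow.coe_mapSurjective, hP', Subgroup.map_map, Subgroup.map_map]
    rfl
  have hchar : ((P.mapSurjective hfN : Sylow p L) : Subgroup L).Characteristic := by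
    have h := ((Group.isNilpotent_of_finite_tfae (G := L)).out 0 3).mp hL
    exact Sylow.characteristic_of_normal _ (h p hp _)
  have hnorm : (P'.map f).Normal := by
    rw [hmap]
    infer_instance
  set K := (P'.map f).comap f with hK
  have hKn : K.Normal := hnorm.comap f
  have hP'K : P' ≤ K := Subgroup.le_comap_map f P'
  have hKN : K ≤ L.comap f := by
    refine Subgroup.comap_mono ?_
    rw [hmap]
    exact Subgroup.map_subtype_le _
  -- `P'` is a Sylow subgroup of `K`
  have hPK : IsPGroup p (P'.subgroupOf K) :=
    (P.2.map (L.comap f).subtype).comap_of_injective _ (Subgroup.subtype_injective _)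
  have hidx : ¬ p ∣ (P'.subgroupOf K).index := by
    intro h
    have h1 : P'.relIndex K ∣ P'.relIndex (L.comap f) := by
      rw [← Subgroup.relIndex_mul_relIndex _ _ _ hP'K hKN]
      exact dvd_mul_right _ _
    have h2 : P'.relIndex (L.comap f) = (P : Subgroup (L.comap f)).index := by
      rw [Subgroup.relIndex, hP', Subgroup.subgroupOf, Subgroup.comap_map_eq_self_of_injective
        (Subgroup.subtype_injective _)]
    rw [h2] at h1
    exact P.not_dvd_index (h.trans h1)
  -- the Frattini argument: the normalizer of `P'` supplements the kernel, so it is everything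
  have hfr := Sylow.normalizer_sup_eq_top (hPK.toSylow hidx)
  have hcoe : (((hPK.toSylow hidx : Sylow p K) : Subgroup K).map K.subtype) = P' := by
    change (P'.subgroupOf K).map K.subtype = P'
    rw [Subgroup.subgroupOf_map_subtype, inf_eq_left.mpr hP'K]
  rw [hcoe, hK, Subgroup.comap_map_eq, ← sup_assoc, sup_eq_left.mpr Subgroup.le_normalizer] at hfr
  have htop := hker _ hfr
  have hP'n : P'.Normal := Subgroup.normalizer_eq_top_iff.mp htop
  have : (P : Subgroup (L.comap f)) = P'.comap (L.comap f).subtype := by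
    rw [hP', Subgroup.comap_map_eq_self_of_injective (Subgroup.subtype_injective _)]
  rw [this]
  exact hP'n.comap _

/-! ### Elementary abelian subgroups of `G / F(G)` -/

theorem le_normalizer_sup {G : Type*} [Group G] (T P A : Subgroup G) [P.Normal]
    (h : ∀ a ∈ A, ∀ t ∈ T, a * t * a⁻¹ ∈ T ⊔ P) :
    A ≤ Subgroup.normalizer ((T ⊔ P : Subgroup G) : Set G) := by
  have key : ∀ a ∈ A, ∀ z ∈ T ⊔ P, a * z * a⁻¹ ∈ T ⊔ P := by
    intro a ha z hz
    have : T ⊔ P ≤ (T ⊔ P).comap (MulAut.conj a).toMonoidHom := by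
      refine sup_le (fun t ht => h a ha t ht) (fun t ht => ?_)
      exact (le_sup_right : P ≤ T ⊔ P) (‹P.Normal›.conj_mem t ht a)
    exact this hz
  intro a ha
  rw [Subgroup.mem_normalizer_iff]
  refine fun z => ⟨key a ha z, fun hz => ?_⟩
  have := key a⁻¹ (inv_mem ha) _ hz
  simpa [mul_assoc] using this

/-- If `G` is finite solvable of c-dimension at most `k`, the elementary abelian `p`-subgroups of
`G / F(G)` have order at most `p ^ (2 * k)`. -/
theorem card_elementary_le {G : Type} [Group G] [Finite G] [Group.IsSolvable G] {p k : ℕ}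
    [Fact p.Prime] (hCD : ∀ (m : ℕ) (S : Fin (m + 1) → Set G),
        StrictMono (fun i => Subgroup.centralizer (S i)) → m ≤ k)
    (E : Subgroup (G ⧸ fittingSubgroup G)) (hEc : ∀ x ∈ E, ∀ y ∈ E, x * y = y * x)
    (hEp : ∀ x ∈ E, x ^ p = 1) : Nat.card E ≤ p ^ (2 * k) := by
  have hp : p.Prime := Fact.out
  set F := fittingSubgroup G with hF
  set π := QuotientGroup.mk' F with hπ
  have hkerπ : π.ker = F := QuotientGroup.ker_mk' F
  -- a minimal supplement of `F`
  obtain ⟨M, hMtop, hMmin⟩ := (Set.toFinite {M : Subgroup G | F ⊔ M = ⊤}).exists_minimal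
    ⟨⊤, by simp⟩
  have hMtop : F ⊔ M = ⊤ := hMtop
  let f : M →* G ⧸ F := π.comp M.subtype
  have hfdef : ∀ x : M, f x = π x := fun x => rfl
  have hfker : ∀ x : M, f x = 1 ↔ (x : G) ∈ F := fun x => QuotientGroup.eq_one_iff _
  have hfker' : f.ker = F.subgroupOf M := by
    ext x
    rw [MonoidHom.mem_ker, hfker, Subgroup.mem_subgroupOf]
  have hfsurj : Function.Surjective f := by
    rw [← MonoidHom.range_eq_top]
    have h1 := congrArg (Subgroup.map π) hMtop
    rw [Subgroup.map_sup, QuotientGroup.map_mk'_self, bot_sup_eq,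
      Subgroup.map_top_of_surjective _ (QuotientGroup.mk'_surjective F)] at h1
    rw [MonoidHom.range_comp, Subgroup.range_subtype, h1]
  have hnongen : ∀ X : Subgroup M, X ⊔ f.ker = ⊤ → X = ⊤ := by
    intro X hX
    have h1 := congrArg (Subgroup.map M.subtype) hX
    rw [Subgroup.map_sup, hfker', Subgroup.subgroupOf_map_subtype, ← MonoidHom.range_eq_map,
      Subgroup.range_subtype] at h1
    have h2 : F ⊔ X.map M.subtype = ⊤ := by
      rw [eq_top_iff, ← hMtop]
      refine sup_le le_sup_left ?_
      exact h1.symm.le.trans (sup_le le_sup_right (inf_le_left.trans le_sup_left))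
    have h3 := hMmin h2 (Subgroup.map_subtype_le X)
    rw [eq_top_iff]
    intro x _
    obtain ⟨y, hy, hyx⟩ := h3 x.2
    rwa [← Subtype.ext hyx]
  -- `F ∩ M` consists of non-generators of `M`, so the preimage of `F(G / F)` in `M` is nilpotent
  set L := fittingSubgroup (G ⧸ F) with hL
  have hNF : L.comap f ≤ fittingSubgroup M :=
    le_sSup ⟨inferInstance, isNilpotent_comap f hfsurj hnongen L (isNilpotent_fittingSubgroup _)⟩
  -- a `p`-subgroup of `M` mapping onto `E`
  have hEpg : IsPGroup p E := fun x => ⟨1, Subtype.ext (by simpa using hEp x x.2)⟩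
  obtain ⟨Q', hQ'p, hQ'E⟩ : ∃ Q' : Subgroup M, IsPGroup p Q' ∧ Q'.map f = E := by
    let fU : E.comap f →* E := (f.comp (E.comap f).subtype).codRestrict E (fun x => x.2)
    have hfU : Function.Surjective fU := by
      rintro ⟨y, hy⟩
      obtain ⟨x, rfl⟩ := hfsurj y
      exact ⟨⟨x, hy⟩, rfl⟩
    obtain ⟨Q⟩ : Nonempty (Sylow p (E.comap f)) := inferInstance
    refine ⟨(Q : Subgroup (E.comap f)).map (E.comap f).subtype, Q.2.map _, ?_⟩
    have h1 : ((Q.mapSurjective hfU : Sylow p E) : Subgroup E) = ⊤ :=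
      ((Q.mapSurjective hfU).3 (hEpg.to_subgroup ⊤) le_top).symm
    have h2 := congrArg (Subgroup.map E.subtype) h1
    rw [Sylow.coe_mapSurjective, ← MonoidHom.range_eq_map, Subgroup.range_subtype,
      Subgroup.map_map] at h2
    rw [Subgroup.map_map]
    exact h2
  set Q := Q'.map M.subtype with hQ
  have hQmap : Q.map π = E := by
    rw [hQ, Subgroup.map_map]
    exact hQ'E
  have hcardE : Nat.card E = F.relIndex Q := by
    rw [← hQmap, ← Subgroup.relIndex_ker, hkerπ]
  set sM := (Nat.card M).primeFactors.erase p with hsM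
  set sG := (Nat.card G).primeFactors.erase p with hsG
  have hsMp : ∀ q ∈ sM, q.Prime := fun q hq =>
    Nat.prime_of_mem_primeFactors (Finset.mem_of_mem_erase hq)
  have hsGp : ∀ q ∈ sG, q.Prime := fun q hq =>
    Nat.prime_of_mem_primeFactors (Finset.mem_of_mem_erase hq)
  have hpM : p ∉ sM := Finset.notMem_erase _ _
  have hpG : p ∉ sG := Finset.notMem_erase _ _
  -- `R` and `S` are the `p'`-parts of `F(M)` and `F(G)`
  set RM := pcoreSup sM M with hRM
  set R := RM.map M.subtype with hR
  set S := pcoreSup sG G with hS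
  have hRnil : Group.IsNilpotent R := by
    have := isNilpotent_pcoreSup sM hsMp M
    exact Group.nilpotent_of_mulEquiv (RM.equivMapOfInjective _ M.subtype_injective)
  have hSnil : Group.IsNilpotent S := isNilpotent_pcoreSup sG hsGp G
  have hRcard : ¬ p ∣ Nat.card R := by
    rw [← Nat.card_congr (RM.equivMapOfInjective _ M.subtype_injective).toEquiv]
    exact not_dvd_card_pcoreSup sM hsMp M hp hpM
  have hScard : ¬ p ∣ Nat.card S := not_dvd_card_pcoreSup sG hsGp G hp hpG
  have hQM : Q ≤ M := Subgroup.map_subtype_le _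
  have hMR : M ≤ Subgroup.normalizer (R : Set G) := by
    have key : ∀ a ∈ M, ∀ z ∈ R, a * z * a⁻¹ ∈ R := by
      rintro a ha _ ⟨z, hz, rfl⟩
      exact ⟨⟨a, ha⟩ * z * ⟨a, ha⟩⁻¹, (pcoreSup_normal sM M).conj_mem z hz ⟨a, ha⟩, rfl⟩
    intro a ha
    rw [Subgroup.mem_normalizer_iff]
    refine fun z => ⟨key a ha z, fun hz => ?_⟩
    have := key a⁻¹ (inv_mem ha) _ hz
    simpa [mul_assoc] using this
  have hMemCR : ∀ x : M, x ∈ Subgroup.centralizer (RM : Set M) →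
      (x : G) ∈ Subgroup.centralizer (R : Set G) := by
    intro x hx
    rw [Subgroup.mem_centralizer_iff]
    rintro _ ⟨z, hz, rfl⟩
    exact congrArg Subtype.val (Subgroup.mem_centralizer_iff.mp hx z hz)
  -- `Q ∩ F` centralizes both `R` and `S`
  have hQF' : Q' ⊓ f.ker ≤ pcore p M := by
    refine le_pcore_of_le_fitting (hQ'p.to_le inf_le_left) (le_trans ?_ hNF)
    refine inf_le_right.trans ?_
    intro x hx
    rw [Subgroup.mem_comap, hx]
    exact one_mem _
  have hQF : Q ⊓ F ≤ pcore p G :=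
    le_pcore_of_le_fitting ((hQ'p.map _).to_le inf_le_left) inf_le_right
  have hQFR : ∀ x ∈ Q, x ∈ F → x ∈ Subgroup.centralizer (R : Set G) := by
    rintro _ ⟨x, hx, rfl⟩ hxF
    exact hMemCR x (pcore_commute_pcoreSup hp hsMp hpM (hQF' ⟨hx, (hfker x).mpr hxF⟩))
  have hQFS : ∀ x ∈ Q, x ∈ F → x ∈ Subgroup.centralizer (S : Set G) :=
    fun x hx hxF => pcore_commute_pcoreSup hp hsGp hpG (hQF ⟨hx, hxF⟩)
  have hQE : ∀ x ∈ Q, π x ∈ E := fun x hx => hQmap ▸ Subgroup.mem_map_of_mem π hx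
  have hcommF : ∀ x ∈ Q, ∀ y ∈ Q, ⁅x, y⁆ ∈ F ∧ ⁅x, y⁆ ∈ Q := by
    intro x hx y hy
    constructor
    · rw [← hkerπ, MonoidHom.mem_ker, map_commutatorElement,
        commutatorElement_eq_one_iff_mul_comm]
      exact hEc _ (hQE x hx) _ (hQE y hy)
    · rw [commutatorElement_def]
      exact mul_mem (mul_mem (mul_mem hx hy) (inv_mem hx)) (inv_mem hy)
  have hpowF : ∀ x ∈ Q, x ^ p ∈ F ∧ x ^ p ∈ Q := by
    intro x hx
    refine ⟨?_, pow_mem hx p⟩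
    rw [← hkerπ, MonoidHom.mem_ker, map_pow]
    exact hEp _ (hQE x hx)
  have hb1 := coprime_relIndex_le hCD R hRcard Q (hQM.trans hMR)
    (fun x hx y hy => hQFR _ (hcommF x hx y hy).2 (hcommF x hx y hy).1)
    (fun x hx => hQFR _ (hpowF x hx).2 (hpowF x hx).1)
  have hb2 := coprime_relIndex_le hCD S hScard Q
    (by rw [Subgroup.normalizer_eq_top_iff.mpr (pcoreSup_normal sG G)]; exact le_top)
    (fun x hx y hy => hQFS _ (hcommF x hx y hy).2 (hcommF x hx y hy).1)
    (fun x hx => hQFS _ (hpowF x hx).2 (hpowF x hx).1)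
  -- `D` consists of the elements of `M` centralizing `R` and `S`. Its `p`-part `T` lies in `F`, since
  -- `T O_p(G)` is normalized by `O_p(G)`, by `S` and by `M`, which together generate `G`. Then `D`
  -- centralizes `F(G / F)` modulo `F`, whence `D ≤ F(M)`.
  set D : Subgroup M := Subgroup.centralizer (RM : Set M) ⊓
    (Subgroup.centralizer (S : Set G)).subgroupOf M with hD
  have hDn : D.Normal := inferInstance
  set T := (D ⊓ pcore p M).map M.subtype with hT
  have hTp : IsPGroup p T := ((isPGroup_pcore p M).to_le inf_le_right).map _
  have hTF : T ≤ F := by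
    have hn : (T ⊔ pcore p G).Normal := by
      rw [← Subgroup.normalizer_eq_top_iff, eq_top_iff, ← hMtop]
      refine sup_le ((fittingSubgroup_le_sup G p).trans (sup_le ?_ ?_)) ?_
      · exact le_sup_right.trans Subgroup.le_normalizer
      · refine le_normalizer_sup T _ _ ?_
        rintro s hs _ ⟨t, ht, rfl⟩
        have := Subgroup.mem_centralizer_iff.mp (show (t : G) ∈ _ from ht.1.2) s hs
        change s * t * s⁻¹ ∈ _
        rw [this, mul_inv_cancel_right]
        exact Subgroup.mem_sup_left ⟨t, ht, rfl⟩
      · refine le_normalizer_sup T _ _ ?_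
        rintro a ha _ ⟨t, ht, rfl⟩
        refine Subgroup.mem_sup_left ⟨⟨a, ha⟩ * t * ⟨a, ha⟩⁻¹, ?_, rfl⟩
        exact (inferInstance : (D ⊓ pcore p M).Normal).conj_mem t ht ⟨a, ha⟩
    have h1 := le_pcore hn (hTp.to_sup_of_normal_right (isPGroup_pcore p G))
    exact le_sup_left.trans (h1.trans (pcore_le_fittingSubgroup G hp))
  have hTf : ∀ t ∈ D ⊓ pcore p M, f t = 1 := fun t ht => (hfker t).mpr (hTF ⟨t, ht, rfl⟩)
  have hDN : D ≤ fittingSubgroup M := by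
    refine le_trans ?_ hNF
    intro d hd
    refine centralizer_fitting_le (G ⧸ F) ?_
    rw [Subgroup.mem_centralizer_iff]
    intro h hh
    obtain ⟨n, rfl⟩ := hfsurj h
    have h1 : pcore p M ⊔ RM ≤ (Subgroup.centralizer {f d}).comap f := by
      refine sup_le (fun x hx => ?_) (fun x hx => ?_)
      · rw [Subgroup.mem_comap, Subgroup.mem_centralizer_singleton_iff,
          ← commutatorElement_eq_one_iff_mul_comm, ← map_commutatorElement]
        refine hTf _ ⟨?_, ?_⟩
        · exact Subgroup.commutator_le_right (pcore p M) D (Subgroup.commutator_mem_commutator hx hd)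
        · exact Subgroup.commutator_le_left (pcore p M) D (Subgroup.commutator_mem_commutator hx hd)
      · rw [Subgroup.mem_comap, Subgroup.mem_centralizer_singleton_iff, ← map_mul, ← map_mul]
        exact congrArg f (Subgroup.mem_centralizer_iff.mp hd.1 x hx)
    have h2 := h1 (fittingSubgroup_le_sup M p (hNF hh))
    exact Subgroup.mem_centralizer_singleton_iff.mp h2
  have hfinal : Subgroup.centralizer (R : Set G) ⊓ Subgroup.centralizer (S : Set G) ⊓ Q ≤ F := by
    rintro _ ⟨⟨hxR, hxS⟩, ⟨x, hx, rfl⟩⟩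
    have hxD : x ∈ D := by
      refine ⟨?_, hxS⟩
      change x ∈ Subgroup.centralizer (RM : Set M)
      rw [Subgroup.mem_centralizer_iff]
      intro z hz
      exact Subtype.ext (Subgroup.mem_centralizer_iff.mp hxR z ⟨z, hz, rfl⟩)
    have h1 : Q' ⊓ D ≤ pcore p M :=
      le_pcore_of_le_fitting (hQ'p.to_le inf_le_left) (inf_le_right.trans hDN)
    exact hTF ⟨x, ⟨hxD, h1 ⟨hx, hxD⟩⟩, rfl⟩
  calc Nat.card E = F.relIndex Q := hcardE
    _ ≤ (Subgroup.centralizer (R : Set G) ⊓ Subgroup.centralizer (S : Set G) ⊓ Q).relIndex Q :=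
        Nat.le_of_dvd (Nat.pos_of_ne_zero Subgroup.FiniteIndex.index_ne_zero)
          (Subgroup.relIndex_dvd_of_le_left Q hfinal)
    _ = (Subgroup.centralizer (R : Set G) ⊓ Subgroup.centralizer (S : Set G)).relIndex Q :=
        Subgroup.inf_relIndex_right _ _
    _ ≤ _ := Subgroup.relIndex_inf_le
    _ ≤ p ^ k * p ^ k := Nat.mul_le_mul hb1 hb2
    _ = p ^ (2 * k) := by rw [two_mul, pow_add]

/-! ### Torsion in endomorphism rings of finite abelian groups -/

theorem cast_pow_dvd_mul_left {E : Type*} [Ring E] (p i : ℕ) {u : E} (h : (p : E) ^ i ∣ u) (c : E) :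
    (p : E) ^ i ∣ c * u := by
  obtain ⟨w, rfl⟩ := h
  refine ⟨c * w, ?_⟩
  have : (p : E) ^ i * c = c * (p : E) ^ i := ((Nat.cast_commute p c).pow_left i).eq
  rw [← mul_assoc, ← this, mul_assoc]

/-- On the congruence subgroup modulo `p ^ 2`, the `p`-th power map is injective up to `p`-torsion.
If `x ^ p = y ^ p` and `p ^ i ∣ p (x - y)`, then `x ^ p - y ^ p ≡ p (x - y)` modulo `p ^ (i + 1)`, so
`p (x - y)` is divisible by every power of `p`. -/
theorem mul_sub_eq_zero_of_pow_eq {E : Type*} [Ring E] (p n : ℕ) (hn : (p : E) ^ n = 0) (x y : E)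
    (hx : (p : E) ^ 2 ∣ x - 1) (hy : (p : E) ^ 2 ∣ y - 1) (hxy : x ^ p = y ^ p) :
    (p : E) * (x - y) = 0 := by
  have hc : ∀ c : E, (p : E) * c = c * p := fun c => (Nat.cast_commute p c).eq
  set z := x - y with hz
  have hyl : ∀ l : ℕ, (p : E) ^ 2 ∣ y ^ l - 1 := by
    intro l
    induction l with
    | zero => simp
    | succ l ih =>
      have : y ^ (l + 1) - 1 = y * (y ^ l - 1) + (y - 1) := by rw [pow_succ']; noncomm_ring
      rw [this]
      exact dvd_add (cast_pow_dvd_mul_left p 2 ih y) hy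
  have key : ∀ i : ℕ, (p : E) ^ i ∣ (p : E) * z := by
    intro i
    induction i with
    | zero => simp
    | succ i ih =>
      have h1 : ∀ c : E, (p : E) ^ 2 ∣ c → (p : E) ^ (i + 1) ∣ c * z ∧ (p : E) ^ (i + 1) ∣ z * c := by
        rintro c ⟨d, rfl⟩
        constructor
        · have : (p : E) ^ 2 * d * z = p * (d * (p * z)) := by
            rw [hc z, ← mul_assoc d, ← hc (d * z), sq]; noncomm_ring
          rw [this, pow_succ']
          exact mul_dvd_mul_left _ (cast_pow_dvd_mul_left p i ih d)
        · have : z * ((p : E) ^ 2 * d) = p * (p * z * d) := by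
            rw [sq, hc z]
            rw [← mul_assoc, ← mul_assoc, ← mul_assoc, ← mul_assoc, ← hc z]
          rw [this, pow_succ']
          exact mul_dvd_mul_left _ (dvd_mul_of_dvd_left ih d)
      have h2 : ∀ l : ℕ, (p : E) ^ (i + 1) ∣ x ^ l - y ^ l - l * z := by
        intro l
        induction l with
        | zero => simp
        | succ l ihl =>
          have : x ^ (l + 1) - y ^ (l + 1) - (l + 1 : ℕ) * z =
              x * (x ^ l - y ^ l - l * z) + (l : E) * ((x - 1) * z) + z * (y ^ l - 1) := by
            have hl : (l : E) * ((x - 1) * z) = (x - 1) * (l * z) := by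
              rw [← mul_assoc, (Nat.cast_commute l (x - 1)).eq, mul_assoc]
            rw [hl, pow_succ', pow_succ', hz]
            push_cast
            noncomm_ring
          rw [this]
          exact dvd_add (dvd_add (cast_pow_dvd_mul_left p _ ihl x)
            (cast_pow_dvd_mul_left p _ (h1 _ hx).1 _)) (h1 _ (hyl l)).2
      have h3 := h2 p
      rw [hxy, sub_self, zero_sub, dvd_neg] at h3
      exact h3
  have := key n
  rw [hn] at this
  exact zero_dvd_iff.mp this

theorem card_torsion_eq_index {B : Type*} [AddCommGroup B] [Finite B] (n : ℕ) :
    (nsmulAddMonoidHom n : B →+ B).range.index = Nat.card (nsmulAddMonoidHom n : B →+ B).ker := by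
  have h1 := (nsmulAddMonoidHom n : B →+ B).range.index_mul_card
  have h2 := (nsmulAddMonoidHom n : B →+ B).ker.index_mul_card
  rw [AddSubgroup.index_ker] at h2
  rw [← h2, mul_comm] at h1
  exact Nat.eq_of_mul_eq_mul_left Nat.card_pos h1

theorem card_torsion_mul_le {B : Type*} [AddCommGroup B] [Finite B] (m n : ℕ) :
    Nat.card (nsmulAddMonoidHom (m * n) : B →+ B).ker ≤
      Nat.card (nsmulAddMonoidHom m : B →+ B).ker * Nat.card (nsmulAddMonoidHom n : B →+ B).ker := by
  let f : (nsmulAddMonoidHom (m * n) : B →+ B).ker →+ B :=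
    (nsmulAddMonoidHom n).comp (AddSubgroup.subtype _)
  have h2 := f.ker.index_mul_card
  rw [AddSubgroup.index_ker] at h2
  rw [← h2]
  refine Nat.mul_le_mul ?_ ?_
  · refine Nat.card_le_card_of_injective
      (fun x : f.range => (⟨x.1, ?_⟩ : (nsmulAddMonoidHom m : B →+ B).ker)) ?_
    · obtain ⟨_, ⟨y, rfl⟩⟩ := x
      have := y.2
      rw [AddMonoidHom.mem_ker, nsmulAddMonoidHom_apply] at this ⊢
      change m • n • (y : B) = 0
      rw [← mul_nsmul', this]
    · intro x y h
      exact Subtype.ext (Subtype.mk.inj h)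
  · refine Nat.card_le_card_of_injective
      (fun x : f.ker => (⟨x.1, x.2⟩ : (nsmulAddMonoidHom n : B →+ B).ker)) ?_
    intro x y h
    exact Subtype.ext (Subtype.ext (Subtype.mk.inj h))

theorem exists_basis_of_module {V : Type*} [AddCommGroup V] [Finite V] {p : ℕ} [Fact p.Prime]
    [Module (ZMod p) V] :
    ∃ d, Nat.card V = p ^ d ∧ ∃ b : Fin d → V, AddSubgroup.closure (Set.range b) = ⊤ := by
  let bas := Module.finBasis (ZMod p) V
  refine ⟨_, by rw [Module.natCard_eq_pow_finrank (K := ZMod p) (V := V), Nat.card_zmod], bas, ?_⟩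
  rw [eq_top_iff]
  intro v _
  refine Submodule.span_induction ?_ (zero_mem _) (fun _ _ _ _ => add_mem) ?_ (bas.mem_span v)
  · rintro _ ⟨i, rfl⟩
    exact AddSubgroup.subset_closure ⟨i, rfl⟩
  · intro a y _ hy
    obtain ⟨k, rfl⟩ := ZMod.natCast_zmod_surjective a
    rw [Nat.cast_smul_eq_nsmul]
    exact nsmul_mem hy k

theorem exists_basis_elementary {V : Type*} [AddCommGroup V] [Finite V] {p : ℕ} [Fact p.Prime]
    (hV : ∀ x : V, p • x = 0) :
    ∃ d, Nat.card V = p ^ d ∧ ∃ b : Fin d → V, AddSubgroup.closure (Set.range b) = ⊤ :=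
  @exists_basis_of_module V _ _ p _ (AddCommGroup.zmodModule hV)

/-- A finite abelian group with at most `p ^ e` elements of order dividing `p` is generated modulo
`p`-th multiples by at most `e` elements. -/
theorem exists_generators {B : Type*} [AddCommGroup B] [Finite B] {p e : ℕ} [Fact p.Prime]
    (h : Nat.card (nsmulAddMonoidHom p : B →+ B).ker ≤ p ^ e) :
    ∃ d ≤ e, ∃ b : Fin d → B,
      AddSubgroup.closure (Set.range b) ⊔ (nsmulAddMonoidHom p : B →+ B).range = ⊤ := by
  set P := (nsmulAddMonoidHom p : B →+ B).range with hP
  have hpV : ∀ x : B ⧸ P, p • x = 0 := by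
    intro x
    induction x using QuotientAddGroup.induction_on with
    | _ x => exact (QuotientAddGroup.eq_zero_iff _).mpr ⟨x, rfl⟩
  obtain ⟨d, hcard, v, hv⟩ := exists_basis_elementary hpV
  have hd : d ≤ e := by
    rw [← card_torsion_eq_index, AddSubgroup.index_eq_card, ← hP, hcard] at h
    exact (Nat.pow_le_pow_iff_right (Nat.Prime.one_lt Fact.out)).mp h
  choose b hb using fun i => QuotientAddGroup.mk_surjective (v i)
  refine ⟨d, hd, b, ?_⟩
  rw [eq_top_iff]
  intro x _
  have h2 : (x : B ⧸ P) ∈ (AddSubgroup.closure (Set.range b)).map (QuotientAddGroup.mk' P) := by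
    have hvb : QuotientAddGroup.mk' P '' Set.range b = Set.range v := by
      rw [← Set.range_comp]
      exact congrArg Set.range (funext hb)
    rw [AddMonoidHom.map_closure, hvb, hv]
    trivial
  obtain ⟨y, hy, hyx⟩ := h2
  have h3 : -y + x ∈ P := QuotientAddGroup.eq.mp hyx
  have : x = y + (-y + x) := by abel
  rw [this]
  exact add_mem (AddSubgroup.mem_sup_left hy) (AddSubgroup.mem_sup_right h3)

/-- An endomorphism killed by `p` is determined by its values on generators modulo `p`, and these
values are `p`-torsion elements. -/
theorem card_end_torsion_le {B : Type*} [AddCommGroup B] [Finite B] {p e : ℕ} [Fact p.Prime]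
    (h : Nat.card (nsmulAddMonoidHom p : B →+ B).ker ≤ p ^ e) :
    Nat.card (nsmulAddMonoidHom p : AddMonoid.End B →+ AddMonoid.End B).ker ≤ p ^ (e * e) := by
  obtain ⟨d, hd, b, hb⟩ := exists_generators h
  have hker : ∀ φ : (nsmulAddMonoidHom p : AddMonoid.End B →+ AddMonoid.End B).ker, ∀ x : B,
      p • (φ.1 x) = 0 := fun φ x => DFunLike.congr_fun (show p • φ.1 = 0 from φ.2) x
  let Φ : (nsmulAddMonoidHom p : AddMonoid.End B →+ AddMonoid.End B).ker →
      (Fin d → (nsmulAddMonoidHom p : B →+ B).ker) := fun φ i => ⟨φ.1 (b i), hker φ _⟩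
  have hΦ : Function.Injective Φ := by
    intro φ ψ hφψ
    apply Subtype.ext
    have h1 : AddSubgroup.closure (Set.range b) ⊔ (nsmulAddMonoidHom p : B →+ B).range ≤
        AddMonoidHom.eqLocus (φ.1 : B →+ B) (ψ.1 : B →+ B) := by
      refine sup_le ((AddSubgroup.closure_le _).mpr ?_) ?_
      · rintro _ ⟨i, rfl⟩
        exact congrArg Subtype.val (congrFun hφψ i)
      · rintro _ ⟨x, rfl⟩
        change φ.1 (p • x) = ψ.1 (p • x)
        rw [map_nsmul, map_nsmul, hker, hker]
    rw [hb] at h1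
    exact AddMonoidHom.ext fun x => h1 (AddSubgroup.mem_top x)
  calc _ ≤ _ := Nat.card_le_card_of_injective Φ hΦ
    _ = Nat.card (nsmulAddMonoidHom p : B →+ B).ker ^ d := by simp [Nat.card_pi]
    _ ≤ (p ^ e) ^ d := Nat.pow_le_pow_left h d
    _ ≤ (p ^ e) ^ e := Nat.pow_le_pow_right (Nat.pow_pos (Nat.Prime.pos Fact.out)) hd
    _ = p ^ (e * e) := by rw [pow_mul]

/-! ### Subgroups containing all `p`-th powers of a `p`-group -/

/-- In a nilpotent group a maximal normal abelian subgroup contains its centralizer. -/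
theorem exists_selfCentralizing {M : Type*} [Group M] [Finite M] (hM : Group.IsNilpotent M) :
    ∃ A : Subgroup M, A.Normal ∧ (∀ x ∈ A, ∀ y ∈ A, x * y = y * x) ∧
      Subgroup.centralizer (A : Set M) ≤ A := by
  classical
  have hfin : {A : Subgroup M | A.Normal ∧ ∀ x ∈ A, ∀ y ∈ A, x * y = y * x}.Finite := Set.toFinite _
  obtain ⟨A, ⟨hAn, hAc⟩, hmax⟩ := hfin.exists_maximal
    ⟨⊥, inferInstance, by simp [Subgroup.mem_bot]⟩
  refine ⟨A, hAn, hAc, ?_⟩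
  by_contra hC
  set C := Subgroup.centralizer (A : Set M) with hCdef
  have hCn : C.Normal := inferInstance
  have hex : ∃ i, C ⊓ (⊤ : Subgroup M).lowerCentralSeries i ≤ A := by
    obtain ⟨n, hn⟩ := (Subgroup.nilpotent_iff_lowerCentralSeries).mp hM
    exact ⟨n, by rw [hn]; simp⟩
  set i := Nat.find hex with hi
  have hspec : C ⊓ (⊤ : Subgroup M).lowerCentralSeries i ≤ A := Nat.find_spec hex
  have hi0 : i ≠ 0 := by
    intro h0
    rw [h0] at hspec
    apply hC
    refine le_trans ?_ hspec
    simp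
  obtain ⟨j, hj⟩ := Nat.exists_eq_succ_of_ne_zero hi0
  have hmin : ¬ C ⊓ (⊤ : Subgroup M).lowerCentralSeries j ≤ A :=
    Nat.find_min hex (by rw [← hi, hj]; exact Nat.lt_succ_self j)
  obtain ⟨x, ⟨hxC, hxj⟩, hxA⟩ := SetLike.not_le_iff_exists.mp hmin
  have hcomm : ∀ m : M, m * x * m⁻¹ * x⁻¹ ∈ A := by
    intro m
    apply hspec
    refine ⟨C.mul_mem (hCn.conj_mem x hxC m) (C.inv_mem hxC), ?_⟩
    change _ ∈ (⊤ : Subgroup M).lowerCentralSeries i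
    rw [hj, Subgroup.lowerCentralSeries_succ]
    have := Subgroup.commutator_mem_commutator hxj (Subgroup.mem_top m)
    have h2 : m * x * m⁻¹ * x⁻¹ = ⁅x, m⁆⁻¹ := by rw [commutatorElement_inv, commutatorElement_def]
    rw [h2]
    exact inv_mem this
  have hxx : ∀ a ∈ A, a * x = x * a := fun a ha => Subgroup.mem_centralizer_iff.mp hxC a ha
  set D := A ⊔ Subgroup.zpowers x with hD
  have hxD : x ∈ D := Subgroup.mem_sup_right (Subgroup.mem_zpowers x)
  have hDn : D.Normal := by
    constructor
    intro d hd m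
    have : D ≤ D.comap (MulAut.conj m).toMonoidHom := by
      rw [hD]
      refine sup_le ?_ (Subgroup.zpowers_le.mpr ?_)
      · intro a ha
        exact Subgroup.mem_sup_left (hAn.conj_mem a ha m)
      · change m * x * m⁻¹ ∈ D
        have h3 : m * x * m⁻¹ = m * x * m⁻¹ * x⁻¹ * x := by group
        rw [h3]
        exact D.mul_mem (Subgroup.mem_sup_left (hcomm m)) hxD
    exact this hd
  have h1 : D ≤ Subgroup.centralizer (D : Set M) := by
    have hA' : D ≤ Subgroup.centralizer (A : Set M) := by
      refine sup_le ?_ (Subgroup.zpowers_le.mpr hxC)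
      intro a ha
      exact Subgroup.mem_centralizer_iff.mpr fun b hb => hAc b hb a ha
    have hx' : D ≤ Subgroup.centralizer {x} := by
      refine sup_le ?_ (Subgroup.zpowers_le.mpr ?_)
      · intro a ha
        exact Subgroup.mem_centralizer_singleton_iff.mpr (hxx a ha)
      · exact Subgroup.mem_centralizer_singleton_iff.mpr rfl
    refine sup_le ?_ (Subgroup.zpowers_le.mpr ?_)
    · intro a ha
      exact Subgroup.mem_centralizer_iff.mpr fun d hd =>
        (Subgroup.mem_centralizer_iff.mp (hA' hd) a ha).symm
    · exact Subgroup.mem_centralizer_iff.mpr fun d hd =>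
        Subgroup.mem_centralizer_singleton_iff.mp (hx' hd)
  have hle : D ≤ A := hmax ⟨hDn, fun x hx y hy =>
    (Subgroup.mem_centralizer_iff.mp (h1 hy) x hx)⟩ le_sup_left
  exact hxA (hle hxD)

theorem card_le_mul_of_fibers {α β : Type*} [Finite α] [Finite β] (f : α → β) (n : ℕ)
    (h : ∀ a₀ : α, Nat.card {a // f a = f a₀} ≤ n) : Nat.card α ≤ n * Nat.card β := by
  classical
  have := Fintype.ofFinite α
  have := Fintype.ofFinite β
  have h1 := Finset.card_le_mul_card_image (f := f) Finset.univ n (by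
    intro a ha
    obtain ⟨a₀, -, rfl⟩ := Finset.mem_image.mp ha
    have := h a₀
    rwa [Nat.card_eq_fintype_card, Fintype.card_subtype] at this)
  rw [Nat.card_eq_fintype_card, Nat.card_eq_fintype_card]
  exact h1.trans (Nat.mul_le_mul_left _ (Finset.card_le_univ _))

instance finite_addMonoidEnd {B : Type*} [AddCommGroup B] [Finite B] : Finite (AddMonoid.End B) :=
  DFunLike.finite (B →+ B)

/-- A group `U` of automorphisms of an abelian `p`-group `B` of rank at most `e` is at most
`p ^ (3 * e ^ 2)` times as large as any subgroup `W` containing its `p`-th powers. Two factors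
`p ^ (e ^ 2)` come from passing to the elements congruent to `1` modulo `p ^ 2`, the third from the
fibres of the `p`-th power map there. -/
theorem card_unit_group_le {B : Type*} [AddCommGroup B] [Finite B] {p e n : ℕ} [Fact p.Prime]
    (hpn : ∀ b : B, p ^ n • b = 0)
    (h : Nat.card (nsmulAddMonoidHom p : B →+ B).ker ≤ p ^ e)
    (U W : Subgroup (AddMonoid.End B)ˣ) (hUW : ∀ u ∈ U, u ^ p ∈ W) :
    Nat.card U ≤ p ^ (3 * (e * e)) * Nat.card W := by
  have hn0 : (p : AddMonoid.End B) ^ n = 0 := by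
    rw [← Nat.cast_pow]
    ext b
    rw [AddMonoid.End.natCast_apply, hpn b]
    rfl
  have hq := card_end_torsion_le h
  set q := p ^ (e * e) with hqdef
  set R := (nsmulAddMonoidHom (p * p) : AddMonoid.End B →+ AddMonoid.End B).range with hR
  have hRm : ∀ z, z ∈ R ↔ (p : AddMonoid.End B) ^ 2 ∣ z := by
    intro z
    constructor
    · rintro ⟨w, rfl⟩
      refine ⟨w, ?_⟩
      rw [nsmulAddMonoidHom_apply, nsmul_eq_mul, Nat.cast_mul, sq]
    · rintro ⟨w, rfl⟩
      refine ⟨w, ?_⟩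
      rw [nsmulAddMonoidHom_apply, nsmul_eq_mul, Nat.cast_mul, sq]
  have hRi : Nat.card (AddMonoid.End B ⧸ R) ≤ q * q := by
    rw [← AddSubgroup.index_eq_card, hR, card_torsion_eq_index]
    exact (card_torsion_mul_le p p).trans (Nat.mul_le_mul hq hq)
  let X := {u : U // (p : AddMonoid.End B) ^ 2 ∣ ((u : (AddMonoid.End B)ˣ) : AddMonoid.End B) - 1}
  have hX : Nat.card X ≤ q * Nat.card W := by
    refine card_le_mul_of_fibers (fun u : X => (⟨u.1.1 ^ p, hUW _ u.1.2⟩ : W)) q ?_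
    intro u₀
    refine le_trans (Nat.card_le_card_of_injective
      (fun u => (⟨(u.1.1.1 : AddMonoid.End B) - u₀.1.1, ?_⟩ :
        (nsmulAddMonoidHom p : AddMonoid.End B →+ AddMonoid.End B).ker)) ?_) hq
    · rw [AddMonoidHom.mem_ker, nsmulAddMonoidHom_apply, nsmul_eq_mul]
      refine mul_sub_eq_zero_of_pow_eq p n hn0 _ _ u.1.2 u₀.2 ?_
      have := congrArg (fun w : W => (w.1 : AddMonoid.End B)) u.2
      simpa using this
    · intro u v huv
      have := Subtype.mk.inj huv
      exact Subtype.ext (Subtype.ext (Subtype.ext (Units.ext (sub_left_injective this))))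
  have hU : Nat.card U ≤ Nat.card X * Nat.card (AddMonoid.End B ⧸ R) := by
    refine card_le_mul_of_fibers
      (fun u : U => ((u.1 : AddMonoid.End B) : AddMonoid.End B ⧸ R)) _ ?_
    intro u₀
    refine Nat.card_le_card_of_injective (fun u => (⟨u₀⁻¹ * u.1, ?_⟩ : X)) ?_
    · have h1 : (p : AddMonoid.End B) ^ 2 ∣ -(u.1.1 : AddMonoid.End B) + u₀.1 :=
        (hRm _).mp (QuotientAddGroup.eq.mp u.2)
      have h2 := cast_pow_dvd_mul_left p 2 h1 (-((u₀⁻¹ : U).1 : AddMonoid.End B))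
      have h3 : ((u₀⁻¹ : U).1 : AddMonoid.End B) * u₀.1 = 1 := by
        rw [← Units.val_mul, ← Subgroup.coe_mul]; simp
      rw [mul_add, neg_mul_neg, neg_mul, h3, ← sub_eq_add_neg] at h2
      rwa [Subgroup.coe_mul, Units.val_mul]
    · intro u v huv
      exact Subtype.ext (mul_left_cancel (Subtype.mk.inj huv))
  calc Nat.card U ≤ (q * Nat.card W) * (q * q) := hU.trans (Nat.mul_le_mul hX hRi)
    _ = q ^ 3 * Nat.card W := by ring
    _ = _ := by rw [hqdef, ← pow_mul, mul_comm 3]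

/-- The conjugation action of a group on a normal abelian subgroup `A`, as a homomorphism to the
endomorphism ring of `A` written additively. -/
def conjEnd {M : Type*} [Group M] (A : Subgroup M) [A.Normal] [IsMulCommutative A] :
    M →* AddMonoid.End (Additive A) where
  toFun g := MonoidHom.toAdditive ((MulAut.conjNormal g : A ≃* A).toMonoidHom)
  map_one' := by ext; simp; rfl
  map_mul' g h := by ext; simp; rfl

theorem conjEnd_ker {M : Type*} [Group M] (A : Subgroup M) [A.Normal] [IsMulCommutative A] :
    (conjEnd A).ker = Subgroup.centralizer (A : Set M) := by
  ext g
  rw [MonoidHom.mem_ker, Subgroup.mem_centralizer_iff]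
  constructor
  · intro h a ha
    have h1 := DFunLike.congr_fun h (Additive.ofMul ⟨a, ha⟩)
    have h2 : g * a * g⁻¹ = a := congrArg (fun x : Additive A => (x.toMul : M)) h1
    exact (mul_inv_eq_iff_eq_mul.mp h2).symm
  · intro h
    ext a
    have : g * (a.toMul : M) * g⁻¹ = a.toMul := by
      rw [← h _ a.toMul.2]; group
    exact this

open scoped IsMulCommutative in
/-- If the elementary abelian subgroups of a finite `p`-group `M` have order at most `p ^ e`, every
subgroup containing all `p`-th powers has index at most `p ^ (3 * e ^ 2 + e)`: the two summands
bound the contributions of `M / A` and of `A`, for `A` a self-centralizing normal abelian subgroup. -/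
theorem IsPGroup.index_le_of_forall_pow_mem {M : Type*} [Group M] [Finite M] {p e : ℕ}
    [Fact p.Prime] (hM : IsPGroup p M)
    (hE : ∀ E : Subgroup M, (∀ x ∈ E, ∀ y ∈ E, x * y = y * x) → (∀ x ∈ E, x ^ p = 1) →
      Nat.card E ≤ p ^ e)
    (N : Subgroup M) (hN : ∀ x, x ^ p ∈ N) : N.index ≤ p ^ (3 * (e * e) + e) := by
  obtain ⟨A, hAn, hAc, hAC⟩ := exists_selfCentralizing hM.isNilpotent
  have : IsMulCommutative A := ⟨⟨fun x y => Subtype.ext (hAc _ x.2 _ y.2)⟩⟩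
  obtain ⟨n, hn⟩ := IsPGroup.iff_card.mp hM
  have hcardB : ∀ b : Additive A, p ^ n • b = 0 := by
    intro b
    refine Subtype.ext ?_
    change (b.toMul : M) ^ (p ^ n) = 1
    rw [← hn]
    exact pow_card_eq_one'
  have htor' : Nat.card (powMonoidHom p : A →* A).ker ≤ p ^ e := by
    let T : Subgroup M := (powMonoidHom p : A →* A).ker.map A.subtype
    have hT : Nat.card T = Nat.card (powMonoidHom p : A →* A).ker :=
      Subgroup.card_map_of_injective A.subtype_injective
    rw [← hT]
    refine hE T ?_ ?_
    · rintro _ ⟨x, -, rfl⟩ _ ⟨y, -, rfl⟩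
      exact hAc _ x.2 _ y.2
    · rintro _ ⟨x, hx, rfl⟩
      have : x ^ p = 1 := hx
      rw [← map_pow, this, map_one]
  have hidx : (powMonoidHom p : A →* A).range.index ≤ p ^ e := by
    refine le_trans (le_of_eq ?_) htor'
    have h1 := (powMonoidHom p : A →* A).range.index_mul_card
    have h2 := (powMonoidHom p : A →* A).ker.index_mul_card
    rw [Subgroup.index_ker] at h2
    rw [← h2, mul_comm] at h1
    exact Nat.eq_of_mul_eq_mul_left Nat.card_pos h1
  have htor : Nat.card (nsmulAddMonoidHom p : Additive A →+ Additive A).ker ≤ p ^ e := htor'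
  let f := (conjEnd A).toHomUnits
  have hker : f.ker = A := by
    have h1 : f.ker = (conjEnd A).ker := by
      ext g
      rw [MonoidHom.mem_ker, MonoidHom.mem_ker, ← Units.val_inj]
      rfl
    rw [h1, conjEnd_ker]
    refine le_antisymm hAC ?_
    intro a ha
    exact Subgroup.mem_centralizer_iff.mpr fun b hb => hAc b hb a ha
  have h1 := card_unit_group_le hcardB htor f.range (N.map f) (by
    rintro _ ⟨x, rfl⟩
    exact ⟨x ^ p, hN x, map_pow f x p⟩)
  have h2 : Nat.card M = Nat.card f.range * Nat.card A := by
    rw [← Subgroup.index_ker, hker, Subgroup.index_mul_card]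
  have h3 : Nat.card N = Nat.card (N.map f) * Nat.card (A ⊓ N : Subgroup M) := by
    have h4 := (f.comp N.subtype).ker.index_mul_card
    rw [Subgroup.index_ker, MonoidHom.range_comp, Subgroup.range_subtype] at h4
    rw [← h4]
    congr 1
    have : (f.comp N.subtype).ker = A.subgroupOf N := by
      rw [← MonoidHom.comap_ker, hker]; rfl
    rw [this, ← Subgroup.subgroupOf_map_subtype,
      Subgroup.card_map_of_injective N.subtype_injective]
  have h5 : Nat.card A ≤ p ^ e * Nat.card (A ⊓ N : Subgroup M) := by
    have h6 := (N.subgroupOf A).index_mul_card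
    rw [← h6, inf_comm, ← Subgroup.subgroupOf_map_subtype,
      Subgroup.card_map_of_injective A.subtype_injective]
    refine Nat.mul_le_mul_right _ ?_
    refine le_trans (Nat.le_of_dvd (Nat.pos_of_ne_zero ?_) ?_) hidx
    · exact Subgroup.index_ne_zero_of_finite
    · have : (powMonoidHom p : A →* A).range ≤ N.subgroupOf A := by
        rintro _ ⟨x, rfl⟩
        exact hN x
      exact Subgroup.index_dvd_of_le this
  have h7 := N.index_mul_card
  rw [h2, h3] at h7
  have hpos : 0 < Nat.card (N.map f) * Nat.card (A ⊓ N : Subgroup M) :=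
    Nat.mul_pos Nat.card_pos Nat.card_pos
  refine Nat.le_of_mul_le_mul_right ?_ hpos
  rw [h7, pow_add]
  calc _ ≤ _ := Nat.mul_le_mul h1 h5
    _ = _ := by ring

/-! ### Weights and scalar operators -/

/-- Common eigenvectors with distinct weights are linearly independent. -/
theorem linearIndependent_of_weights {F V A ι : Type*} [Field F] [AddCommGroup V] [Module F V]
    (T : A → Module.End F V) (v : ι → V) (hv : ∀ i, v i ≠ 0) (χ : ι → A → F)
    (h : ∀ i a, T a (v i) = χ i a • v i) (hχ : Function.Injective χ) : LinearIndependent F v := by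
  classical
  rw [linearIndependent_iff']
  intro s
  induction s using Finset.induction_on with
  | empty => simp
  | insert i t hit ih =>
    intro c hc
    have h1 : ∀ a, ∑ j ∈ t, (c j * (χ j a - χ i a)) • v j = 0 := by
      intro a
      have h2 := congrArg (T a) hc
      have h3 := congrArg (fun w => χ i a • w) hc
      simp only [map_sum, map_smul, h, map_zero, smul_zero, Finset.smul_sum] at h2 h3
      rw [Finset.sum_insert hit] at h2 h3
      have h4 := h2.trans h3.symm
      rw [smul_comm (c i) (χ i a), add_right_inj] at h4
      rw [← sub_eq_zero, ← Finset.sum_sub_distrib] at h4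
      rw [← h4]
      refine Finset.sum_congr rfl fun j _ => ?_
      rw [smul_smul, smul_smul, ← sub_smul, mul_sub, mul_comm (χ i a)]
    have h5 : ∀ j ∈ t, c j = 0 := by
      intro j hj
      have hne : χ j ≠ χ i := fun e => hit (hχ e ▸ hj)
      obtain ⟨a, ha⟩ := Function.ne_iff.mp hne
      exact (mul_eq_zero.mp (ih _ (h1 a) j hj)).resolve_right (sub_ne_zero.mpr ha)
    rw [Finset.sum_insert hit, Finset.sum_eq_zero (fun j hj => by rw [h5 j hj, zero_smul]),
      add_zero] at hc
    intro j hj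
    rcases Finset.mem_insert.mp hj with rfl | hj
    · exact (smul_eq_zero.mp hc).resolve_right (hv _)
    · exact h5 j hj

/-- In a sequence of common eigenvectors a weight recurs after at most `dim V` steps. -/
theorem exists_weight_eq {F V A : Type*} [Field F] [AddCommGroup V] [Module F V]
    [FiniteDimensional F V] (T : A → Module.End F V) (v : ℕ → V) (hv : ∀ i, v i ≠ 0)
    (χ : ℕ → A → F) (h : ∀ i a, T a (v i) = χ i a • v i) :
    ∃ i l, 0 < l ∧ l ≤ Module.finrank F V ∧ χ i = χ (i + l) := by
  by_contra hcon
  push Not at hcon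
  have h1 : LinearIndependent F (fun i : Fin (Module.finrank F V + 1) => v i) := by
    refine linearIndependent_of_weights T _ (fun i => hv i) (fun i => χ i) (fun i a => h i a) ?_
    intro i j hij
    by_contra hne
    rcases lt_or_gt_of_ne hne with hlt | hlt
    · have h2 : (i : ℕ) < j := hlt
      refine hcon i (j - i) (by omega) (by omega) ?_
      rw [Nat.add_sub_cancel' h2.le]; exact hij
    · have h2 : (j : ℕ) < i := hlt
      refine hcon j (i - j) (by omega) (by omega) ?_
      rw [Nat.add_sub_cancel' h2.le]; exact hij.symm
  have h2 := h1.fintype_card_le_finrank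
  simp at h2

/-- A commuting family of operators over an algebraically closed field has a common eigenvector. -/
theorem exists_common_eigenvector {F V A : Type*} [Field F] [IsAlgClosed F] [AddCommGroup V]
    [Module F V] [FiniteDimensional F V] [Nontrivial V] (T : A → Module.End F V)
    (hT : ∀ a b, T a * T b = T b * T a) : ∃ (χ : A → F) (v : V), v ≠ 0 ∧ ∀ a, T a v = χ a • v := by
  obtain ⟨W, ⟨hW0, hWT⟩, hmin⟩ := exists_minimal_of_wellFoundedLT
    (fun W : Submodule F V => W ≠ ⊥ ∧ ∀ a, ∀ w ∈ W, T a w ∈ W)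
    ⟨⊤, top_ne_bot, fun _ _ _ => Submodule.mem_top⟩
  have : Nontrivial W := Submodule.nontrivial_iff_ne_bot.mpr hW0
  have hsc : ∀ a, ∃ c : F, ∀ w ∈ W, T a w = c • w := by
    intro a
    obtain ⟨c, hc⟩ := Module.End.exists_eigenvalue ((T a).restrict (hWT a))
    refine ⟨c, ?_⟩
    obtain ⟨w, hw⟩ := hc.exists_hasEigenvector
    have hle : W ≤ W ⊓ Module.End.eigenspace (T a) c := by
      refine hmin ⟨?_, ?_⟩ inf_le_left
      · rw [Submodule.ne_bot_iff]
        refine ⟨w, ⟨w.2, Module.End.mem_eigenspace_iff.mpr ?_⟩, fun h => hw.2 (Subtype.ext h)⟩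
        exact congrArg Subtype.val hw.apply_eq_smul
      · rintro b u ⟨huW, hu⟩
        refine ⟨hWT b u huW, Module.End.mem_eigenspace_iff.mpr ?_⟩
        have h1 := Module.End.mem_eigenspace_iff.mp hu
        have h2 := DFunLike.congr_fun (hT a b) u
        rw [Module.End.mul_apply, Module.End.mul_apply, h1, map_smul] at h2
        exact h2
    exact fun w hw => Module.End.mem_eigenspace_iff.mp (hle hw).2
  choose χ hχ using hsc
  obtain ⟨v, hv, hv0⟩ := (Submodule.ne_bot_iff W).mp hW0
  exact ⟨χ, v, hv0, fun a => hχ a v hv⟩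

section
variable {F V H : Type} [Field F] [AddCommGroup V] [Module F V] [Group H]

theorem rep_mul_inv (ρ : H →* Module.End F V) (x : H) : ρ x * ρ x⁻¹ = 1 := by
  rw [← map_mul, mul_inv_cancel, map_one]

theorem rep_inv_mul (ρ : H →* Module.End F V) (x : H) : ρ x⁻¹ * ρ x = 1 := by
  rw [← map_mul, inv_mul_cancel, map_one]

/-- The subgroup of elements acting by nonzero scalars. -/
def scalarSubgroup (ρ : H →* Module.End F V) : Subgroup H where
  carrier := {h | ∃ c : F, c ≠ 0 ∧ ρ h = c • 1}
  one_mem' := ⟨1, one_ne_zero, by simp⟩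
  mul_mem' := by
    rintro x y ⟨a, ha, hx⟩ ⟨b, hb, hy⟩
    exact ⟨a * b, mul_ne_zero ha hb, by rw [map_mul, hx, hy, smul_mul_smul_comm, one_mul]⟩
  inv_mem' := by
    rintro x ⟨a, ha, hx⟩
    refine ⟨a⁻¹, inv_ne_zero ha, ?_⟩
    have h1 := rep_mul_inv ρ x
    rw [hx, smul_mul_assoc, one_mul] at h1
    rw [← h1, smul_smul, inv_mul_cancel₀ ha, one_smul]

instance scalarSubgroup_normal (ρ : H →* Module.End F V) : (scalarSubgroup ρ).Normal := by
  constructor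
  rintro h ⟨c, hc, hh⟩ g
  refine ⟨c, hc, ?_⟩
  rw [map_mul, map_mul, hh, mul_smul_comm, mul_one, smul_mul_assoc, rep_mul_inv]

theorem mem_scalarSubgroup [Nontrivial V] (ρ : H →* Module.End F V) {h : H} {c : F}
    (hc : ρ h = c • 1) : h ∈ scalarSubgroup ρ := by
  refine ⟨c, ?_, hc⟩
  rintro rfl
  have := rep_mul_inv ρ h
  rw [hc, zero_smul, zero_mul] at this
  exact zero_ne_one this

end

/-! ### Proper subspaces stable under bounded powers -/

section
variable {F V H : Type} [Field F] [AddCommGroup V] [Module F V] [Group H]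

theorem stable_pow (ρ : H →* Module.End F V) (W : Submodule F V) {y : H}
    (h : ∀ w ∈ W, ρ y w ∈ W) (t : ℕ) : ∀ w ∈ W, ρ (y ^ t) w ∈ W := by
  induction t with
  | zero => intro w hw; simpa using hw
  | succ t ih =>
    intro w hw
    rw [pow_succ, map_mul]
    exact ih _ (h w hw)

/-- If a normal subgroup `A` acts by commuting operators that are not all scalar, a weight space of
`A` is a proper nonzero subspace. Each `x` permutes the weights, and the orbit of the chosen one has
length at most `dim V`, so `x ^ r!` preserves its weight space. -/
theorem exists_stable_of_abelian [IsAlgClosed F] [FiniteDimensional F V] [Nontrivial V]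
    (ρ : H →* Module.End F V) (A : Subgroup H) (hAn : A.Normal)
    (hA : ∀ a ∈ A, ∀ b ∈ A, ρ a * ρ b = ρ b * ρ a) (hAZ : ¬ A ≤ scalarSubgroup ρ) {r : ℕ}
    (hr : Module.finrank F V ≤ r) :
    ∃ W : Submodule F V, W ≠ ⊥ ∧ W ≠ ⊤ ∧ ∀ x, ∀ w ∈ W, ρ (x ^ r.factorial) w ∈ W := by
  classical
  obtain ⟨χ₀, v, hv0, hχ₀⟩ := exists_common_eigenvector (fun a : A => ρ a)
    (fun a b => hA a a.2 b b.2)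
  obtain ⟨χ, hχ⟩ : ∃ χ : H → F, ∀ a ∈ A, ρ a v = χ a • v :=
    ⟨fun h => if hh : h ∈ A then χ₀ ⟨h, hh⟩ else 0, fun a ha => by
      simpa only [dif_pos ha] using hχ₀ ⟨a, ha⟩⟩
  let W : Submodule F V := ⨅ a : A, Module.End.eigenspace (ρ a) (χ a)
  have hWm : ∀ w, w ∈ W ↔ ∀ a ∈ A, ρ a w = χ a • w := by
    intro w
    simp [W, Submodule.mem_iInf]
  refine ⟨W, ?_, ?_, ?_⟩
  · rw [Submodule.ne_bot_iff]
    exact ⟨v, (hWm v).mpr hχ, hv0⟩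
  · intro htop
    apply hAZ
    intro a ha
    refine mem_scalarSubgroup ρ (c := χ a) ?_
    ext w
    have := (hWm w).mp (by rw [htop]; trivial) a ha
    simpa using this
  · intro x
    have hconj : ∀ (y : H) (w : V) (a : H) (c : F), ρ (y⁻¹ * a * y) w = c • w →
        ρ a (ρ y w) = c • ρ y w := by
      intro y w a c h
      have h1 : a * y = y * (y⁻¹ * a * y) := by group
      rw [← Module.End.mul_apply, ← map_mul, h1, map_mul, Module.End.mul_apply, h, map_smul]
    obtain ⟨i, l, hl0, hl, hil⟩ := exists_weight_eq (fun a : A => ρ a) (fun j => ρ (x ^ j) v)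
      (fun j h0 => hv0 (by
        have := DFunLike.congr_fun (rep_inv_mul ρ (x ^ j)) v
        rw [Module.End.mul_apply, h0, map_zero] at this
        exact this.symm))
      (fun j a => χ ((x ^ j)⁻¹ * a * x ^ j))
      (fun j a => hconj _ _ _ _ (hχ _ (by simpa using hAn.conj_mem a a.2 (x ^ j)⁻¹)))
    have hχl : ∀ a ∈ A, χ ((x ^ l)⁻¹ * a * x ^ l) = χ a := by
      intro a ha
      have := congrFun hil ⟨x ^ i * a * (x ^ i)⁻¹, hAn.conj_mem a ha _⟩
      simp only at this
      have e1 : (x ^ i)⁻¹ * (x ^ i * a * (x ^ i)⁻¹) * x ^ i = a := by group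
      have e2 : (x ^ (i + l))⁻¹ * (x ^ i * a * (x ^ i)⁻¹) * x ^ (i + l) =
          (x ^ l)⁻¹ * a * x ^ l := by rw [pow_add]; group
      rw [e1, e2] at this
      exact this.symm
    obtain ⟨t, ht⟩ := Nat.dvd_factorial hl0 (hl.trans hr)
    rw [ht, pow_mul]
    refine stable_pow ρ W ?_ t
    intro w hw
    rw [hWm] at hw ⊢
    intro a ha
    refine hconj _ _ _ _ ?_
    rw [hw _ (by simpa using hAn.conj_mem a ha (x ^ l)⁻¹), hχl a ha]

theorem pow_conj_smul (ρ : H →* Module.End F V) {y n : H} {ζ : F}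
    (h : ρ y * ρ n = ζ • (ρ n * ρ y)) (t : ℕ) :
    ρ (y ^ t) * ρ n = ζ ^ t • (ρ n * ρ (y ^ t)) := by
  induction t with
  | zero => simp
  | succ t ih =>
    rw [pow_succ y, map_mul, mul_assoc, h, mul_smul_comm, ← mul_assoc, ih, smul_mul_assoc, smul_smul,
      mul_assoc, pow_succ']

/-- The case where every normal subgroup acting by commuting operators is scalar, but some normal
`N` is non-scalar with scalar commutators. An eigenspace of a non-scalar `n ∈ N` works: `N` acts on
`End V` by conjugation and the conjugates `x ^ j n x ^ (-j)` are weight vectors, so for some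
`l ≤ r ^ 2` the operators of `x ^ l` and `n` commute up to a scalar, which is a root of unity of
order dividing `dim V`. -/
theorem exists_stable_of_class_two [IsAlgClosed F] [FiniteDimensional F V] [Nontrivial V]
    (ρ : H →* Module.End F V)
    (hZ : ∀ A : Subgroup H, A.Normal → (∀ a ∈ A, ∀ b ∈ A, ρ a * ρ b = ρ b * ρ a) →
      A ≤ scalarSubgroup ρ)
    (N : Subgroup H) (hNn : N.Normal) (hNN : ⁅N, N⁆ ≤ scalarSubgroup ρ)
    (hN : ¬ N ≤ scalarSubgroup ρ) {r : ℕ} (hr : Module.finrank F V ≤ r) :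
    ∃ W : Submodule F V, W ≠ ⊥ ∧ W ≠ ⊤ ∧
      ∀ x, ∀ w ∈ W, ρ (x ^ ((r * r).factorial * r.factorial)) w ∈ W := by
  obtain ⟨n, hnN, hnZ⟩ := SetLike.not_le_iff_exists.mp hN
  obtain ⟨μ, hμ⟩ := Module.End.exists_eigenvalue (ρ n)
  refine ⟨Module.End.eigenspace (ρ n) μ, hμ, ?_, ?_⟩
  · intro htop
    refine hnZ (mem_scalarSubgroup ρ (c := μ) ?_)
    ext w
    have : w ∈ Module.End.eigenspace (ρ n) μ := by rw [htop]; trivial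
    simpa using Module.End.mem_eigenspace_iff.mp this
  intro x
  -- it is enough that this power of `x` commutes with `n` on `V`
  suffices hcomm : ρ (x ^ ((r * r).factorial * r.factorial)) * ρ n =
      ρ n * ρ (x ^ ((r * r).factorial * r.factorial)) by
    intro w hw
    rw [Module.End.mem_eigenspace_iff] at hw ⊢
    rw [← Module.End.mul_apply, ← hcomm, Module.End.mul_apply, hw, map_smul]
  -- the elements of `N` whose operators commute with all those of `N`; they act as scalars
  let C : Subgroup H :=
    { carrier := {c | c ∈ N ∧ ∀ a ∈ N, ρ a * ρ c = ρ c * ρ a}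
      one_mem' := ⟨N.one_mem, fun a _ => by simp⟩
      mul_mem' := by
        rintro c d ⟨hc, hc'⟩ ⟨hd, hd'⟩
        refine ⟨N.mul_mem hc hd, fun a ha => ?_⟩
        rw [map_mul, ← mul_assoc, hc' a ha, mul_assoc, hd' a ha, mul_assoc]
      inv_mem' := by
        rintro c ⟨hc, hc'⟩
        refine ⟨N.inv_mem hc, fun a ha => ?_⟩
        have h1 := congrArg (fun z => ρ c⁻¹ * z * ρ c⁻¹) (hc' a ha)
        simp only [← map_mul] at h1 ⊢
        have e1 : c⁻¹ * (a * c) * c⁻¹ = c⁻¹ * a := by group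
        have e2 : c⁻¹ * (c * a) * c⁻¹ = a * c⁻¹ := by group
        rw [e1, e2] at h1
        exact h1.symm }
  have hCn : C.Normal := by
    constructor
    rintro c ⟨hc, hc'⟩ g
    refine ⟨hNn.conj_mem c hc g, fun a ha => ?_⟩
    have h1 := hc' (g⁻¹ * a * g) (by simpa using hNn.conj_mem a ha g⁻¹)
    have h2 := congrArg (fun z => ρ g * z * ρ g⁻¹) h1
    simp only [← map_mul] at h2 ⊢
    have e1 : g * (g⁻¹ * a * g * c) * g⁻¹ = a * (g * c * g⁻¹) := by group
    have e2 : g * (c * (g⁻¹ * a * g)) * g⁻¹ = g * c * g⁻¹ * a := by group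
    rwa [e1, e2] at h2
  have hCZ : C ≤ scalarSubgroup ρ := hZ C hCn fun a ha b hb => hb.2 a ha.1
  set nn : ℕ → H := fun j => x ^ j * n * (x ^ j)⁻¹ with hnn
  have hnnN : ∀ j, nn j ∈ N := fun j => hNn.conj_mem n hnN _
  have hw : ∀ j (a : N), ∃ c : F, ρ (a * nn j * (a : H)⁻¹) = c • ρ (nn j) := by
    intro j a
    obtain ⟨c, -, hc⟩ := hNN (Subgroup.commutator_mem_commutator a.2 (hnnN j))
    refine ⟨c, ?_⟩
    have e : (a : H) * nn j * (a : H)⁻¹ = ⁅(a : H), nn j⁆ * nn j := by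
      rw [commutatorElement_def]; group
    rw [e, map_mul, hc, smul_mul_assoc, one_mul]
  choose χ hχ using hw
  obtain ⟨i, l, hl0, hl, hil⟩ := exists_weight_eq
    (fun a : N => (LinearMap.mulLeft F (ρ a)).comp (LinearMap.mulRight F (ρ (a : H)⁻¹)))
    (fun j => ρ (nn j))
    (fun j h0 => by
      have := rep_mul_inv ρ (nn j)
      rw [h0, zero_mul] at this
      exact zero_ne_one this)
    χ (fun j a => by
      rw [← hχ]
      change ρ a * (ρ (nn j) * ρ (a : H)⁻¹) = _
      rw [← map_mul, ← map_mul]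
      exact congrArg ρ (mul_assoc _ _ _).symm)
  rw [Module.finrank_linearMap] at hl
  have hcC : (nn i)⁻¹ * nn (i + l) ∈ C := by
    refine ⟨N.mul_mem (N.inv_mem (hnnN _)) (hnnN _), fun a ha => ?_⟩
    have h1 := hχ i ⟨a, ha⟩
    have h2 := hχ (i + l) ⟨a, ha⟩
    rw [← hil] at h2
    simp only at h1 h2
    have h3 : ρ (a * nn i * a⁻¹) * (ρ (nn i)⁻¹ * ρ (nn (i + l))) = ρ (a * nn (i + l) * a⁻¹) := by
      rw [h1, h2, smul_mul_assoc, ← mul_assoc, rep_mul_inv, one_mul]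
    have h4 := congrArg (fun z => ρ (a * (nn i)⁻¹ * a⁻¹) * z * ρ a) h3
    simp only [← map_mul] at h4 ⊢
    have e1 : a * (nn i)⁻¹ * a⁻¹ * (a * nn i * a⁻¹ * ((nn i)⁻¹ * nn (i + l))) * a =
        (nn i)⁻¹ * nn (i + l) * a := by group
    have e2 : a * (nn i)⁻¹ * a⁻¹ * (a * nn (i + l) * a⁻¹) * a =
        a * ((nn i)⁻¹ * nn (i + l)) := by group
    rw [e1, e2] at h4
    exact h4.symm
  obtain ⟨ζ, -, hζ⟩ : n⁻¹ * (x ^ l * n * (x ^ l)⁻¹) ∈ scalarSubgroup ρ := by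
    have h1 := (scalarSubgroup_normal ρ).conj_mem _ (hCZ hcC) (x ^ i)⁻¹
    have e : (x ^ i)⁻¹ * ((nn i)⁻¹ * nn (i + l)) * (x ^ i)⁻¹⁻¹ =
        n⁻¹ * (x ^ l * n * (x ^ l)⁻¹) := by
      simp only [hnn]; rw [pow_add]; group
    rwa [e] at h1
  have hy : ρ (x ^ l) * ρ n = ζ • (ρ n * ρ (x ^ l)) := by
    have e : x ^ l * n = n * (n⁻¹ * (x ^ l * n * (x ^ l)⁻¹)) * x ^ l := by group
    rw [← map_mul, e, map_mul, map_mul, hζ, mul_smul_comm, mul_one, smul_mul_assoc]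
  have hdet : ∀ g, LinearMap.det (ρ g) ≠ 0 := by
    intro g h0
    have := congrArg LinearMap.det (rep_mul_inv ρ g)
    rw [map_mul, h0, zero_mul, map_one] at this
    exact zero_ne_one this
  -- compare determinants
  have hζd : ζ ^ Module.finrank F V = 1 := by
    have := congrArg LinearMap.det hy
    rw [LinearMap.det_smul, map_mul, map_mul, mul_comm (LinearMap.det (ρ n))] at this
    exact (mul_eq_right₀ (mul_ne_zero (hdet _) (hdet _))).mp this.symm
  obtain ⟨s, hs⟩ := Nat.dvd_factorial hl0 (hl.trans (Nat.mul_le_mul hr hr))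
  obtain ⟨u, hu⟩ := Nat.dvd_factorial (Module.finrank_pos (R := F) (M := V)) hr
  have h5 := pow_conj_smul ρ hy (s * r.factorial)
  have h6 : ζ ^ (s * r.factorial) = 1 := by
    rw [hu, mul_left_comm, pow_mul, hζd, one_pow]
  rwa [h6, one_smul, ← pow_mul, ← mul_assoc, ← hs] at h5

/-- For a solvable group acting on a space of dimension between `2` and `r`, one exponent depending
only on `r` is such that these powers of all elements preserve a common proper nonzero subspace. -/
theorem exists_stable [IsAlgClosed F] [FiniteDimensional F V] [Group.IsSolvable H]
    (ρ : H →* Module.End F V) {r : ℕ} (h2 : 2 ≤ Module.finrank F V)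
    (hr : Module.finrank F V ≤ r) :
    ∃ W : Submodule F V, W ≠ ⊥ ∧ W ≠ ⊤ ∧
      ∀ x, ∀ w ∈ W, ρ (x ^ ((r * r).factorial * r.factorial)) w ∈ W := by
  have : Nontrivial V := Module.nontrivial_of_finrank_pos (R := F) (by omega)
  by_cases hZ : ∀ A : Subgroup H, A.Normal → (∀ a ∈ A, ∀ b ∈ A, ρ a * ρ b = ρ b * ρ a) →
      A ≤ scalarSubgroup ρ
  · by_cases htop : (⊤ : Subgroup H) ≤ scalarSubgroup ρ
    · obtain ⟨v, hv⟩ := exists_ne (0 : V)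
      refine ⟨F ∙ v, by simpa using hv, ?_, ?_⟩
      · intro h
        have h3 := finrank_span_singleton (K := F) hv
        rw [h, finrank_top] at h3
        omega
      · intro x w hw
        obtain ⟨c, -, hc⟩ := htop (Subgroup.mem_top (x ^ ((r * r).factorial * r.factorial)))
        rw [hc]
        exact Submodule.smul_mem _ c hw
    · classical
      have hex : ∃ i, derivedSeries H i ≤ scalarSubgroup ρ := by
        obtain ⟨n, hn⟩ := (Group.isSolvable_def (G := H)).mp inferInstance
        exact ⟨n, by rw [hn]; exact bot_le⟩
      have hspec := Nat.find_spec hex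
      have h0 : Nat.find hex ≠ 0 := by
        intro h0
        rw [h0] at hspec
        exact htop hspec
      obtain ⟨j, hj⟩ := Nat.exists_eq_succ_of_ne_zero h0
      refine exists_stable_of_class_two ρ hZ (derivedSeries H j) inferInstance ?_ ?_ hr
      · rw [hj] at hspec
        exact hspec
      · exact Nat.find_min hex (by omega)
  · push Not at hZ
    obtain ⟨A, hAn, hA, hAZ⟩ := hZ
    obtain ⟨W, hW0, hW1, hW⟩ := exists_stable_of_abelian ρ A hAn hA hAZ hr
    refine ⟨W, hW0, hW1, fun x => ?_⟩
    rw [mul_comm, pow_mul]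
    exact stable_pow ρ W (hW x) _

end

/-! ### Unipotent commutators of powers in solvable linear groups -/

/-- The subgroup generated by all `m`-th powers. -/
def powSubgroup (H : Type*) [Group H] (m : ℕ) : Subgroup H :=
  Subgroup.closure (Set.range fun x : H => x ^ m)

theorem pow_mem_powSubgroup {H : Type*} [Group H] (m : ℕ) (x : H) : x ^ m ∈ powSubgroup H m :=
  Subgroup.subset_closure ⟨x, rfl⟩

theorem powSubgroup_mul_le (H : Type*) [Group H] (m n : ℕ) :
    powSubgroup H (m * n) ≤ (powSubgroup (powSubgroup H m) n).map (powSubgroup H m).subtype := by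
  refine (Subgroup.closure_le _).mpr ?_
  rintro _ ⟨x, rfl⟩
  refine ⟨⟨x ^ m, pow_mem_powSubgroup m x⟩ ^ n, pow_mem_powSubgroup n _, ?_⟩
  simp [pow_mul]

theorem isNilpotent_of_restrict_of_mapQ {F V : Type*} [Field F] [AddCommGroup V] [Module F V]
    (f : Module.End F V) (W : Submodule F V) (fW : Module.End F W) (fQ : Module.End F (V ⧸ W))
    (hW : ∀ w : W, (fW w : V) = f w) (hQ : ∀ v : V, fQ (W.mkQ v) = W.mkQ (f v))
    (h1 : IsNilpotent fW) (h2 : IsNilpotent fQ) : IsNilpotent f := by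
  obtain ⟨a, ha⟩ := h1
  obtain ⟨b, hb⟩ := h2
  have h3 : ∀ n (w : W), ((fW ^ n) w : V) = (f ^ n) w := by
    intro n
    induction n with
    | zero => simp
    | succ n ih => intro w; rw [pow_succ, pow_succ, Module.End.mul_apply, Module.End.mul_apply, ih, hW]
  have h4 : ∀ n (v : V), (fQ ^ n) (W.mkQ v) = W.mkQ ((f ^ n) v) := by
    intro n
    induction n with
    | zero => simp
    | succ n ih => intro w; rw [pow_succ, pow_succ, Module.End.mul_apply, Module.End.mul_apply, hQ, ih]
  refine ⟨a + b, ?_⟩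
  ext v
  have h5 : (f ^ b) v ∈ W := by
    have := h4 b v
    rw [hb, LinearMap.zero_apply] at this
    exact (Submodule.Quotient.mk_eq_zero W).mp this.symm
  have h6 := h3 a ⟨_, h5⟩
  rw [ha] at h6
  rw [pow_add, Module.End.mul_apply]
  exact h6.symm

theorem end_commute_of_finrank_le_one {F V : Type*} [Field F] [AddCommGroup V] [Module F V]
    [FiniteDimensional F V] (h : Module.finrank F V ≤ 1) (f g : Module.End F V) :
    f * g = g * f := by
  obtain ⟨v, hv⟩ := finrank_le_one_iff.mp h
  obtain ⟨a, ha⟩ := hv (f v)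
  obtain ⟨b, hb⟩ := hv (g v)
  ext w
  obtain ⟨c, rfl⟩ := hv w
  simp only [Module.End.mul_apply, map_smul, ← ha, ← hb]
  rw [smul_comm a b]

/-- A weak form of Mal'cev's theorem: for solvable linear groups of degree at most `r` over an
algebraically closed field, commutators of the subgroup generated by `m`-th powers are unipotent, for
some `m` depending only on `r`. By induction on `r`, restricting to a stable subspace and to the
quotient by it. -/
theorem exists_pow_unipotent (r : ℕ) : ∃ m : ℕ, 0 < m ∧ ∀ (F V H : Type) [Field F] [IsAlgClosed F]
    [AddCommGroup V] [Module F V] [FiniteDimensional F V] [Group H] [Group.IsSolvable H]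
    (ρ : H →* Module.End F V), Module.finrank F V ≤ r →
    ∀ g ∈ ⁅powSubgroup H m, powSubgroup H m⁆, IsNilpotent (ρ g - 1) := by
  have hone : ∀ (F V H : Type) [Field F] [AddCommGroup V] [Module F V] [FiniteDimensional F V]
      [Group H] (ρ : H →* Module.End F V) (A : Subgroup H), Module.finrank F V ≤ 1 →
      ∀ g ∈ ⁅A, A⁆, IsNilpotent (ρ g - 1) := by
    intro F V H _ _ _ _ _ ρ A h1 g hg
    have hle : ⁅A, A⁆ ≤ ρ.ker := by
      rw [Subgroup.commutator_le]
      intro a _ b _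
      rw [MonoidHom.mem_ker, commutatorElement_def, map_mul, map_mul, map_mul,
        end_commute_of_finrank_le_one h1 (ρ a) (ρ b), mul_assoc (ρ b), rep_mul_inv, mul_one,
        rep_mul_inv]
    rw [MonoidHom.mem_ker.mp (hle hg), sub_self]
    exact IsNilpotent.zero
  induction r with
  | zero =>
    exact ⟨1, one_pos, fun F V H _ _ _ _ _ _ _ ρ h => hone F V H ρ _ (by omega)⟩
  | succ r ih =>
    obtain ⟨m₁, hm₁, ih⟩ := ih
    set m₀ := ((r + 1) * (r + 1)).factorial * (r + 1).factorial with hm₀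
    refine ⟨m₀ * m₁, Nat.mul_pos (Nat.mul_pos (Nat.factorial_pos _) (Nat.factorial_pos _)) hm₁, ?_⟩
    intro F V H _ _ _ _ _ _ _ ρ hr g hg
    by_cases h1 : Module.finrank F V ≤ 1
    · exact hone F V H ρ _ h1 g hg
    obtain ⟨W, hW0, hW1, hW⟩ := exists_stable ρ (by omega) hr
    have hY : ∀ y ∈ powSubgroup H m₀, (∀ w ∈ W, ρ y w ∈ W) ∧ ∀ w ∈ W, ρ y⁻¹ w ∈ W := by
      intro y hy
      induction hy using Subgroup.closure_induction with
      | mem y hy =>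
        obtain ⟨x, rfl⟩ := hy
        refine ⟨hW x, ?_⟩
        have := hW x⁻¹
        simpa only [inv_pow] using this
      | one => simp
      | mul x y _ _ hx hy =>
        refine ⟨fun w hw => ?_, fun w hw => ?_⟩
        · rw [map_mul]; exact hx.1 _ (hy.1 w hw)
        · rw [mul_inv_rev, map_mul]; exact hy.2 _ (hx.2 w hw)
      | inv x _ hx => exact ⟨hx.2, by simpa using hx.1⟩
    let ρW : powSubgroup H m₀ →* Module.End F W :=
      { toFun := fun y => (ρ y).restrict (hY y y.2).1
        map_one' := by ext; simp
        map_mul' := fun x y => by ext; simp }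
    let ρQ : powSubgroup H m₀ →* Module.End F (V ⧸ W) :=
      { toFun := fun y => W.mapQ W (ρ y) (hY y y.2).1
        map_one' := by ext; simp
        map_mul' := fun x y => by ext; simp }
    have hg' : g ∈ (⁅powSubgroup (powSubgroup H m₀) m₁, powSubgroup (powSubgroup H m₀) m₁⁆).map
        (powSubgroup H m₀).subtype := by
      rw [Subgroup.map_commutator]
      exact Subgroup.commutator_mono (powSubgroup_mul_le H m₀ m₁) (powSubgroup_mul_le H m₀ m₁) hg
    obtain ⟨y, hy, rfl⟩ := hg'
    have hfW : Module.finrank F W ≤ r := by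
      have := Submodule.finrank_lt hW1
      omega
    have hfQ : Module.finrank F (V ⧸ W) ≤ r := by
      have h3 := Submodule.finrank_quotient_add_finrank W
      have h4 : 0 < Module.finrank F W := Submodule.one_le_finrank_iff.mpr hW0
      omega
    refine isNilpotent_of_restrict_of_mapQ _ W (ρW y - 1) (ρQ y - 1) ?_ ?_
      (ih F W _ ρW hfW y hy) (ih F (V ⧸ W) _ ρQ hfQ y hy)
    · intro w; simp [ρW]
    · intro v; simp [ρQ]

/-- The same over `ZMod q`, by extension of scalars; `m` does not depend on `q`. -/
theorem exists_pow_unipotent_zmod (r : ℕ) : ∃ m : ℕ, 0 < m ∧ ∀ (q : ℕ) [Fact q.Prime] (V H : Type)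
    [AddCommGroup V] [Module (ZMod q) V] [FiniteDimensional (ZMod q) V] [Group H]
    [Group.IsSolvable H] (ρ : H →* Module.End (ZMod q) V), Module.finrank (ZMod q) V ≤ r →
    ∀ g ∈ ⁅powSubgroup H m, powSubgroup H m⁆, IsNilpotent (ρ g - 1) := by
  obtain ⟨m, hm, h⟩ := exists_pow_unipotent r
  refine ⟨m, hm, ?_⟩
  intro q _ V H _ _ _ _ _ ρ hr g hg
  let F := AlgebraicClosure (ZMod q)
  let β := Module.End.baseChangeHom (ZMod q) F V
  have hβ : Function.Injective β := LinearMap.baseChangeHom_injective (ZMod q) V F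
  have h1 := h F (TensorProduct (ZMod q) F V) H ((β : _ →* _).comp ρ)
    (by rw [Module.finrank_baseChange]; exact hr) g hg
  have h2 : IsNilpotent (β (ρ g - 1)) := by rw [map_sub, map_one]; exact h1
  exact (IsNilpotent.map_iff hβ).mp h2

/-! ### Groups of bounded elementary abelian rank -/

/-- Every elementary abelian `p`-subgroup of `X` has order at most `p ^ e`. -/
def ElementaryRankLE (p e : ℕ) (X : Type*) [Group X] : Prop :=
  ∀ E : Subgroup X, (∀ x ∈ E, ∀ y ∈ E, x * y = y * x) → (∀ x ∈ E, x ^ p = 1) → Nat.card E ≤ p ^ e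

theorem ElementaryRankLE.subgroup {p e : ℕ} {X : Type*} [Group X] (h : ElementaryRankLE p e X)
    (Y : Subgroup X) : ElementaryRankLE p e Y := by
  intro E hc hp
  rw [← Subgroup.card_map_of_injective (K := E) Y.subtype_injective]
  refine h _ ?_ ?_
  · rintro _ ⟨x, hx, rfl⟩ _ ⟨y, hy, rfl⟩
    rw [← map_mul, hc x hx y hy, map_mul]
  · rintro _ ⟨x, hx, rfl⟩
    rw [← map_pow, hp x hx, map_one]

/-- The bound for subgroups containing all `p`-th powers passes to `p`-groups that are quotients of
`X`, as these are images of a Sylow subgroup of `X`. -/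
theorem index_le_of_surjective {X T : Type*} [Group X] [Finite X] [Group T] {p e : ℕ}
    [Fact p.Prime] (hX : ElementaryRankLE p e X) (θ : X →* T) (hθ : Function.Surjective θ)
    (hT : IsPGroup p T) (N : Subgroup T) (hN : ∀ t, t ^ p ∈ N) :
    N.index ≤ p ^ (3 * (e * e) + e) := by
  let P : Sylow p X := Sylow.nonempty.some
  have htop : (P : Subgroup X).map θ = ⊤ := by
    have h1 := (P.mapSurjective hθ).3 (Q := ⊤) (hT.of_injective (⊤ : Subgroup T).subtype
      (Subgroup.subtype_injective _)) le_top
    exact h1.symm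
  have hsurj : Function.Surjective (θ.comp (P : Subgroup X).subtype) := by
    rw [← MonoidHom.range_eq_top, MonoidHom.range_comp, Subgroup.range_subtype, htop]
  rw [← N.index_comap_of_surjective hsurj]
  refine P.2.index_le_of_forall_pow_mem (hX.subgroup _) _ fun x => ?_
  rw [Subgroup.mem_comap, map_pow]
  exact hN _

theorem powSubgroup_map {H K : Type*} [Group H] [Group K] (φ : H →* K)
    (hφ : Function.Surjective φ) (m : ℕ) : (powSubgroup H m).map φ = powSubgroup K m := by
  unfold powSubgroup
  rw [MonoidHom.map_closure]
  congr 1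
  ext y
  constructor
  · rintro ⟨_, ⟨x, rfl⟩, rfl⟩
    exact ⟨φ x, (map_pow φ x m).symm⟩
  · rintro ⟨z, rfl⟩
    obtain ⟨x, rfl⟩ := hφ z
    exact ⟨x ^ m, ⟨x, rfl⟩, map_pow φ x m⟩

instance powSubgroup_normal {H : Type*} [Group H] (m : ℕ) : (powSubgroup H m).Normal := by
  constructor
  intro n hn g
  have h1 := powSubgroup_map (MulAut.conj g).toMonoidHom (MulAut.conj g).surjective m
  rw [← h1]
  exact ⟨n, hn, rfl⟩

/-- A minimal normal subgroup of a finite solvable group is elementary abelian. -/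
theorem elementary_of_minimal {H : Type*} [Group H] [Finite H] [Group.IsSolvable H]
    (M : Subgroup H) (hMn : M.Normal) (hM : M ≠ ⊥)
    (hmin : ∀ K : Subgroup H, K.Normal → K ≤ M → K ≠ ⊥ → K = M) :
    (∀ x ∈ M, ∀ y ∈ M, x * y = y * x) ∧ ∃ q, q.Prime ∧ ∀ x ∈ M, x ^ q = 1 := by
  have hcomm : ⁅M, M⁆ = ⊥ := by
    by_contra hne
    have h1 : ⁅M, M⁆ = M := hmin _ inferInstance (Subgroup.commutator_le_left M M) hne
    have h2 : ∀ n, M ≤ derivedSeries H n := by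
      intro n
      induction n with
      | zero => exact le_top
      | succ n ih =>
        rw [derivedSeries_succ]
        calc M = ⁅M, M⁆ := h1.symm
          _ ≤ _ := Subgroup.commutator_mono ih ih
    obtain ⟨n, hn⟩ := (Group.isSolvable_def (G := H)).mp inferInstance
    exact hM (le_bot_iff.mp (hn ▸ h2 n))
  have hab : ∀ x ∈ M, ∀ y ∈ M, x * y = y * x := by
    intro x hx y hy
    have := Subgroup.commutator_mem_commutator hx hy
    rw [hcomm, Subgroup.mem_bot] at this
    exact commutatorElement_eq_one_iff_mul_comm.mp this
  refine ⟨hab, ?_⟩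
  have hcard : Nat.card M ≠ 1 := fun h => hM (Subgroup.card_eq_one.mp h)
  obtain ⟨q, hq, hqd⟩ := Nat.exists_prime_and_dvd hcard
  have : Fact q.Prime := ⟨hq⟩
  obtain ⟨x, hx⟩ := exists_prime_orderOf_dvd_card' (G := M) q hqd
  let T : Subgroup H :=
    { carrier := {t | t ∈ M ∧ t ^ q = 1}
      one_mem' := ⟨M.one_mem, one_pow q⟩
      mul_mem' := by
        rintro a b ⟨ha, ha'⟩ ⟨hb, hb'⟩
        exact ⟨M.mul_mem ha hb, by rw [(show Commute a b from hab a ha b hb).mul_pow, ha', hb',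
          one_mul]⟩
      inv_mem' := by
        rintro a ⟨ha, ha'⟩
        exact ⟨M.inv_mem ha, by rw [inv_pow, ha', inv_one]⟩ }
  have hT : T = M := by
    refine hmin T ⟨?_⟩ (fun t ht => ht.1) ?_
    · rintro t ⟨ht, ht'⟩ g
      exact ⟨hMn.conj_mem t ht g, by rw [conj_pow, ht']; simp⟩
    · intro hbot
      have hxT : (x : H) ∈ T := ⟨x.2, by
        have := pow_orderOf_eq_one x
        rw [hx] at this
        exact congrArg Subtype.val this⟩
      rw [hbot, Subgroup.mem_bot] at hxT
      have h1 : x = 1 := Subtype.ext hxT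
      rw [h1, orderOf_one] at hx
      exact hq.one_lt.ne hx
  refine ⟨q, hq, fun x hx => ?_⟩
  rw [← hT] at hx
  exact hx.2

theorem pow_eq_one_of_isNilpotent {q : ℕ} [Fact q.Prime] {V : Type*} [AddCommGroup V]
    [Module (ZMod q) V] [Nontrivial V] (u : Module.End (ZMod q) V) (h : IsNilpotent (u - 1)) :
    ∃ k : ℕ, u ^ q ^ k = 1 := by
  obtain ⟨n, hn⟩ := h
  have : CharP (Module.End (ZMod q) V) q := charP_of_injective_algebraMap
    (FaithfulSMul.algebraMap_injective (ZMod q) (Module.End (ZMod q) V)) q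
  refine ⟨n, ?_⟩
  have h1 := sub_pow_char_pow_of_commute (p := q) (n := n) (Commute.one_right u)
  have h2 : (u - 1) ^ q ^ n = 0 :=
    pow_eq_zero_of_le (Nat.lt_pow_self (Nat.Prime.one_lt Fact.out)).le hn
  rw [h2, one_pow] at h1
  exact (sub_eq_zero.mp h1.symm)

/-- A group of unipotent operators on a nonzero finite space has a nonzero fixed vector. -/
theorem exists_fixed_of_unipotent {q : ℕ} [Fact q.Prime] {V H : Type*} [AddCommGroup V] [Finite V]
    [Nontrivial V] [Module (ZMod q) V] [Group H] (ρ : H →* Module.End (ZMod q) V) (D : Subgroup H)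
    (hD : ∀ g ∈ D, IsNilpotent (ρ g - 1)) : ∃ v : V, v ≠ 0 ∧ ∀ g ∈ D, ρ g v = v := by
  let P : Subgroup (Module.End (ZMod q) V)ˣ := D.map ρ.toHomUnits
  have hP : IsPGroup q P := by
    rintro ⟨_, g, hg, rfl⟩
    obtain ⟨k, hk⟩ := pow_eq_one_of_isNilpotent _ (hD g hg)
    exact ⟨k, Subtype.ext (Units.ext hk)⟩
  have hdvd : q ∣ Nat.card V := by
    rw [Module.natCard_eq_pow_finrank (K := ZMod q) (V := V), Nat.card_zmod]
    exact dvd_pow_self q (Module.finrank_pos (R := ZMod q) (M := V)).ne'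
  obtain ⟨v, hv, hv0⟩ := hP.exists_fixed_point_of_prime_dvd_card_of_fixed_point V hdvd (a := 0)
    (fun u => smul_zero u)
  refine ⟨v, hv0.symm, fun g hg => ?_⟩
  exact hv ⟨ρ.toHomUnits g, g, hg, rfl⟩

/-! ### Nilpotency of the commutator of the power subgroup -/

open scoped IsMulCommutative in
/-- A normal subgroup `D` acting unipotently on a minimal normal subgroup `M` centralizes it, because
its fixed points form a nontrivial normal subgroup inside `M`. -/
theorem commutator_eq_bot_of_module {H : Type} [Group H] [Finite H]
    (M : Subgroup H) [M.Normal] [IsMulCommutative M] {q : ℕ} [Fact q.Prime]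
    [Module (ZMod q) (Additive M)] (D : Subgroup H) [D.Normal]
    {r : ℕ} (hcard : Nat.card M ≤ q ^ r)
    (hU : ∀ (V : Type) [AddCommGroup V] [Module (ZMod q) V] [FiniteDimensional (ZMod q) V]
      (ρ : H →* Module.End (ZMod q) V), Module.finrank (ZMod q) V ≤ r →
      ∀ g ∈ D, IsNilpotent (ρ g - 1))
    (hM : M ≠ ⊥) (hmin : ∀ K : Subgroup H, K.Normal → K ≤ M → K ≠ ⊥ → K = M) : ⁅M, D⁆ = ⊥ := by
  have : Nontrivial M := (Subgroup.nontrivial_iff_ne_bot M).mpr hM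
  let ρ : H →* Module.End (ZMod q) (Additive M) :=
    { toFun := fun g => AddMonoidHom.toZModLinearMap q (conjEnd M g)
      map_one' := by rw [map_one]; rfl
      map_mul' := fun g h => by rw [map_mul]; rfl }
  have hr : Module.finrank (ZMod q) (Additive M) ≤ r := by
    have h1 : Nat.card (Additive M) ≤ q ^ r := hcard
    rw [Module.natCard_eq_pow_finrank (K := ZMod q), Nat.card_zmod] at h1
    exact (Nat.pow_le_pow_iff_right (Nat.Prime.one_lt Fact.out)).mp h1
  obtain ⟨v, hv0, hv⟩ := exists_fixed_of_unipotent ρ D (hU _ ρ hr)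
  have hK : M ⊓ Subgroup.centralizer (D : Set H) = M := by
    refine hmin _ inferInstance inf_le_left ?_
    intro hbot
    have hmem : (v.toMul : H) ∈ M ⊓ Subgroup.centralizer (D : Set H) := by
      refine ⟨v.toMul.2, Subgroup.mem_centralizer_iff.mpr fun g hg => ?_⟩
      have h2 : g * (v.toMul : H) * g⁻¹ = v.toMul :=
        congrArg (fun x : Additive M => (x.toMul : H)) (hv g hg)
      exact mul_inv_eq_iff_eq_mul.mp h2
    rw [hbot, Subgroup.mem_bot] at hmem
    exact hv0 (Subtype.ext hmem)
  rw [Subgroup.commutator_eq_bot_iff_le_centralizer]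
  rw [← hK]
  exact inf_le_right

open scoped IsMulCommutative in
/-- The previous lemma with the `ZMod q`-module structure supplied by `x ^ q = 1`. -/
theorem commutator_eq_bot_of_minimal {H : Type} [Group H] [Finite H]
    (M : Subgroup H) [M.Normal] [IsMulCommutative M] {q : ℕ} [Fact q.Prime]
    (hexp : ∀ x ∈ M, x ^ q = 1) (D : Subgroup H) [D.Normal]
    {r : ℕ} (hcard : Nat.card M ≤ q ^ r)
    (hU : ∀ (V : Type) [AddCommGroup V] [Module (ZMod q) V] [FiniteDimensional (ZMod q) V]
      (ρ : H →* Module.End (ZMod q) V), Module.finrank (ZMod q) V ≤ r →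
      ∀ g ∈ D, IsNilpotent (ρ g - 1))
    (hM : M ≠ ⊥) (hmin : ∀ K : Subgroup H, K.Normal → K ≤ M → K ≠ ⊥ → K = M) : ⁅M, D⁆ = ⊥ := by
  have hx : ∀ x : Additive M, q • x = 0 := fun x => Subtype.ext (hexp _ x.toMul.2)
  exact @commutator_eq_bot_of_module H _ _ M _ _ q _ (AddCommGroup.zmodModule hx) D _ r hcard hU
    hM hmin

/-- If the elementary abelian subgroups of a finite solvable `H` have rank at most `e`, the commutator
subgroup `D` of the subgroup generated by `m`-th powers is nilpotent, for some `m` depending only on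
`e`: chief factors have bounded dimension, so `D` acts unipotently on them and hence trivially. -/
theorem exists_pow_nilpotent (e : ℕ) : ∃ m : ℕ, 0 < m ∧ ∀ (H : Type) [Group H] [Finite H]
    [Group.IsSolvable H], (∀ q, q.Prime → ElementaryRankLE q e H) →
    Group.IsNilpotent ↥⁅powSubgroup H m, powSubgroup H m⁆ := by
  obtain ⟨m, hm, hU⟩ := exists_pow_unipotent_zmod (3 * (e * e) + e)
  refine ⟨m, hm, ?_⟩
  intro H _ _ _ hE
  set D := ⁅powSubgroup H m, powSubgroup H m⁆ with hD
  have hDn : D.Normal := inferInstance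
  have key : ∀ M : Subgroup H, M.Normal → M ≠ ⊥ → ⁅M, D⁆ < M := by
    intro M hMn hM
    have hfin : {K : Subgroup H | K.Normal ∧ K < M}.Finite := Set.toFinite _
    obtain ⟨M₁, ⟨hM₁n, hM₁⟩, hmax⟩ := hfin.exists_maximal
      ⟨⊥, inferInstance, bot_lt_iff_ne_bot.mpr hM⟩
    set π := QuotientGroup.mk' M₁ with hπ
    have hπs : Function.Surjective π := QuotientGroup.mk'_surjective M₁
    have hker : π.ker = M₁ := QuotientGroup.ker_mk' M₁
    set M' := M.map π with hM'
    have hM'n : M'.Normal := hMn.map π hπs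
    have hcomap : M'.comap π = M := by
      rw [hM', Subgroup.comap_map_eq, hker, sup_eq_left.mpr hM₁.le]
    have hM'0 : M' ≠ ⊥ := by
      intro h0
      rw [h0] at hcomap
      have : π.ker = M := hcomap
      exact hM₁.ne (hker.symm.trans this)
    have hmin : ∀ K : Subgroup (H ⧸ M₁), K.Normal → K ≤ M' → K ≠ ⊥ → K = M' := by
      intro K hKn hKM hK0
      by_contra hne
      have h1 : K.comap π ≤ M := by
        rw [← hcomap]; exact Subgroup.comap_mono hKM
      have h2 : K.comap π ≠ M := by
        intro h
        apply hne
        rw [← Subgroup.map_comap_eq_self_of_surjective hπs K, h]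
      have h3 : K.comap π ≤ M₁ := by
        refine hmax ⟨hKn.comap π, lt_of_le_of_ne h1 h2⟩ ?_
        exact hker.symm.le.trans (Subgroup.ker_le_comap _ _)
      apply hK0
      rw [← Subgroup.map_comap_eq_self_of_surjective hπs K, Subgroup.map_eq_bot_iff, hker]
      exact h3
    obtain ⟨hab, q, hq, hexp⟩ := elementary_of_minimal M' hM'n hM'0 hmin
    have : Fact q.Prime := ⟨hq⟩
    -- a chief factor is a section of `H`, so the bound on subgroups of `H` applies only through
    -- `index_le_of_surjective`
    have hcard : Nat.card M' ≤ q ^ (3 * (e * e) + e) := by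
      rw [← Subgroup.index_bot]
      refine index_le_of_surjective ((hE q hq).subgroup M) (π.subgroupMap M)
        (π.subgroupMap_surjective M) ?_ ⊥ ?_
      · intro x
        exact ⟨1, Subtype.ext (by rw [pow_one]; exact hexp x x.2)⟩
      · intro x
        exact Subgroup.mem_bot.mpr (Subtype.ext (hexp x x.2))
    have : IsMulCommutative M' := ⟨⟨fun x y => Subtype.ext (hab _ x.2 _ y.2)⟩⟩
    have hbot := commutator_eq_bot_of_minimal M' hexp
      ⁅powSubgroup (H ⧸ M₁) m, powSubgroup (H ⧸ M₁) m⁆ hcard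
      (fun V _ _ _ ρ => hU q V (H ⧸ M₁) ρ) hM'0 hmin
    have hle : ⁅M, D⁆ ≤ M₁ := by
      rw [← hker, ← Subgroup.map_eq_bot_iff, Subgroup.map_commutator, hD, Subgroup.map_commutator,
        powSubgroup_map π hπs]
      exact hbot
    exact lt_of_le_of_lt hle hM₁
  have hn : ∀ n, (D.lowerCentralSeries n).Normal := by
    intro n
    induction n with
    | zero => exact hDn
    | succ n ih => rw [Subgroup.lowerCentralSeries_succ]; infer_instance
  have hn2 : ∀ n, D.lowerCentralSeries n = ⊥ ∨
      Nat.card (D.lowerCentralSeries n) + n ≤ Nat.card D := by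
    intro n
    induction n with
    | zero => exact Or.inr le_rfl
    | succ n ih =>
      by_cases h0 : D.lowerCentralSeries n = ⊥
      · left
        rw [Subgroup.lowerCentralSeries_succ, h0, Subgroup.commutator_bot_left]
      · right
        have h1 := ih.resolve_left h0
        have h2 := key _ (hn n) h0
        rw [← Subgroup.lowerCentralSeries_succ] at h2
        have h3 : Nat.card (D.lowerCentralSeries (n + 1)) < Nat.card (D.lowerCentralSeries n) :=
          Set.Finite.card_lt_card (Set.toFinite _) h2
        omega
  refine isNilpotent_of_lcs D (Nat.card D) ((hn2 (Nat.card D)).resolve_right ?_)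
  have : 0 < Nat.card (D.lowerCentralSeries (Nat.card D)) := Nat.card_pos
  omega

/-! ### Groups of bounded exponent and the final bound -/

theorem card_torsion_pow_le {B : Type*} [AddCommGroup B] [Finite B] (p j : ℕ) :
    Nat.card (nsmulAddMonoidHom (p ^ j) : B →+ B).ker ≤
      Nat.card (nsmulAddMonoidHom p : B →+ B).ker ^ j := by
  induction j with
  | zero =>
    have : (nsmulAddMonoidHom (p ^ 0) : B →+ B).ker = ⊥ := by
      ext x; simp [AddMonoidHom.mem_ker]
    rw [this]
    simp
  | succ j ih =>
    rw [pow_succ, pow_succ]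
    exact (card_torsion_mul_le _ _).trans (Nat.mul_le_mul_right _ ih)

open scoped IsMulCommutative in
/-- An abelian `p`-group of exponent dividing `m` that is a quotient of `X` has bounded rank, and so
bounded order. -/
theorem card_abelian_le {X A : Type*} [Group X] [Finite X] [Group A] [IsMulCommutative A]
    {p e m : ℕ} [Fact p.Prime] (hX : ElementaryRankLE p e X) (θ : X →* A)
    (hθ : Function.Surjective θ) (hA : IsPGroup p A) (hm : 0 < m) (hexp : ∀ t : A, t ^ m = 1) :
    Nat.card A ≤ m ^ (3 * (e * e) + e) := by
  have : Finite A := Finite.of_surjective θ hθ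
  set R := 3 * (e * e) + e with hR
  have hidx := index_le_of_surjective hX θ hθ hA (powMonoidHom p : A →* A).range
    (fun t => ⟨t, rfl⟩)
  have hker : Nat.card (powMonoidHom p : A →* A).ker ≤ p ^ R := by
    refine le_trans (le_of_eq ?_) hidx
    have h1 := (powMonoidHom p : A →* A).range.index_mul_card
    have h2 := (powMonoidHom p : A →* A).ker.index_mul_card
    rw [Subgroup.index_ker] at h2
    rw [← h2, mul_comm] at h1
    exact (Nat.eq_of_mul_eq_mul_left Nat.card_pos h1).symm
  have hker' : Nat.card (nsmulAddMonoidHom p : Additive A →+ Additive A).ker ≤ p ^ R := hker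
  obtain ⟨j, m', hpm', hmj⟩ := Nat.exists_eq_pow_mul_and_not_dvd hm.ne' p
    (Nat.Prime.one_lt Fact.out).ne'
  have htop : (nsmulAddMonoidHom (p ^ j) : Additive A →+ Additive A).ker = ⊤ := by
    rw [eq_top_iff]
    intro x _
    rw [AddMonoidHom.mem_ker]
    change x.toMul ^ p ^ j = 1
    obtain ⟨i, hi⟩ := (IsPGroup.iff_orderOf.mp hA) x.toMul
    have h1 := orderOf_dvd_of_pow_eq_one (hexp x.toMul)
    rw [hmj] at h1
    apply orderOf_dvd_iff_pow_eq_one.mp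
    refine Nat.Coprime.dvd_of_dvd_mul_right ?_ h1
    rw [hi]
    exact Nat.Coprime.pow_left _ ((Nat.Prime.coprime_iff_not_dvd Fact.out).mpr hpm')
  have h2 := card_torsion_pow_le (B := Additive A) p j
  rw [htop, AddSubgroup.card_top] at h2
  calc Nat.card A ≤ (p ^ R) ^ j := h2.trans (Nat.pow_le_pow_left hker' j)
    _ = (p ^ j) ^ R := by rw [← pow_mul, ← pow_mul, mul_comm]
    _ ≤ m ^ R := Nat.pow_le_pow_left (Nat.le_of_dvd hm ⟨m', hmj⟩) R

/-- The order of a `p`-group is bounded by `a * a!`, where `a` bounds the order of a self-centralizing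
normal abelian subgroup `A`: the quotient by `A` embeds in the permutations of `A`. -/
theorem card_pgroup_le {X T : Type*} [Group X] [Finite X] [Group T]
    {p e m : ℕ} [Fact p.Prime] (hX : ElementaryRankLE p e X) (θ : X →* T)
    (hθ : Function.Surjective θ) (hT : IsPGroup p T) (hm : 0 < m) (hexp : ∀ t : T, t ^ m = 1) :
    Nat.card T ≤ m ^ (3 * (e * e) + e) * (m ^ (3 * (e * e) + e)).factorial := by
  have : Finite T := Finite.of_surjective θ hθ
  obtain ⟨A, hAn, hAc, hAC⟩ := exists_selfCentralizing hT.isNilpotent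
  have : IsMulCommutative A := ⟨⟨fun x y => Subtype.ext (hAc _ x.2 _ y.2)⟩⟩
  have hA := card_abelian_le (hX.subgroup (A.comap θ)) (θ.subgroupComap A)
    (θ.subgroupComap_surjective_of_surjective A hθ) (hT.to_subgroup A) hm
    (fun t => Subtype.ext (hexp t))
  set a := m ^ (3 * (e * e) + e) with ha
  let f : T →* MulAut A := MulAut.conjNormal
  have hker : f.ker ≤ A := by
    refine le_trans ?_ hAC
    intro g hg
    refine Subgroup.mem_centralizer_iff.mpr fun x hx => ?_
    have h1 := congrArg Subtype.val (DFunLike.congr_fun (MonoidHom.mem_ker.mp hg) ⟨x, hx⟩)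
    have h2 : g * x * g⁻¹ = x := h1
    exact (mul_inv_eq_iff_eq_mul.mp h2).symm
  have h1 := f.ker.index_mul_card
  rw [Subgroup.index_ker] at h1
  rw [← h1, mul_comm]
  refine Nat.mul_le_mul ((Subgroup.card_le_of_le hker).trans hA) ?_
  calc Nat.card f.range ≤ Nat.card (Equiv.Perm A) :=
        Nat.card_le_card_of_injective (fun u : f.range => (u.1 : A ≃* A).toEquiv)
          (fun u v h => Subtype.ext (MulEquiv.toEquiv_injective h))
    _ = (Nat.card A).factorial := Nat.card_perm
    _ ≤ a.factorial := Nat.factorial_le hA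

/-- Only the primes up to `m`, hence at most `m` of them, divide the order of a group of exponent
dividing `m`; each Sylow subgroup is bounded by `card_pgroup_le`. -/
theorem card_quotient_le {X Q : Type*} [Group X] [Finite X] [Group Q]
    {e m : ℕ} (hX : ∀ p, p.Prime → ElementaryRankLE p e X) (θ : X →* Q)
    (hθ : Function.Surjective θ) (hm : 0 < m) (hexp : ∀ t : Q, t ^ m = 1) :
    Nat.card Q ≤ (m ^ (3 * (e * e) + e) * (m ^ (3 * (e * e) + e)).factorial) ^ m := by
  have : Finite Q := Finite.of_surjective θ hθ
  set b := m ^ (3 * (e * e) + e) * (m ^ (3 * (e * e) + e)).factorial with hb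
  have hb1 : 1 ≤ b := Nat.mul_pos (Nat.pow_pos hm) (Nat.factorial_pos _)
  have h0 : Nat.card Q ≠ 0 := Nat.card_pos.ne'
  have hle : (Nat.card Q).primeFactors.card ≤ m := by
    have h1 : (Nat.card Q).primeFactors ⊆ Finset.Icc 1 m := by
      intro p hp
      have hpp := Nat.prime_of_mem_primeFactors hp
      have : Fact p.Prime := ⟨hpp⟩
      obtain ⟨x, hx⟩ := exists_prime_orderOf_dvd_card' (G := Q) p (Nat.dvd_of_mem_primeFactors hp)
      have h2 := orderOf_dvd_of_pow_eq_one (hexp x)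
      rw [hx] at h2
      exact Finset.mem_Icc.mpr ⟨hpp.one_lt.le, Nat.le_of_dvd hm h2⟩
    simpa using Finset.card_le_card h1
  calc Nat.card Q = ∏ p ∈ (Nat.card Q).primeFactors, p ^ (Nat.card Q).factorization p :=
        (Nat.prod_factorization_pow_eq_self h0).symm
    _ ≤ ∏ _p ∈ (Nat.card Q).primeFactors, b := by
        refine Finset.prod_le_prod' fun p hp => ?_
        have : Fact p.Prime := ⟨Nat.prime_of_mem_primeFactors hp⟩
        let T : Sylow p Q := Sylow.nonempty.some
        rw [← T.card_eq_multiplicity]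
        exact card_pgroup_le ((hX p Fact.out).subgroup ((T : Subgroup Q).comap θ))
          (θ.subgroupComap T) (θ.subgroupComap_surjective_of_surjective T hθ) T.2 hm
          (fun t => Subtype.ext (hexp t))
    _ = b ^ (Nat.card Q).primeFactors.card := by rw [Finset.prod_const]
    _ ≤ b ^ m := Nat.pow_le_pow_right hb1 hle

/-- One bound `N`, depending only on `k`, serves for both conclusions. The abelian subgroup is `B`,
generated by the `m`-th powers in `G / F_2(G)`; it is normal, so it lies in `F(G / F_2(G))`. -/
theorem main_bound (k : ℕ) : ∃ N : ℕ, ∀ (G : Type) [Group G] [Finite G] [Group.IsSolvable G],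
    (∀ (m : ℕ) (S : Fin (m + 1) → Set G),
        StrictMono (fun i => Subgroup.centralizer (S i)) → m ≤ k) →
      (∃ A : Subgroup (G ⧸ fitting2 G),
          (∀ a ∈ A, ∀ b ∈ A, a * b = b * a) ∧ A.index ≤ N) ∧
        Nat.card (G ⧸ fitting3 G) ≤ N := by
  obtain ⟨m, hm, hnil⟩ := exists_pow_nilpotent (2 * k)
  refine ⟨(m ^ (3 * (2 * k * (2 * k)) + 2 * k) *
    (m ^ (3 * (2 * k * (2 * k)) + 2 * k)).factorial) ^ m, fun G _ _ _ hCD => ?_⟩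
  have hE : ∀ q, q.Prime → ElementaryRankLE q (2 * k) (G ⧸ fittingSubgroup G) := by
    intro q hq E hc hp
    have : Fact q.Prime := ⟨hq⟩
    exact card_elementary_le hCD E hc hp
  set H := G ⧸ fittingSubgroup G with hH
  set π := QuotientGroup.mk' (fittingSubgroup G) with hπ
  have hπs : Function.Surjective π := QuotientGroup.mk'_surjective _
  set σ := QuotientGroup.mk' (fitting2 G) with hσ
  have hσs : Function.Surjective σ := QuotientGroup.mk'_surjective _
  have hF2 : fittingSubgroup G ≤ fitting2 G := by
    intro x hx
    have : π x = 1 := (QuotientGroup.eq_one_iff x).mpr hx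
    change π x ∈ fittingSubgroup H
    rw [this]
    exact one_mem _
  let φ : H →* G ⧸ fitting2 G := QuotientGroup.map _ _ (MonoidHom.id G) hF2
  have hφs : Function.Surjective φ := by
    intro y
    obtain ⟨x, rfl⟩ := hσs y
    exact ⟨π x, rfl⟩
  set B := powSubgroup (G ⧸ fitting2 G) m with hB
  have hBB : ⁅B, B⁆ = ⊥ := by
    have h1 : ⁅powSubgroup H m, powSubgroup H m⁆ ≤ fittingSubgroup H :=
      le_sSup ⟨inferInstance, hnil H hE⟩
    rw [hB, ← powSubgroup_map σ hσs, ← Subgroup.map_commutator, Subgroup.map_eq_bot_iff,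
      QuotientGroup.ker_mk']
    rw [← powSubgroup_map π hπs, ← Subgroup.map_commutator, Subgroup.map_le_iff_le_comap] at h1
    exact h1
  have hBc : ∀ a ∈ B, ∀ b ∈ B, a * b = b * a := by
    intro x hx y hy
    have := Subgroup.commutator_mem_commutator hx hy
    rw [hBB, Subgroup.mem_bot] at this
    exact commutatorElement_eq_one_iff_mul_comm.mp this
  have hBi : B.index ≤ (m ^ (3 * (2 * k * (2 * k)) + 2 * k) *
      (m ^ (3 * (2 * k * (2 * k)) + 2 * k)).factorial) ^ m := by
    refine card_quotient_le (m := m) hE ((QuotientGroup.mk' B).comp φ)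
      ((QuotientGroup.mk'_surjective B).comp hφs) hm ?_
    intro t
    obtain ⟨y, rfl⟩ := QuotientGroup.mk'_surjective B t
    rw [← map_pow]
    exact (QuotientGroup.eq_one_iff _).mpr (pow_mem_powSubgroup m y)
  refine ⟨⟨B, hBc, hBi⟩, ?_⟩
  -- the index of `F_3(G)` in `G` is that of `F(G / F_2(G))`, which contains `B`
  have hBF : B ≤ fittingSubgroup (G ⧸ fitting2 G) := by
    have : IsMulCommutative B := ⟨⟨fun x y => Subtype.ext (hBc _ x.2 _ y.2)⟩⟩
    refine le_sSup ⟨inferInstance, ?_⟩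
    let _ : CommGroup B := { (inferInstance : Group B) with mul_comm := this.1.1 }
    exact CommGroup.isNilpotent
  have h3 : Nat.card (G ⧸ fitting3 G) = (fittingSubgroup (G ⧸ fitting2 G)).index := by
    rw [← Subgroup.index_eq_card]
    exact Subgroup.index_comap_of_surjective _ hσs
  rw [h3]
  exact (Nat.le_of_dvd (Nat.pos_of_ne_zero Subgroup.index_ne_zero_of_finite)
    (Subgroup.index_dvd_of_le hBF)).trans hBi

/-- There are functions `f g : ℕ → ℕ` such that for every finite solvable
group `G` of c-dimension at most `k`, the quotient `G/F_2(G)` contains an abelian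
subgroup of index at most `f k`, and the order of `G/F_3(G)` is at most `g k`. -/
theorem solvable_quotient_fitting2_abelian_bounded :
    ∃ f g : ℕ → ℕ, ∀ (k : ℕ) (G : Type) [Group G] [Fintype G], IsSolvable G →
      (∀ (m : ℕ) (S : Fin (m + 1) → Set G),
        StrictMono (fun i => Subgroup.centralizer (S i)) → m ≤ k) →
      ((∃ A : Subgroup (G ⧸ fitting2 G),
          (∀ a ∈ A, ∀ b ∈ A, a * b = b * a) ∧ A.index ≤ f k) ∧
        Nat.card (G ⧸ fitting3 G) ≤ g k) := by
  choose f hf using main_bound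
  refine ⟨f, f, fun k G _ _ hs hCD => ?_⟩
  have : Group.IsSolvable G := hs
  exact hf k G hCD
end
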